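/- Let P(T,Y) ∈ ℚ[T][Y] be a polynomial of degree n ≥ 2 in Y with geometric Galois group S_n. Then there exist positive integers m₀ and β, depending on P, with the following property. Let S be a finite set of primes p > m₀, each equipped with positive integers d_{p,1}, …, d_{p,s_p} with Σ_{l=1}^{s_p} d_{p,l} = n. Then there exists an integer b with 0 ≤ b ≤ β·∏_{p∈S} p such that for every integer t₀ ≡ b (mod β·∏_{p∈S} p): (1) P(t₀, Y) ∈ ℚ[Y] has degree n and is irreducible over ℚ, and the Galois group of its splitting field over ℚ has cardinality n!; and (2) for each p ∈ S, the polynomial P(t₀, Y), viewed over ℚ_p, factors as c·Q_{p,1}⋯Q_{p,s_p} in ℚ_p[Y], where c is its leading coefficient and, for l = 1, …, s_p, Q_{p,l} is monic irreducible of degree d_{p,l} and has a root in the unramified extension of ℚ_p of degree d_{p,l}. -/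

import Mathlib

/-!
The proof combines a function field Chebotarev theorem over `𝔽_p` with Hensel's lemma and the Chinese
remainder theorem.

*Local specializations.* Let `y_1, …, y_n` be the roots of an integral model of `P`. Since the
geometric Galois group is `S_n`, the resolvent `Φ(T, Z) = ∏_g (Z - ∑ c ^ i y_{g i})` (`lf`,
`exists_resolvent`), for a suitable integer `c`, is irreducible over `ℚ̄(T)`
(`resolvent_irreducible`). By the Nullstellensatz over `ℤ` it stays absolutely irreducible modulo
every large prime `p` (`irreducible_transfer`). For `σ ∈ S_n` the automorphism `z_g ↦ z_{g σ}` of the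
curve `Φ = 0` is given by a rational function `G_σ / Φ_Z`. The points above `t ∈ 𝔽_p` on which
Frobenius agrees with this automorphism number at most `(1 + 1 / n!) p` by Stepanov's method
(`stepanov`). Over all `σ` these sets exhaust the roughly `n! p` points above `𝔽_p`, so every `σ`
occurs: there is `t ∈ 𝔽_p` such that Frobenius permutes the `n` distinct roots of `P(t, Y)` as `σ`
(`exists_frobenius`).

Stepanov's method is carried out elementarily. A polynomial `R = ∑ w T ^ a Z ^ i (T ^ k Z ^ j) ^ p`
is chosen to vanish to high order at all points in question (`exists_aux`, `X_pow_dvd_pev_auxR`), the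
derivatives along the curve being taken with the derivation `Φ_Z ∂_T - Φ_T ∂_Z`; it does not vanish
identically on the curve (`not_dvd_auxR`); and the degree of its norm to `𝔽_p[T]` bounds the number
of points.

*Lifting to `ℚ_p`.* If the Frobenius at `t` has cycle lengths `d_1, …, d_s`, then for every
`t₀ ≡ t mod p` Hensel's lemma in `ℤ_p[x]/(g₀)`, with `g₀` a lift of the minimal polynomial of a
residual root, yields the factorization of `P(t₀, Y)` into irreducible factors of degrees `d_l`
with roots in the unramified extensions (`exists_local_factor`, `local_factorization`,
`exists_residue`).

*Global Galois group.* Three auxiliary primes are given the types `(n)`, `(n - 1, 1)` and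
`(2, 1, …, 1)`, and `β` is their product. The first makes `P(t₀, Y)` irreducible, the second makes
its Galois group doubly transitive, the third provides a transposition, so the group is `S_n`
(`perm_eq_top`, `gal_of_types`). The congruences at all the primes are combined by the Chinese
remainder theorem.
-/

open Polynomial

/-- The image of `P ∈ k[T][Y]` as a polynomial in `Y` over the rational
function field `k̄(T)`, where `k̄` is an algebraic closure of `k`. -/
noncomputable def geomPoly (k : Type*) [Field k] (P : Polynomial (Polynomial k)) :
    Polynomial (RatFunc (AlgebraicClosure k)) :=
  P.map ((algebraMap (Polynomial (AlgebraicClosure k)) (RatFunc (AlgebraicClosure k))).comp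
    (Polynomial.mapRingHom (algebraMap k (AlgebraicClosure k))))

/-- The unramified extension of `ℚ_p` of degree `d`, characterized as the
splitting field of `X^(p^d) - X` over `ℚ_p`. -/
noncomputable def UnramifiedExt (p : ℕ) [Fact p.Prime] (d : ℕ) : Type :=
  ((X : Polynomial ℚ_[p]) ^ (p ^ d) - X).SplittingField

noncomputable instance (p : ℕ) [Fact p.Prime] (d : ℕ) : Field (UnramifiedExt p d) :=
  inferInstanceAs (Field ((X : Polynomial ℚ_[p]) ^ (p ^ d) - X).SplittingField)

noncomputable instance (p : ℕ) [Fact p.Prime] (d : ℕ) : Algebra ℚ_[p] (UnramifiedExt p d) :=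
  inferInstanceAs (Algebra ℚ_[p] ((X : Polynomial ℚ_[p]) ^ (p ^ d) - X).SplittingField)

/-! ### Weighted degrees and the tangent derivation in `F[T][Z]` -/

namespace HG

section weights
variable {F : Type*} [Field F]

/-- Weighted degree bound in `F[T][Z]`, with `T` of weight `1` and `Z` of weight `D`:
every monomial `T ^ j * Z ^ i` occurring in `H` satisfies `j + D * i ≤ r`. -/
def Wt (D r : ℕ) (H : F[X][X]) : Prop :=
  ∀ i j, (H.coeff i).coeff j ≠ 0 → j + D * i ≤ r

lemma Wt.mono {D r s : ℕ} {H : F[X][X]} (h : Wt D r H) (hrs : r ≤ s) : Wt D s H :=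
  fun i j hij => (h i j hij).trans hrs

lemma Wt.zero (D r : ℕ) : Wt D r (0 : F[X][X]) := fun i j h => by simp at h

lemma Wt.add {D r : ℕ} {H K : F[X][X]} (h : Wt D r H) (k : Wt D r K) : Wt D r (H + K) := by
  intro i j hij
  by_cases h1 : (H.coeff i).coeff j = 0
  · by_cases h2 : (K.coeff i).coeff j = 0
    · simp [h1, h2] at hij
    · exact k i j h2
  · exact h i j h1

lemma Wt.neg {D r : ℕ} {H : F[X][X]} (h : Wt D r H) : Wt D r (-H) :=
  fun i j hij => h i j (by simpa using hij)

lemma Wt.sub {D r : ℕ} {H K : F[X][X]} (h : Wt D r H) (k : Wt D r K) : Wt D r (H - K) := by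
  rw [sub_eq_add_neg]; exact h.add k.neg

lemma Wt.sum {D r : ℕ} {ι : Type*} (s : Finset ι) (H : ι → F[X][X])
    (h : ∀ i ∈ s, Wt D r (H i)) : Wt D r (∑ i ∈ s, H i) := by
  classical
  induction s using Finset.induction_on with
  | empty => simpa using Wt.zero D r
  | insert a s ha ih =>
    rw [Finset.sum_insert ha]
    exact (h a (by simp)).add (ih fun i hi => h i (by simp [hi]))

lemma Wt.mul {D r s : ℕ} {H K : F[X][X]} (h : Wt D r H) (k : Wt D s K) :
    Wt D (r + s) (H * K) := by
  intro i j hij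
  rw [coeff_mul, finsetSum_coeff] at hij
  obtain ⟨⟨a, b⟩, hab, h1⟩ := Finset.exists_ne_zero_of_sum_ne_zero hij
  rw [coeff_mul] at h1
  obtain ⟨⟨c, d⟩, hcd, h2⟩ := Finset.exists_ne_zero_of_sum_ne_zero h1
  have e1 := h a c (left_ne_zero_of_mul h2)
  have e2 := k b d (right_ne_zero_of_mul h2)
  have hab' : a + b = i := by simpa using hab
  have hcd' : c + d = j := by simpa using hcd
  subst hab' hcd'
  nlinarith

lemma Wt.pow {D r : ℕ} {H : F[X][X]} (h : Wt D r H) (m : ℕ) : Wt D (m * r) (H ^ m) := by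
  induction m with
  | zero =>
    intro i j hij
    rw [pow_zero, coeff_one] at hij
    split_ifs at hij with h1
    · rw [coeff_one] at hij
      split_ifs at hij with h2
      · subst h1 h2; simp
      · simp at hij
    · simp at hij
  | succ m ih =>
    rw [pow_succ, add_mul, one_mul]
    exact ih.mul h

lemma Wt.smul {D r : ℕ} {H : F[X][X]} (c : F) (h : Wt D r H) : Wt D r (c • H) := by
  intro i j hij
  apply h i j
  intro h0
  simp [h0] at hij

lemma Wt.monomial (D a i : ℕ) : Wt D (a + D * i) (C (X ^ a) * X ^ i : F[X][X]) := by
  intro i' j hij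
  rw [coeff_C_mul, coeff_X_pow] at hij
  split_ifs at hij with h1
  · rw [mul_one, coeff_X_pow] at hij
    split_ifs at hij with h2
    · simp [h1, h2]
    · simp at hij
  · simp at hij

lemma Wt.derivative {D r : ℕ} {H : F[X][X]} (h : Wt D r H) : Wt D r (derivative H) := by
  intro i j hij
  rw [coeff_derivative] at hij
  have h0 : (H.coeff (i + 1)).coeff j ≠ 0 := by
    intro h0
    apply hij
    have : (H.coeff (i+1) * ((i : F[X]) + 1)).coeff j = (H.coeff (i+1)).coeff j * ((i : F) + 1) := by
      rw [show ((i : F[X]) + 1) = C ((i : F) + 1) by simp, coeff_mul_C]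
    rw [this, h0, zero_mul]
  have := h _ _ h0
  nlinarith

/-- The partial derivative with respect to the inner variable `T` of `F[T][Z]`. -/
noncomputable def dT : F[X][X] →ₗ[F] F[X][X] :=
  Polynomial.lsum fun i => ((monomial i : F[X] →ₗ[F[X]] F[X][X]).restrictScalars F).comp
    (Polynomial.derivative : F[X] →ₗ[F] F[X])

lemma dT_C_mul_X_pow (a : F[X]) (i : ℕ) :
    dT (C a * X ^ i) = C (Polynomial.derivative a) * X ^ i := by
  rw [C_mul_X_pow_eq_monomial, C_mul_X_pow_eq_monomial, dT, lsum_apply, sum_monomial_index]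
  · rfl
  · simp

lemma coeff_dT (H : F[X][X]) (i : ℕ) : (dT H).coeff i = Polynomial.derivative (H.coeff i) := by
  induction H using Polynomial.induction_on' with
  | add p q hp hq => simp [hp, hq]
  | monomial n a =>
    rw [← C_mul_X_pow_eq_monomial, dT_C_mul_X_pow, coeff_C_mul, coeff_C_mul, coeff_X_pow]
    split_ifs <;> simp

lemma Wt.dT {D r : ℕ} {H : F[X][X]} (h : Wt D r H) : Wt D r (dT H) := by
  intro i j hij
  rw [coeff_dT, coeff_derivative] at hij
  have := h i (j+1) (left_ne_zero_of_mul hij)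
  omega

/-- The derivation `Φ_Z ∂_T - Φ_T ∂_Z`, which is tangent to the curve `Φ = 0`. -/
noncomputable def ham (Φ : F[X][X]) : F[X][X] →ₗ[F] F[X][X] :=
  (LinearMap.mulLeft F (derivative Φ)).comp dT -
    (LinearMap.mulLeft F (HG.dT Φ)).comp
      ((Polynomial.derivative : F[X][X] →ₗ[F[X]] F[X][X]).restrictScalars F)

lemma ham_apply (Φ H : F[X][X]) :
    ham Φ H = derivative Φ * dT H - dT Φ * derivative H := rfl

lemma Wt.ham {D r s : ℕ} {Φ H : F[X][X]} (hΦ : Wt D s Φ) (h : Wt D r H) :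
    Wt D (r + s) (ham Φ H) := by
  rw [ham_apply, add_comm]
  exact (hΦ.derivative.mul h.dT).sub (hΦ.dT.mul h.derivative)

lemma Wt.ham_pow {D r s : ℕ} {Φ H : F[X][X]} (hΦ : Wt D s Φ) (h : Wt D r H) (m : ℕ) :
    Wt D (r + m * s) ((HG.ham Φ ^ m) H) := by
  induction m with
  | zero => simpa using h
  | succ m ih =>
    rw [pow_succ', Module.End.mul_apply, add_mul, one_mul, ← add_assoc]
    exact Wt.ham hΦ ih

/-- Reduction modulo a monic polynomial of degree `N` in `Z` does not increase the weighted degree,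
provided its top monomial `Z ^ N` also has the top weight `D * N`. -/
lemma Wt.modByMonic {D N r : ℕ} {Φ H : F[X][X]} (hm : Φ.Monic) (hN : Φ.natDegree = N)
    (hΦ : Wt D (D * N) Φ) (h : Wt D r H) : Wt D r (H %ₘ Φ) := by
  suffices ∀ n (H : F[X][X]), H.natDegree < n → Wt D r H →
      ∃ Q S, S + Φ * Q = H ∧ S.degree < Φ.degree ∧ Wt D r S by
    obtain ⟨Q, S, e, hS, hw⟩ := this _ H (Nat.lt_succ_self _) h
    rw [(div_modByMonic_unique Q S hm ⟨e, hS⟩).2]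
    exact hw
  intro n
  induction n with
  | zero => intro H hH; omega
  | succ n ih =>
    intro H hH hw
    by_cases hlt : H.degree < Φ.degree
    · exact ⟨0, H, by simp, hlt, hw⟩
    push Not at hlt
    have hH0 : H ≠ 0 := by
      rintro rfl
      rw [degree_zero, le_bot_iff, degree_eq_bot] at hlt
      exact hm.ne_zero hlt
    have hdeg : N ≤ H.natDegree := by rw [← hN]; exact natDegree_le_natDegree hlt
    set T : F[X][X] := C H.leadingCoeff * X ^ (H.natDegree - N) with hT
    have hlc : ∀ j, H.leadingCoeff.coeff j ≠ 0 → j + D * H.natDegree ≤ r := fun j hj => hw _ j hj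
    have hTw : Wt D (r - D * N) T := by
      intro i j hij
      rw [hT, coeff_C_mul, coeff_X_pow] at hij
      split_ifs at hij with h1
      · rw [mul_one] at hij
        have := hlc j hij
        have he : H.natDegree = N + i := by omega
        rw [he, mul_add] at this
        omega
      · simp at hij
    have hrDN : D * N ≤ r := by
      have h0 : H.leadingCoeff ≠ 0 := leadingCoeff_ne_zero.mpr hH0
      have := hlc _ (show H.leadingCoeff.coeff H.leadingCoeff.natDegree ≠ 0 from
        leadingCoeff_ne_zero.mpr h0)
      have := Nat.mul_le_mul_left D hdeg
      omega
    have hlow : (H - Φ * T).degree < H.degree := by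
      refine degree_sub_lt_left ?_ hH0 ?_
      · have : T ≠ 0 := by
          rw [hT]; exact mul_ne_zero (C_ne_zero.mpr (leadingCoeff_ne_zero.mpr hH0)) (by simp)
        rw [degree_mul, degree_eq_natDegree hm.ne_zero, hN, hT,
          degree_C_mul_X_pow _ (leadingCoeff_ne_zero.mpr hH0), degree_eq_natDegree hH0,
          ← Nat.cast_add]
        congr 1; omega
      · rw [hT, leadingCoeff_mul, hm.leadingCoeff, leadingCoeff_C_mul_X_pow, one_mul]
    by_cases hz : H - Φ * T = 0
    · exact ⟨T, 0, by rw [zero_add]; exact (sub_eq_zero.mp hz).symm,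
        by rw [degree_zero]; exact bot_lt_iff_ne_bot.mpr (by simp [hm.ne_zero]), Wt.zero _ _⟩
    · obtain ⟨Q, S, e, hS, hw'⟩ := ih (H - Φ * T)
        (by have := natDegree_lt_natDegree hz hlow; omega)
        (hw.sub (((hΦ.mul hTw)).mono (by omega)))
      exact ⟨Q + T, S, by rw [mul_add, ← add_assoc, e]; ring, hS, hw'⟩

end weights

end HG

/-! ### Power series branches of a plane curve -/

namespace HG

section local_expansion
variable {F k : Type*} [Field F] [Field k] [Algebra F k]

/-- Evaluation of `H(T, Z)` at `T = t + u`, `Z = ζ(u)`, as a power series in `u`. -/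
noncomputable def pev (t : k) (ζ : PowerSeries k) : F[X][X] →+* PowerSeries k :=
  eval₂RingHom (eval₂RingHom ((PowerSeries.C).comp (algebraMap F k))
    (PowerSeries.C t + PowerSeries.X)) ζ

/-- Evaluation of `H(T, Z)` at the point `(t, z)`. -/
noncomputable def qev (t z : k) : F[X][X] →+* k :=
  eval₂RingHom (eval₂RingHom (algebraMap F k) t) z

lemma constantCoeff_pev (t : k) (ζ : PowerSeries k) (H : F[X][X]) :
    PowerSeries.constantCoeff (pev t ζ H) = qev t (PowerSeries.constantCoeff ζ) H := by
  have : (PowerSeries.constantCoeff).comp (pev t ζ) =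
      (qev t (PowerSeries.constantCoeff ζ) : F[X][X] →+* k) := by
    ext <;> simp [pev, qev]
  exact congrArg (fun f => f H) this

lemma derivative_inner (t : k) (a : F[X]) :
    PowerSeries.derivative k (eval₂RingHom ((PowerSeries.C).comp (algebraMap F k))
      (PowerSeries.C t + PowerSeries.X) a) =
    eval₂RingHom ((PowerSeries.C).comp (algebraMap F k))
      (PowerSeries.C t + PowerSeries.X) (derivative a) := by
  induction a using Polynomial.induction_on' with
  | add p q hp hq => simp only [map_add, hp, hq, derivative_add]
  | monomial n c =>
    rw [derivative_monomial]
    simp only [coe_eval₂RingHom, eval₂_monomial, RingHom.comp_apply, Derivation.leibniz,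
      Derivation.leibniz_pow, map_add, PowerSeries.derivative_C, PowerSeries.derivative_X, map_mul,
      map_natCast]
    simp only [smul_eq_mul, nsmul_eq_mul, zero_add, mul_one, mul_zero, add_zero]
    ring

lemma derivative_pev (t : k) (ζ : PowerSeries k) (H : F[X][X]) :
    PowerSeries.derivative k (pev t ζ H) =
      pev t ζ (dT H) + PowerSeries.derivative k ζ * pev t ζ (derivative H) := by
  induction H using Polynomial.induction_on' with
  | add p q hp hq => simp only [map_add, hp, hq, derivative_add]; ring
  | monomial n a =>
    rw [← C_mul_X_pow_eq_monomial, dT_C_mul_X_pow, C_mul_X_pow_eq_monomial, C_mul_X_pow_eq_monomial,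
      derivative_monomial]
    simp only [pev, coe_eval₂RingHom, eval₂_monomial]
    rw [Derivation.leibniz, Derivation.leibniz_pow]
    have := derivative_inner (F := F) t a
    simp only [coe_eval₂RingHom] at this
    rw [this, eval₂_mul, eval₂_natCast]
    simp only [smul_eq_mul, nsmul_eq_mul]
    ring

/-- Along a power series branch of the curve, `ham Φ` is differentiation in the parameter `u`, scaled
by the value of `Φ_Z`. -/
lemma pev_ham (t : k) (ζ : PowerSeries k) (Φ H : F[X][X]) (hΦ : pev t ζ Φ = 0) :
    pev t ζ (ham Φ H) = pev t ζ (derivative Φ) * PowerSeries.derivative k (pev t ζ H) := by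
  have h := derivative_pev t ζ Φ
  rw [hΦ, map_zero] at h
  rw [ham_apply, derivative_pev, map_sub, map_mul, map_mul]
  linear_combination (pev t ζ (derivative H)) * h

/-- If a linear combination of the values at `(t, ζ(0))` of `∂ ^ m H_l` vanishes for all `m < M`,
where `∂` is the tangent derivation, then the same combination of the expansions of the `H_l`
vanishes to order `M`; this uses that `1, …, M - 1` are invertible. -/
lemma X_pow_dvd_of_ham {p : ℕ} [Fact p.Prime] [CharP k p] {ι : Type*} (s : Finset ι)
    (c : ι → k) (t : k) (ζ : PowerSeries k) (Φ : F[X][X]) (hΦ : pev t ζ Φ = 0)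
    (hu : qev t (PowerSeries.constantCoeff ζ) (derivative Φ) ≠ 0) (M : ℕ) (hM : M ≤ p)
    (H : ι → F[X][X])
    (h : ∀ m < M, ∑ l ∈ s, c l * qev t (PowerSeries.constantCoeff ζ) ((ham Φ ^ m) (H l)) = 0) :
    PowerSeries.X ^ M ∣ ∑ l ∈ s, PowerSeries.C (c l) * pev t ζ (H l) := by
  induction M generalizing H with
  | zero => simp
  | succ M ih =>
    have h1 := ih (by omega) (fun l => ham Φ (H l)) (fun m hm => by
      have := h (m + 1) (by omega)
      simpa only [pow_succ, Module.End.mul_apply] using this)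
    have e : ∑ l ∈ s, PowerSeries.C (c l) * pev t ζ (ham Φ (H l)) =
        pev t ζ (derivative Φ) * PowerSeries.derivative k
          (∑ l ∈ s, PowerSeries.C (c l) * pev t ζ (H l)) := by
      rw [map_sum, Finset.mul_sum]
      refine Finset.sum_congr rfl fun l _ => ?_
      rw [pev_ham t ζ Φ (H l) hΦ, Derivation.leibniz, PowerSeries.derivative_C]
      simp only [smul_eq_mul, mul_zero, add_zero]
      ring
    have hunit : IsUnit (pev t ζ (derivative Φ)) := by
      rw [PowerSeries.isUnit_iff_constantCoeff, constantCoeff_pev]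
      exact hu.isUnit
    rw [e, hunit.dvd_mul_left, PowerSeries.X_pow_dvd_iff] at h1
    rw [PowerSeries.X_pow_dvd_iff]
    intro m hm
    rcases m with _ | m
    · have := h 0 (by omega)
      simp only [pow_zero, Module.End.one_apply] at this
      rw [PowerSeries.coeff_zero_eq_constantCoeff_apply, map_sum, ← this]
      refine Finset.sum_congr rfl fun l _ => ?_
      rw [map_mul, constantCoeff_pev, PowerSeries.constantCoeff_C]
    · have := h1 m (by omega)
      rw [PowerSeries.coeff_derivative] at this
      rcases mul_eq_zero.mp this with h2 | h2
      · exact h2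
      · exfalso
        have h3 : ((m + 1 : ℕ) : k) = 0 := by push_cast; exact h2
        rw [CharP.cast_eq_zero_iff k p] at h3
        have := Nat.le_of_dvd (by omega) h3
        omega

/-- `p`-th powers are constant to order `p`. -/
lemma X_pow_dvd_pow_sub {p : ℕ} [Fact p.Prime] [CharP k p] (s : PowerSeries k) :
    PowerSeries.X ^ p ∣ s ^ p - PowerSeries.C ((PowerSeries.constantCoeff s) ^ p) := by
  haveI : CharP (PowerSeries k) p := charP_of_injective_ringHom (PowerSeries.C_injective) p
  rw [map_pow, ← sub_pow_char]
  apply pow_dvd_pow_of_dvd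
  rw [PowerSeries.X_dvd_iff]
  simp

/-- Hensel: a simple zero `z` of `Φ(t, Z)` extends to a power series solution. -/
lemma exists_root_powerSeries (Φ : F[X][X]) (hm : Φ.Monic) (t z : k) (h0 : qev t z Φ = 0)
    (h1 : qev t z (derivative Φ) ≠ 0) :
    ∃ ζ : PowerSeries k, PowerSeries.constantCoeff ζ = z ∧ pev t ζ Φ = 0 := by
  let φ := eval₂RingHom ((PowerSeries.C).comp (algebraMap F k))
    (PowerSeries.C t + PowerSeries.X)
  have e : ∀ (ζ : PowerSeries k) (H : F[X][X]), pev t ζ H = (H.map φ).eval ζ := by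
    intro ζ H; simp [pev, φ, eval_map]
  have key := (HenselianRing.is_henselian (I := Ideal.span {(PowerSeries.X : PowerSeries k)})
    (Φ.map φ) (hm.map φ) (PowerSeries.C z) ?_ ?_)
  · obtain ⟨ζ, hr, hc⟩ := key
    refine ⟨ζ, ?_, by rw [e]; exact hr⟩
    rw [Ideal.mem_span_singleton, PowerSeries.X_dvd_iff] at hc
    simpa [sub_eq_zero] using hc
  · rw [← e, Ideal.mem_span_singleton, PowerSeries.X_dvd_iff, constantCoeff_pev]
    simpa using h0
  · apply IsUnit.map
    rw [derivative_map, ← e, PowerSeries.isUnit_iff_constantCoeff, constantCoeff_pev]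
    simpa using h1

end local_expansion
end HG

/-! ### Norms from `A[Z] / Ψ` to `A` -/

namespace HG

section mulMat
variable {A : Type*} [CommRing A]

/-- The matrix of multiplication by `R` on `A[Z] / Ψ` in the basis `1, Z, …, Z ^ (N - 1)`, where
`Ψ` is monic of degree `N`. Its determinant is the norm of `R`. -/
noncomputable def mulMat (Ψ : A[X]) (N : ℕ) (R : A[X]) : Matrix (Fin N) (Fin N) A :=
  fun i j => ((X ^ (j : ℕ) * R) %ₘ Ψ).coeff i

lemma eval₂_modByMonic {B : Type*} [CommRing B] (φ : A →+* B) {Ψ : A[X]} (ζ : B)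
    (hζ : eval₂ φ ζ Ψ = 0) (R : A[X]) : eval₂ φ ζ (R %ₘ Ψ) = eval₂ φ ζ R := by
  conv_rhs => rw [← modByMonic_add_div R Ψ]
  rw [eval₂_add, eval₂_mul, hζ, zero_mul, add_zero]

lemma sum_modByMonic {B : Type*} [CommRing B] [Nontrivial A] (φ : A →+* B) {Ψ : A[X]}
    (hm : Ψ.Monic) {N : ℕ} (hN : Ψ.natDegree = N) (R : A[X]) (ζ : B) :
    ∑ i : Fin N, φ ((R %ₘ Ψ).coeff i) * ζ ^ (i : ℕ) = eval₂ φ ζ (R %ₘ Ψ) := by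
  rcases Nat.eq_zero_or_pos N with h0 | h0
  · have : Ψ = 1 := hm.natDegree_eq_zero.mp (hN.trans h0)
    subst this; subst h0
    simp
  · rw [eval₂_eq_sum_range' φ (n := N), Finset.sum_range]
    have := natDegree_modByMonic_lt R hm (by rintro rfl; simp at hN; omega)
    omega

lemma sum_mulMat {B : Type*} [CommRing B] [Nontrivial A] (φ : A →+* B) {Ψ : A[X]} (hm : Ψ.Monic)
    {N : ℕ} (hN : Ψ.natDegree = N) (R : A[X]) (ζ : B) (hζ : eval₂ φ ζ Ψ = 0) (j : Fin N) :
    ∑ i : Fin N, φ (mulMat Ψ N R i j) * ζ ^ (i : ℕ) = ζ ^ (j : ℕ) * eval₂ φ ζ R := by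
  unfold mulMat
  rw [sum_modByMonic φ hm hN, eval₂_modByMonic φ ζ hζ, eval₂_mul, eval₂_X_pow]

/-- When `Ψ` has `N` distinct roots, the norm of `R` is the product of the values of `R`. -/
lemma map_det_mulMat {B : Type*} [CommRing B] [IsDomain B] [Nontrivial A] (φ : A →+* B) {Ψ : A[X]}
    (hm : Ψ.Monic) {N : ℕ} (hN : Ψ.natDegree = N) (R : A[X]) (ζ : Fin N → B)
    (hinj : Function.Injective ζ) (hζ : ∀ l, eval₂ φ (ζ l) Ψ = 0) :
    φ (mulMat Ψ N R).det = ∏ l, eval₂ φ (ζ l) R := by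
  have h : Matrix.vandermonde ζ * (φ.mapMatrix (mulMat Ψ N R)) =
      Matrix.diagonal (fun l => eval₂ φ (ζ l) R) * Matrix.vandermonde ζ := by
    ext l j
    rw [Matrix.diagonal_mul, Matrix.mul_apply, Matrix.vandermonde_apply,
      mul_comm, ← sum_mulMat φ hm hN R (ζ l) (hζ l) j]
    refine Finset.sum_congr rfl fun i _ => ?_
    rw [Matrix.vandermonde_apply, mul_comm]; rfl
  have h2 := congrArg Matrix.det h
  rw [Matrix.det_mul, Matrix.det_mul, Matrix.det_diagonal, mul_comm, ← RingHom.map_det] at h2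
  exact mul_right_cancel₀ (Matrix.det_vandermonde_ne_zero_iff.mpr hinj) h2

/-- The norm of `R` vanishes at every point where `Ψ` and `R` have a common root. -/
lemma map_det_mulMat_eq_zero {B : Type*} [CommRing B] [IsDomain B] [Nontrivial A] (φ : A →+* B)
    {Ψ : A[X]} (hm : Ψ.Monic) {N : ℕ} (hN : Ψ.natDegree = N) (h0 : 0 < N) (R : A[X]) (ζ : B)
    (hζ : eval₂ φ ζ Ψ = 0) (hR : eval₂ φ ζ R = 0) : φ (mulMat Ψ N R).det = 0 := by
  rw [RingHom.map_det]
  refine Matrix.exists_vecMul_eq_zero_iff.mp ⟨fun i => ζ ^ (i : ℕ), ?_, ?_⟩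
  · intro h
    have := congrFun h ⟨0, h0⟩
    simp at this
  · ext j
    have := sum_mulMat φ hm hN R ζ hζ j
    rw [hR, mul_zero] at this
    rw [Pi.zero_apply, ← this]
    simp only [Matrix.vecMul, dotProduct]
    refine Finset.sum_congr rfl fun i _ => ?_
    rw [mul_comm]; rfl

/-- The norm of `R` is nonzero when `R` is nonzero in the domain `A[Z] / Ψ`: a kernel vector of the
matrix is a polynomial `V` of degree `< N` with `Ψ ∣ V * R`. -/
lemma det_mulMat_ne_zero [IsDomain A] {Ψ : A[X]} (hm : Ψ.Monic) (hp : Prime Ψ) {N : ℕ}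
    (hN : Ψ.natDegree = N) (R : A[X]) (hR : ¬ Ψ ∣ R) : (mulMat Ψ N R).det ≠ 0 := by
  intro h0
  obtain ⟨v, hv, hv0⟩ := Matrix.exists_mulVec_eq_zero_iff.mpr h0
  let V : A[X] := ∑ j : Fin N, C (v j) * X ^ (j : ℕ)
  have hVc : ∀ j : Fin N, V.coeff j = v j := by
    intro j
    simp only [V, finsetSum_coeff, coeff_C_mul, coeff_X_pow, Fin.val_inj]
    simp
  have hdeg : V.degree < N := degree_sum_fin_lt _
  have h1 : Ψ ∣ V * R := by
    have e : V * R = ∑ j : Fin N, C (v j) * (X ^ (j : ℕ) * R) := by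
      simp only [V, Finset.sum_mul, mul_assoc]
    rw [← modByMonic_eq_zero_iff_dvd hm]
    have e2 : ∀ i : Fin N, ((V * R) %ₘ Ψ).coeff i = 0 := by
      intro i
      have := congrFun hv0 i
      rw [Pi.zero_apply] at this
      rw [← this, e, ← modByMonicHom_apply, map_sum, finsetSum_coeff]
      simp only [Matrix.mulVec, dotProduct]
      refine Finset.sum_congr rfl fun j _ => ?_
      rw [← smul_eq_C_mul, map_smul, coeff_smul, smul_eq_mul, mul_comm]; rfl
    have hd := degree_modByMonic_lt (V * R) hm
    rw [degree_eq_natDegree hm.ne_zero, hN] at hd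
    ext i
    rw [coeff_zero]
    by_cases hi : i < N
    · exact e2 ⟨i, hi⟩
    · exact coeff_eq_zero_of_degree_lt (hd.trans_le (by exact_mod_cast not_lt.mp hi))
  rcases hp.dvd_or_dvd h1 with h2 | h2
  · apply hv
    have : V = 0 := by
      apply eq_zero_of_dvd_of_degree_lt h2
      rwa [degree_eq_natDegree hm.ne_zero, hN]
    ext j
    rw [← hVc, this]; simp
  · exact hR h2

/-- The norm to `F[T]` multiplies the weighted degree by `N`. The column index contributes
`D * j` and the row index `-D * i`, and these cancel in each term of the determinant. -/
lemma natDegree_det_mulMat_le {F : Type*} [Field F] {D N r : ℕ} {Φ R : F[X][X]} (hm : Φ.Monic)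
    (hN : Φ.natDegree = N) (hΦ : Wt D (D * N) Φ) (hR : Wt D r R) :
    (mulMat Φ N R).det.natDegree ≤ N * r := by
  rw [Matrix.det_apply]
  apply natDegree_sum_le_of_forall_le
  intro σ _
  refine (natDegree_smul_le _ _).trans ?_
  by_cases h : ∏ i, mulMat Φ N R (σ i) i = 0
  · rw [h]; simp
  rw [natDegree_prod _ _ (fun i hi h' => h (Finset.prod_eq_zero hi h'))]
  have key : ∀ i : Fin N, (mulMat Φ N R (σ i) i).natDegree + D * (σ i : ℕ) ≤ r + D * i := by
    intro i
    have h0 : mulMat Φ N R (σ i) i ≠ 0 := fun h' => h (Finset.prod_eq_zero (Finset.mem_univ i) h')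
    have hw : Wt D (r + D * i) ((X ^ (i : ℕ) * R) %ₘ Φ) := by
      apply Wt.modByMonic hm hN hΦ
      have := (Wt.monomial (F := F) D 0 i).mul hR
      simp only [pow_zero, map_one, one_mul, zero_add] at this
      rwa [add_comm]
    exact hw _ _ (leadingCoeff_ne_zero.mpr h0)
  have := Finset.sum_le_sum (fun i (_ : i ∈ Finset.univ) => key i)
  rw [Finset.sum_add_distrib, Finset.sum_add_distrib, ← Finset.mul_sum, ← Finset.mul_sum,
    Equiv.sum_comp σ (fun i : Fin N => (i : ℕ))] at this
  simp at this
  omega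

end mulMat
end HG

/-! ### Nonvanishing of Stepanov's auxiliary polynomials -/

namespace HG

section nonvanishing

/-- `1, T, …, T ^ (p - 1)` are linearly independent over the field of `p`-th powers if `T` is not
itself a `p`-th power. -/
lemma eval₂_frobenius_ne_zero {p : ℕ} [hp : Fact p.Prime] {L : Type*} [Field L] [CharP L p] (T : L)
    (hT : ∀ y : L, y ^ p ≠ T) (δ : L[X]) (h0 : δ ≠ 0) (hδ : δ.natDegree < p) :
    eval₂ (frobenius L p) T δ ≠ 0 := by
  intro h
  have hirr : Irreducible (X ^ p - C T) := X_pow_sub_C_irreducible_of_prime hp.out hT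
  have : Fact (Irreducible (X ^ p - C T)) := ⟨hirr⟩
  let K := AdjoinRoot (X ^ p - C T)
  have : CharP K p := charP_of_injective_algebraMap (algebraMap L K).injective p
  let τ : K := AdjoinRoot.root _
  have hτ : τ ^ p = algebraMap L K T := by
    have := AdjoinRoot.eval₂_root (X ^ p - C T)
    rw [eval₂_sub, eval₂_pow, eval₂_X, eval₂_C, sub_eq_zero] at this
    exact this
  have e : (frobenius K p).comp (aeval (R := L) τ).toRingHom =
      (algebraMap L K).comp (eval₂RingHom (frobenius L p) T) := by
    ext x
    · simp [frobenius_def]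
    · simp [frobenius_def, hτ]
  have e2 := congrArg (fun f => f δ) e
  simp only [RingHom.comp_apply, coe_eval₂RingHom, h, map_zero, AlgHom.toRingHom_eq_coe,
    RingHom.coe_coe, frobenius_def] at e2
  have e3 : aeval τ δ = 0 := by
    exact pow_eq_zero_iff hp.out.ne_zero |>.mp e2
  rw [AdjoinRoot.aeval_eq, AdjoinRoot.mk_eq_zero] at e3
  have := natDegree_le_of_dvd e3 h0
  rw [natDegree_X_pow_sub_C] at this
  omega

lemma not_pow_eq_X (p : ℕ) [hp : Fact p.Prime] (y : FractionRing (ZMod p)[X]) :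
    y ^ p ≠ algebraMap (ZMod p)[X] _ X := by
  intro h
  have hyInt : IsIntegral (ZMod p)[X] y :=
    IsIntegral.of_pow hp.out.pos (h ▸ isIntegral_algebraMap)
  obtain ⟨b, rfl⟩ := IsIntegrallyClosed.isIntegral_iff.mp hyInt
  rw [← map_pow] at h
  have h2 := IsFractionRing.injective (ZMod p)[X] (FractionRing (ZMod p)[X]) h
  have h3 := congrArg natDegree h2
  rw [natDegree_pow, natDegree_X] at h3
  exact hp.out.one_lt.ne' (Nat.dvd_one.mp ⟨_, h3.symm⟩)

/-- The function field of an irreducible curve `Φ(T, Z) = 0` over `𝔽_p`, of degree `N < p` in `Z`,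
in which `T` is not a `p`-th power. -/
lemma exists_functionField (p : ℕ) [hp : Fact p.Prime] (Φ : (ZMod p)[X][X]) (hm : Φ.Monic)
    (hirr : Irreducible Φ) (hN : Φ.natDegree < p) :
    ∃ (L : Type) (_ : Field L) (_ : Algebra (ZMod p) L) (T z : L),
      (∀ H : (ZMod p)[X][X], qev T z H = 0 ↔ Φ ∣ H) ∧ ∀ y : L, y ^ p ≠ T := by
  let K := FractionRing (ZMod p)[X]
  let ι := algebraMap (ZMod p)[X] K
  have hinj : Function.Injective ι := IsFractionRing.injective _ _
  have hirr' : Irreducible (Φ.map ι) :=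
    (hm.irreducible_iff_irreducible_map_fraction_map).mp hirr
  have : Fact (Irreducible (Φ.map ι)) := ⟨hirr'⟩
  let L := AdjoinRoot (Φ.map ι)
  refine ⟨L, inferInstance, ((algebraMap K L).comp (ι.comp C)).toAlgebra, algebraMap K L (ι X),
    AdjoinRoot.root _, ?_, ?_⟩
  · intro H
    let : Algebra (ZMod p) L := ((algebraMap K L).comp (ι.comp C)).toAlgebra
    have e : (qev (algebraMap K L (ι X)) (AdjoinRoot.root _) : (ZMod p)[X][X] →+* L) =
        (AdjoinRoot.mk (Φ.map ι)).comp (mapRingHom ι) := by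
      refine ringHom_ext' (ringHom_ext' (Subsingleton.elim _ _) ?_) ?_
      · simp [qev]; rfl
      · simp [qev]
    rw [e, RingHom.comp_apply, AdjoinRoot.mk_eq_zero, coe_mapRingHom, map_dvd_map _ hinj hm]
  · intro y hy
    have hpb := AdjoinRoot.powerBasis hirr'.ne_zero
    have hfin : Module.finrank K L = Φ.natDegree := by
      rw [(AdjoinRoot.powerBasis hirr'.ne_zero).finrank, AdjoinRoot.powerBasis_dim,
        hm.natDegree_map]
    have : FiniteDimensional K L := (AdjoinRoot.powerBasis hirr'.ne_zero).finite
    have hX : Irreducible (X ^ p - C (ι X)) :=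
      X_pow_sub_C_irreducible_of_prime hp.out (not_pow_eq_X p)
    have hmin : X ^ p - C (ι X) = minpoly K y := by
      apply minpoly.eq_of_irreducible_of_monic hX
      · simp [hy]
      · exact monic_X_pow_sub_C _ hp.out.ne_zero
    have h1 := minpoly.natDegree_le (A := K) y
    rw [← hmin, natDegree_X_pow_sub_C, hfin] at h1
    omega

/-- The auxiliary polynomials of Stepanov's method: `∑ w · T^a Z^i (T^k Z^j)^p`. -/
noncomputable def auxR (p A N κ : ℕ) (w : (Fin A × Fin N) × (Fin κ × Fin N) → ZMod p) :
    (ZMod p)[X][X] :=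
  ∑ x, ∑ y, w (x, y) • ((C (X ^ (x.1 : ℕ)) * X ^ (x.2 : ℕ)) *
    (C (X ^ (y.1 : ℕ)) * X ^ (y.2 : ℕ)) ^ p)

lemma coeff_double_sum {F : Type*} [Field F] {A N : ℕ} (s : Fin A × Fin N → F) (a : Fin A)
    (i : Fin N) :
    ((∑ x, s x • (C (X ^ (x.1 : ℕ)) * X ^ (x.2 : ℕ)) : F[X][X]).coeff i).coeff a = s (a, i) := by
  classical
  rw [finsetSum_coeff, finsetSum_coeff, Finset.sum_eq_single (a, i)]
  · simp [coeff_smul, coeff_C_mul, coeff_X_pow, -map_pow]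
  · rintro ⟨b, j⟩ _ hne
    simp only [coeff_smul, coeff_C_mul, coeff_X_pow, Fin.val_inj]
    split_ifs with h
    · subst h
      have : a ≠ b := fun h => hne (by rw [h])
      simp [coeff_X_pow, Fin.val_inj, this]
    · simp
  · simp

lemma degree_double_sum {F : Type*} [Field F] {A N : ℕ} (s : Fin A × Fin N → F) :
    (∑ x, s x • (C (X ^ (x.1 : ℕ)) * X ^ (x.2 : ℕ)) : F[X][X]).degree < N := by
  refine lt_of_le_of_lt (degree_sum_le _ _) ((Finset.sup_lt_iff (WithBot.bot_lt_coe N)).mpr ?_)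
  rintro ⟨a, i⟩ _
  refine (degree_smul_le _ _).trans_lt ((degree_C_mul_X_pow_le _ _).trans_lt ?_)
  exact Nat.cast_lt.mpr i.2

lemma double_sum_eq_zero {F : Type*} [Field F] {A N : ℕ} (s : Fin A × Fin N → F) {Φ : F[X][X]}
    (hm : Φ.Monic) (hN : Φ.natDegree = N)
    (h : Φ ∣ (∑ x, s x • (C (X ^ (x.1 : ℕ)) * X ^ (x.2 : ℕ)) : F[X][X])) : s = 0 := by
  have h0 := eq_zero_of_dvd_of_degree_lt h (by
    rw [degree_eq_natDegree hm.ne_zero, hN]; exact degree_double_sum s)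
  ext ⟨a, i⟩
  rw [← coeff_double_sum s a i, h0]; simp

lemma Wt.double_sum {F : Type*} [Field F] {A N D : ℕ} (s : Fin A × Fin N → F) :
    Wt D (A + D * N) (∑ x, s x • (C (X ^ (x.1 : ℕ)) * X ^ (x.2 : ℕ)) : F[X][X]) := by
  refine Wt.sum _ _ fun x _ => Wt.smul _ ((Wt.monomial D x.1 x.2).mono ?_)
  have h1 := x.1.2
  have := Nat.mul_le_mul_left D x.2.2.le
  omega

lemma qev_smul {F k : Type*} [Field F] [Field k] [Algebra F k] (t z : k) (c : F) (H : F[X][X]) :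
    qev t z (c • H) = algebraMap F k c * qev t z H := by
  rw [show c • H = C (C c) * H by rw [← smul_eq_C_mul, ← algebraMap_eq, algebraMap_smul], map_mul]
  simp [qev]

lemma qev_monomial {F k : Type*} [Field F] [Field k] [Algebra F k] (t z : k) (a i : ℕ) :
    qev t z (C (X ^ a) * X ^ i : F[X][X]) = t ^ a * z ^ i := by
  rw [qev, coe_eval₂RingHom, eval₂_mul, eval₂_C, eval₂_X_pow, coe_eval₂RingHom, eval₂_X_pow]

/-- The auxiliary polynomial does not vanish identically on the curve. Grouping its terms by
`T ^ a * Z ^ i` and using that `Φ` stays irreducible over its own function field `L`, the norm of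
`∑ s ^ p T ^ a Z ^ i`, with coefficients `s ∈ L` not all zero, is a nonzero polynomial in `T` of
degree `< p` with coefficients in `L ^ p`, and `1, T, …, T ^ (p - 1)` are independent over `L ^ p`. -/
lemma not_dvd_auxR (p : ℕ) [hp : Fact p.Prime] {N D A κ : ℕ} (Φ : (ZMod p)[X][X]) (hm : Φ.Monic)
    (hN : Φ.natDegree = N) (hN0 : 0 < N) (hNp : N < p) (hΦ : Wt D (D * N) Φ)
    (habs : ∀ (L : Type) [Field L] [Algebra (ZMod p) L],
      Irreducible (Φ.map (mapRingHom (algebraMap (ZMod p) L))))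
    (hA : N * (A + D * N) < p)
    (w : (Fin A × Fin N) × (Fin κ × Fin N) → ZMod p) (hw : w ≠ 0) : ¬ Φ ∣ auxR p A N κ w := by
  intro hdvd
  have hirr : Irreducible Φ := by
    have := habs (ZMod p)
    simpa using this
  obtain ⟨L, _, _, T, z, hL, hT⟩ := exists_functionField p Φ hm hirr (hN ▸ hNp)
  have : CharP L p := charP_of_injective_algebraMap (algebraMap (ZMod p) L).injective p
  let s : Fin A × Fin N → L := fun x => qev T z
    (∑ y, w (x, y) • (C (X ^ (y.1 : ℕ)) * X ^ (y.2 : ℕ)) : (ZMod p)[X][X])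
  have hs : s ≠ 0 := by
    intro h
    apply hw
    ext ⟨x, y⟩
    have h1 := congrFun h x
    rw [Pi.zero_apply] at h1
    have h2 := double_sum_eq_zero _ hm hN ((hL _).mp h1)
    exact congrFun h2 y
  let ΦL := Φ.map (mapRingHom (algebraMap (ZMod p) L))
  have hmL : ΦL.Monic := hm.map _
  have hNL : ΦL.natDegree = N := by rw [hm.natDegree_map, hN]
  have hΦL : Wt D (D * N) ΦL := by
    intro i j hij
    apply hΦ i j
    intro h0
    simp [ΦL, h0] at hij
  let W : L[X][X] := ∑ x, s x • (C (X ^ (x.1 : ℕ)) * X ^ (x.2 : ℕ))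
  have hndvd : ¬ ΦL ∣ W := fun h => hs (double_sum_eq_zero s hmL hNL h)
  have hdet := det_mulMat_ne_zero hmL (habs L).prime hNL W hndvd
  have hdeg := natDegree_det_mulMat_le hmL hNL hΦL (Wt.double_sum (D := D) s)
  -- Suppose `Φ` divides the auxiliary polynomial. Then `Φ` and `W`, with the coefficients of
  -- `W` raised to the `p`-th power, have the common root `z`, so that the norm of `W` vanishes there.
  refine eval₂_frobenius_ne_zero T hT _ hdet (hdeg.trans_lt hA) ?_
  have hΦ0 : eval₂ (eval₂RingHom (frobenius L p) T) z ΦL = 0 := by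
    rw [eval₂_map, ← (hL Φ).mpr dvd_rfl, qev, coe_eval₂RingHom]
    congr 1
    refine ringHom_ext' (Subsingleton.elim _ _) ?_
    simp
  refine map_det_mulMat_eq_zero (eval₂RingHom (frobenius L p) T) hmL hNL hN0 W z hΦ0 ?_
  rw [← (hL _).mpr hdvd]
  simp only [W, auxR, map_sum, qev_smul, eval₂_finsetSum]
  refine Finset.sum_congr rfl fun x _ => ?_
  have : s x • (C (X ^ (x.1 : ℕ)) * X ^ (x.2 : ℕ) : L[X][X]) =
    C (C (s x) * X ^ (x.1 : ℕ)) * X ^ (x.2 : ℕ) := by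
    rw [← smul_eq_C_mul (p := X ^ (x.1 : ℕ)), ← smul_C, smul_mul_assoc]
  have e1 : eval₂ (eval₂RingHom (frobenius L p) T) z
      (C (C (s x) * X ^ (x.1 : ℕ)) * X ^ (x.2 : ℕ)) =
      s x ^ p * T ^ (x.1 : ℕ) * z ^ (x.2 : ℕ) := by
    rw [eval₂_mul, eval₂_C, eval₂_X_pow, coe_eval₂RingHom, eval₂_mul, eval₂_C, eval₂_X_pow,
      frobenius_def]
  have e3 : s x ^ p = ∑ y : Fin κ × Fin N, algebraMap (ZMod p) L (w (x, y)) *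
      (T ^ (y.1 : ℕ) * z ^ (y.2 : ℕ)) ^ p := by
    rw [← frobenius_def]
    simp only [s]
    rw [map_sum, map_sum]
    refine Finset.sum_congr rfl fun y _ => ?_
    rw [qev_smul, qev_monomial, frobenius_def, mul_pow, ← map_pow, ZMod.pow_card]
  rw [this, e1, e3, Finset.sum_mul, Finset.sum_mul]
  refine Finset.sum_congr rfl fun y _ => ?_
  rw [map_mul, map_pow (qev T z), qev_monomial, qev_monomial]
  ring

end nonvanishing
end HG

/-! ### Stepanov's bound -/

namespace HG

section stepanov

/-- Linear algebra step of Stepanov's method. Substituting `(T, G / Φ_Z)` for `(T ^ p, Z ^ p)` in the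
auxiliary polynomial and its first `M` derivatives along the curve, and clearing the denominator
`Φ_Z ^ (N - 1)`, gives fewer linear conditions on the coefficients `w` than there are unknowns. -/
lemma exists_aux {F : Type*} [Field F] {N D A κ M : ℕ} (Φ G : F[X][X]) (hm : Φ.Monic)
    (hN : Φ.natDegree = N) (hΦ : Wt D (D * N) Φ) (hG : Wt D (D * N) G)
    (hdim : M * (N * (A + κ + D * N * (1 + M + N) + 1)) < (A * N) * (κ * N)) :
    ∃ w : (Fin A × Fin N) × (Fin κ × Fin N) → F, w ≠ 0 ∧ ∀ m < M,
      Φ ∣ ∑ y : Fin κ × Fin N,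
        (ham Φ ^ m) (∑ x : Fin A × Fin N, w (x, y) • (C (X ^ (x.1 : ℕ)) * X ^ (x.2 : ℕ))) *
        (C (X ^ (y.1 : ℕ)) * (G ^ (y.2 : ℕ) * derivative Φ ^ (N - 1 - (y.2 : ℕ)))) := by
  classical
  set r := A + κ + D * N * (1 + M + N) with hr
  let B : ℕ → (Fin A × Fin N) × (Fin κ × Fin N) → F[X][X] := fun m xy =>
    (ham Φ ^ m) (C (X ^ (xy.1.1 : ℕ)) * X ^ (xy.1.2 : ℕ)) *
        (C (X ^ (xy.2.1 : ℕ)) * (G ^ (xy.2.2 : ℕ) * derivative Φ ^ (N - 1 - (xy.2.2 : ℕ))))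
  have hB : ∀ m ≤ M, ∀ xy, Wt D r (B m xy) := by
    rintro m hmM ⟨⟨a, i⟩, ⟨k, j⟩⟩
    have h1 := Wt.ham_pow hΦ (Wt.monomial (F := F) D a i) m
    have h2 := ((Wt.monomial (F := F) D k 0))
    rw [pow_zero, mul_one] at h2
    have h3 := (hG.pow j).mul ((hΦ.derivative).pow (N - 1 - j))
    refine (h1.mul (h2.mul h3)).mono ?_
    have ha := a.2
    have hi := Nat.mul_le_mul_left D i.2.le
    have hk := k.2
    have hj := j.2
    have e1 : m * (D * N) ≤ M * (D * N) := Nat.mul_le_mul_right _ hmM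
    have e2 : (j : ℕ) * (D * N) + (N - 1 - j) * (D * N) ≤ N * (D * N) := by
      rw [← add_mul]; exact Nat.mul_le_mul_right _ (by omega)
    have e3 : D * N * (1 + M + N) = D * N + M * (D * N) + N * (D * N) := by ring
    omega
  let v : (Fin A × Fin N) × (Fin κ × Fin N) → (Fin M × Fin N × Fin (r + 1) → F) := fun xy c =>
    ((B c.1 xy %ₘ Φ).coeff c.2.1).coeff c.2.2
  have hnot : ¬ LinearIndependent F v := by
    intro h
    have := h.fintype_card_le_finrank
    rw [Module.finrank_fintype_fun_eq_card] at this
    simp only [Fintype.card_prod, Fintype.card_fin] at this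
    omega
  rw [Fintype.not_linearIndependent_iff] at hnot
  obtain ⟨w, hw, xy, hxy⟩ := hnot
  refine ⟨w, fun h => hxy (by rw [h]; rfl), fun m hmM => ?_⟩
  have e : ∑ y : Fin κ × Fin N,
        (ham Φ ^ m) (∑ x : Fin A × Fin N, w (x, y) • (C (X ^ (x.1 : ℕ)) * X ^ (x.2 : ℕ))) *
        (C (X ^ (y.1 : ℕ)) * (G ^ (y.2 : ℕ) * derivative Φ ^ (N - 1 - (y.2 : ℕ)))) =
      ∑ xy, w xy • B m xy := by
    conv_rhs => rw [Fintype.sum_prod_type_right]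
    refine Finset.sum_congr rfl fun y _ => ?_
    rw [map_sum, Finset.sum_mul]
    refine Finset.sum_congr rfl fun x _ => ?_
    rw [map_smul, smul_mul_assoc]
  rw [e, ← modByMonic_eq_zero_iff_dvd hm]
  have e2 : (∑ xy, w xy • B m xy) %ₘ Φ = ∑ xy, w xy • (B m xy %ₘ Φ) := by
    rw [← modByMonicHom_apply, map_sum]
    refine Finset.sum_congr rfl fun xy _ => ?_
    rw [← algebraMap_smul F[X] (w xy) (B m xy), map_smul, algebraMap_smul, modByMonicHom_apply]
  rw [e2]
  have hdeg := degree_modByMonic_lt (∑ xy, w xy • B m xy) hm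
  rw [degree_eq_natDegree hm.ne_zero, hN, e2] at hdeg
  have hwt : Wt D r (∑ xy, w xy • (B m xy %ₘ Φ)) :=
    Wt.sum _ _ fun xy _ => Wt.smul _ (Wt.modByMonic hm hN hΦ (hB m hmM.le xy))
  ext i c
  rw [coeff_zero, coeff_zero]
  by_cases hi : i < N
  · by_cases hc : c < r + 1
    · have := congrFun hw (⟨m, hmM⟩, ⟨i, hi⟩, ⟨c, hc⟩)
      simpa [v] using this
    · by_contra h0
      have := hwt i c h0
      omega
  · rw [coeff_eq_zero_of_degree_lt (hdeg.trans_le (by exact_mod_cast not_lt.mp hi)), coeff_zero]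

/-- The auxiliary polynomial vanishes to order `M` at each point of the curve at which the
Frobenius is given by the rational function `G / Φ_Z`. -/
lemma X_pow_dvd_pev_auxR {p : ℕ} [hp : Fact p.Prime] {k : Type*} [Field k] [Algebra (ZMod p) k]
    {N A κ M : ℕ} (Φ G : (ZMod p)[X][X]) (hMp : M ≤ p)
    (w : (Fin A × Fin N) × (Fin κ × Fin N) → ZMod p)
    (hw : ∀ m < M, Φ ∣ ∑ y : Fin κ × Fin N,
        (ham Φ ^ m) (∑ x : Fin A × Fin N, w (x, y) • (C (X ^ (x.1 : ℕ)) * X ^ (x.2 : ℕ))) *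
        (C (X ^ (y.1 : ℕ)) * (G ^ (y.2 : ℕ) * derivative Φ ^ (N - 1 - (y.2 : ℕ)))))
    (t : ZMod p) (ζ : PowerSeries k) (hζ : pev (algebraMap _ k t) ζ Φ = 0)
    (hu : qev (algebraMap _ k t) (PowerSeries.constantCoeff ζ) (derivative Φ) ≠ 0)
    (hfr : (PowerSeries.constantCoeff ζ) ^ p *
        qev (algebraMap _ k t) (PowerSeries.constantCoeff ζ) (derivative Φ) =
      qev (algebraMap _ k t) (PowerSeries.constantCoeff ζ) G) :
    PowerSeries.X ^ M ∣ pev (algebraMap _ k t) ζ (auxR p A N κ w) := by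
  have : CharP k p := charP_of_injective_algebraMap (algebraMap (ZMod p) k).injective p
  set t' := algebraMap _ k t with ht'
  set z := PowerSeries.constantCoeff ζ with hz
  let H : Fin κ × Fin N → (ZMod p)[X][X] := fun y =>
    ∑ x : Fin A × Fin N, w (x, y) • (C (X ^ (x.1 : ℕ)) * X ^ (x.2 : ℕ))
  let mono : Fin κ × Fin N → (ZMod p)[X][X] := fun y => C (X ^ (y.1 : ℕ)) * X ^ (y.2 : ℕ)
  have eR : auxR p A N κ w = ∑ y, H y * mono y ^ p := by
    rw [auxR, Finset.sum_comm]
    refine Finset.sum_congr rfl fun y _ => ?_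
    simp only [H, mono, Finset.sum_mul, smul_mul_assoc]
  have ht : t' ^ p = t' := by rw [ht', ← map_pow, ZMod.pow_card]
  have hΦ0 : qev t' z Φ = 0 := by rw [hz, ← constantCoeff_pev, hζ, map_zero]
  have main := X_pow_dvd_of_ham (p := p) Finset.univ (fun y => (qev t' z (mono y)) ^ p) t' ζ Φ hζ hu
    M hMp H (by
      intro m hm
      have h1 : qev t' z (∑ y, (ham Φ ^ m) (H y) *
        (C (X ^ (y.1 : ℕ)) * (G ^ (y.2 : ℕ) * derivative Φ ^ (N - 1 - (y.2 : ℕ))))) = 0 := by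
        obtain ⟨Q, hQ⟩ := hw m hm
        have := congrArg (qev t' z) hQ
        rw [map_mul, hΦ0, zero_mul] at this
        exact this
      rw [← mul_right_inj' (pow_ne_zero (N - 1) hu), mul_zero, ← h1, map_sum, Finset.mul_sum]
      refine Finset.sum_congr rfl fun y _ => ?_
      have e1 : qev t' z (C (X ^ (y.1 : ℕ)) : (ZMod p)[X][X]) = t' ^ (y.1 : ℕ) := by
        have := qev_monomial (F := ZMod p) t' z y.1 0
        simpa using this
      simp only [mono]
      rw [qev_monomial, map_mul, map_mul, map_mul, e1, map_pow, map_pow, ← hfr, ← hz]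
      have hj : N - 1 = (N - 1 - (y.2 : ℕ)) + y.2 := by have := y.2.2; omega
      conv_lhs => rw [hj]
      rw [pow_add, mul_pow, ← pow_mul, mul_comm (y.1 : ℕ) p, pow_mul, ht, mul_pow (z ^ p),
        ← pow_mul, ← pow_mul, mul_comm (y.2 : ℕ) p]
      ring)
  have e3 : pev t' ζ (auxR p A N κ w) =
      ∑ y, (pev t' ζ (mono y) ^ p - PowerSeries.C (qev t' z (mono y) ^ p)) * pev t' ζ (H y) +
      ∑ y, PowerSeries.C (qev t' z (mono y) ^ p) * pev t' ζ (H y) := by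
    rw [eR, map_sum, ← Finset.sum_add_distrib]
    refine Finset.sum_congr rfl fun y _ => ?_
    rw [map_mul, map_pow]
    ring
  rw [e3]
  refine dvd_add (Finset.dvd_sum fun y _ => Dvd.dvd.mul_right ?_ _) main
  refine (pow_dvd_pow _ hMp).trans ?_
  have := X_pow_dvd_pow_sub (p := p) (pev t' ζ (mono y))
  rwa [constantCoeff_pev] at this

/-- Vanishing order of the Taylor expansion at `t`, as a root multiplicity. -/
lemma le_rootMultiplicity_of_dvd {F k : Type*} [Field F] [Field k] [Algebra F k] (q : F[X])
    (hq : q ≠ 0) (t : k) (m : ℕ)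
    (h : PowerSeries.X ^ m ∣ eval₂RingHom ((PowerSeries.C).comp (algebraMap F k))
      (PowerSeries.C t + PowerSeries.X) q) :
    m ≤ (q.map (algebraMap F k)).rootMultiplicity t := by
  have e : eval₂RingHom ((PowerSeries.C).comp (algebraMap F k))
      (PowerSeries.C t + PowerSeries.X) q = ((taylor t (q.map (algebraMap F k)) : k[X]) :
      PowerSeries k) := by
    have : eval₂RingHom ((PowerSeries.C).comp (algebraMap F k))
      (PowerSeries.C t + PowerSeries.X) = (Polynomial.coeToPowerSeries.ringHom).comp
        ((taylorAlgHom t).toRingHom.comp (mapRingHom (algebraMap F k))) := by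
      ext <;> simp [add_comm]
    rw [this]; simp
  rw [e] at h
  rw [le_rootMultiplicity_iff (by rwa [Ne, Polynomial.map_eq_zero])]
  have h2 : X ^ m ∣ taylor t (q.map (algebraMap F k)) := by
    rw [X_pow_dvd_iff]
    rw [PowerSeries.X_pow_dvd_iff] at h
    intro d hd
    have := h d hd
    rwa [coeff_coe] at this
  obtain ⟨g, hg⟩ := h2
  refine ⟨taylor (-t) g, ?_⟩
  have := congrArg (taylor (-t)) hg
  rw [taylor_taylor, neg_add_cancel, taylor_zero] at this
  rw [this, taylor_mul, taylor_X_pow]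
  simp [sub_eq_add_neg]

/-- Stepanov's bound: up to a factor `1 + 1 / e`, at most `p` points `(t, z)` of the absolutely
irreducible curve `Φ = 0` with `t ∈ 𝔽_p` satisfy `z ^ p = (G / Φ_Z)(t, z)`, once `p` is large
compared to the degrees. The set `g t` indexes such points above `t`. -/
theorem stepanov (N D e : ℕ) (hN0 : 0 < N) :
    ∃ m : ℕ, ∀ (p : ℕ) [Fact p.Prime], m < p → ∀ (k : Type) [Field k] [Algebra (ZMod p) k]
      (Φ G : (ZMod p)[X][X]), Φ.Monic → Φ.natDegree = N → Wt D (D * N) Φ → Wt D (D * N) G →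
      (∀ (L : Type) [Field L] [Algebra (ZMod p) L],
        Irreducible (Φ.map (mapRingHom (algebraMap (ZMod p) L)))) →
      ∀ (𝒯 : Finset (ZMod p)) (z : ZMod p → Fin N → k),
      (∀ t ∈ 𝒯, Function.Injective (z t)) →
      (∀ t ∈ 𝒯, ∀ l, qev (algebraMap _ k t) (z t l) Φ = 0) →
      (∀ t ∈ 𝒯, ∀ l, qev (algebraMap _ k t) (z t l) (derivative Φ) ≠ 0) →
      ∀ g : ZMod p → Finset (Fin N), (∀ t ∈ 𝒯, ∀ l ∈ g t, z t l ^ p *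
        qev (algebraMap _ k t) (z t l) (derivative Φ) = qev (algebraMap _ k t) (z t l) G) →
      e * ∑ t ∈ 𝒯, (g t).card ≤ (e + 1) * p := by
  -- The auxiliary polynomial has `A * N * (κ' + 1) * N` coefficients and vanishes to order `M`; its
  -- norm has degree about `N * p * (κ' + 1 + D * N)`. Comparing with `M = N * κ'` zeros per point
  -- gives the factor `1 + (2 + D * N) / κ' = 1 + 1 / e`.
  obtain ⟨κ', hκ'⟩ : ∃ κ', κ' = e * (2 + D * N) := ⟨_, rfl⟩
  obtain ⟨M, hM⟩ : ∃ M, M = N * κ' := ⟨_, rfl⟩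
  obtain ⟨c, hc⟩ : ∃ c, c = (κ' + 1) + D * N * (1 + M + N) + 1 := ⟨_, rfl⟩
  obtain ⟨A, hA⟩ : ∃ A, A = κ' * c + 1 := ⟨_, rfl⟩
  refine ⟨M + N + N * (A + D * N), ?_⟩
  intro p hp hmp k _ _ Φ G hm hN hΦ hG habs 𝒯 z hinj hz hu g hg
  have hpos : N * 1 ≤ N * (A + D * N) := Nat.mul_le_mul_left _ (by omega)
  have hdim : M * (N * (A + (κ' + 1) + D * N * (1 + M + N) + 1)) < (A * N) * ((κ' + 1) * N) := by
    have e1 : A + (κ' + 1) + D * N * (1 + M + N) + 1 = A + c := by omega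
    rw [e1, hM]
    have e2 : κ' * (A + c) < A * (κ' + 1) := by
      rw [mul_add, mul_add, mul_comm κ' A, hA]; omega
    calc N * κ' * (N * (A + c)) = N * N * (κ' * (A + c)) := by ring
      _ < N * N * (A * (κ' + 1)) := by
        exact Nat.mul_lt_mul_of_pos_left e2 (Nat.mul_pos hN0 hN0)
      _ = _ := by ring
  obtain ⟨w, hw0, hw⟩ := exists_aux (M := M) Φ G hm hN hΦ hG hdim
  have hndvd := not_dvd_auxR p Φ hm hN hN0 (by omega) hΦ habs (by omega) w hw0
  set R := auxR p A N (κ' + 1) w with hR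
  have hirr : Irreducible Φ := by
    have := habs (ZMod p)
    simpa using this
  have hdet := det_mulMat_ne_zero hm hirr.prime hN R hndvd
  have hRwt : Wt D ((A + D * N) + p * ((κ' + 1) + D * N)) R := by
    rw [hR, auxR]
    refine Wt.sum _ _ fun x _ => Wt.sum _ _ fun y _ => Wt.smul _ ?_
    refine ((Wt.monomial D x.1 x.2).mul ((Wt.monomial D y.1 y.2).pow p)).mono ?_
    have h1 := x.1.2
    have h2 := Nat.mul_le_mul_left D x.2.2.le
    have h3 := y.1.2
    have h4 := Nat.mul_le_mul_left D y.2.2.le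
    exact Nat.add_le_add (by omega) (Nat.mul_le_mul_left _ (by omega))
  have hdeg := natDegree_det_mulMat_le hm hN hΦ hRwt
  set q := (mulMat Φ N R).det with hq
  have hmult : ∀ t ∈ 𝒯, M * (g t).card ≤
      (q.map (algebraMap (ZMod p) k)).rootMultiplicity (algebraMap _ k t) := by
    intro t ht
    apply le_rootMultiplicity_of_dvd q hdet
    choose ζ hζ0 hζ using fun l => exists_root_powerSeries Φ hm (algebraMap _ k t) (z t l)
      (hz t ht l) (hu t ht l)
    have hζinj : Function.Injective ζ := by
      intro a b hab
      apply hinj t ht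
      rw [← hζ0, ← hζ0, hab]
    -- At `T = t + u` the norm is the product of the values of `R` on the `N` branches `ζ l`.
    rw [hq, map_det_mulMat _ hm hN R ζ hζinj hζ, ← Finset.prod_mul_prod_compl (g t)]
    apply Dvd.dvd.mul_right
    rw [pow_mul, ← Finset.prod_const]
    apply Finset.prod_dvd_prod_of_dvd
    intro l hl
    refine X_pow_dvd_pev_auxR Φ G (by omega) w hw t (ζ l) (hζ l) ?_ ?_
    · rw [hζ0]; exact hu t ht l
    · rw [hζ0]; exact hg t ht l hl
  have hsum : ∑ t ∈ 𝒯, M * (g t).card ≤ q.natDegree := by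
    classical
    refine (Finset.sum_le_sum hmult).trans ?_
    simp only [← count_roots]
    have hinjt : Function.Injective (algebraMap (ZMod p) k) := (algebraMap (ZMod p) k).injective
    rw [← Finset.sum_image (s := 𝒯) (g := algebraMap (ZMod p) k)
      (f := fun a => (q.map (algebraMap (ZMod p) k)).roots.count a) (fun a _ b _ h => hinjt h)]
    refine le_trans (Finset.sum_le_sum_of_subset (Finset.subset_union_left
      (s₂ := (q.map (algebraMap (ZMod p) k)).roots.toFinset))) ?_
    rw [Multiset.sum_count_eq_card (by
      intro a ha
      exact Finset.mem_union_right _ (Multiset.mem_toFinset.mpr ha))]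
    exact (card_roots' _).trans natDegree_map_le
  have h1 := hsum.trans hdeg
  rw [← Finset.mul_sum, hM, mul_assoc] at h1
  have h2 := Nat.le_of_mul_le_mul_left h1 hN0
  have h3 : A + D * N ≤ p := by
    have : 1 * (A + D * N) ≤ N * (A + D * N) := Nat.mul_le_mul_right _ hN0
    omega
  have h4 : κ' * ∑ t ∈ 𝒯, (g t).card ≤ p * (κ' + (2 + D * N)) := by
    refine h2.trans ?_
    calc _ ≤ p + p * (κ' + 1 + D * N) := by omega
      _ = _ := by ring
  have h5 : (2 + D * N) * (e * ∑ t ∈ 𝒯, (g t).card) ≤ (2 + D * N) * ((e + 1) * p) := by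
    calc _ = κ' * ∑ t ∈ 𝒯, (g t).card := by rw [hκ']; ring
      _ ≤ _ := h4
      _ = _ := by rw [hκ']; ring
  exact Nat.le_of_mul_le_mul_left h5 (by omega)

end stepanov
end HG

/-! ### The Galois resolvent -/

namespace HG

section resolvent

/-- Symmetric functions of the roots of `f` are polynomials in the coefficients of `f`. -/
lemma exists_symm_coeff {R : Type} [CommRing R] {n : ℕ} (f : R[X])
    (q : MvPolynomial (Fin n) ℤ) (hq : q.IsSymmetric) :
    ∃ Q : R, ∀ (B : Type) [CommRing B] (φ : R →+* B) (y : Fin n → B),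
      f.map φ = ∏ i, (X - C (y i)) → φ Q = MvPolynomial.aeval y q := by
  obtain ⟨g, hg⟩ := MvPolynomial.esymmAlgHom_surjective (σ := Fin n) (n := n) ℤ (by simp) ⟨q, hq⟩
  have hg' : MvPolynomial.aeval (fun i : Fin n => MvPolynomial.esymm (Fin n) ℤ (i + 1)) g = q := by
    rw [← MvPolynomial.esymmAlgHom_apply, hg]
  refine ⟨MvPolynomial.aeval (fun i : Fin n => (-1) ^ ((i : ℕ) + 1) * f.coeff (n - (i + 1))) g, ?_⟩
  intro B _ φ y hφ
  rw [← hg']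
  have e1 : ∀ (u : Fin n → R), φ (MvPolynomial.aeval u g) =
      MvPolynomial.aeval (fun i => φ (u i)) g := by
    intro u
    rw [MvPolynomial.aeval_def, MvPolynomial.aeval_def, MvPolynomial.hom_eval₂]
    congr 1
    exact RingHom.ext_int _ _
  have e2 : ∀ (u : Fin n → MvPolynomial (Fin n) ℤ), MvPolynomial.aeval y (MvPolynomial.aeval u g) =
      MvPolynomial.aeval (fun i => MvPolynomial.aeval y (u i)) g := by
    intro u
    exact MvPolynomial.comp_aeval_apply u (MvPolynomial.aeval y) g
  rw [e1, e2]
  congr 2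
  ext i
  rw [MvPolynomial.aeval_esymm_eq_multiset_esymm, map_mul, map_pow, map_neg, map_one, ← coeff_map,
    hφ]
  have h := Multiset.prod_X_sub_C_coeff (Finset.univ.val.map y) (k := n - (i + 1)) (by simp)
  have hcard : Multiset.card (Finset.univ.val.map y) = n := by simp
  rw [hcard, Multiset.map_map] at h
  have h' : (∏ i, (X - C (y i))).coeff (n - (i + 1)) = _ := h
  have hi : n - (n - ((i : ℕ) + 1)) = i + 1 := by have := i.2; omega
  rw [h', hi, ← mul_assoc, ← mul_pow]
  simp

/-- The version of `exists_symm_coeff` for polynomials with symmetric coefficients. -/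
lemma exists_symm_poly {R : Type} [CommRing R] {n : ℕ} (f : R[X])
    (Ψ : (MvPolynomial (Fin n) ℤ)[X]) (hΨ : ∀ i, (Ψ.coeff i).IsSymmetric) :
    ∃ Q : R[X], Q.degree ≤ Ψ.degree ∧ ∀ (B : Type) [CommRing B] (φ : R →+* B) (y : Fin n → B),
      f.map φ = ∏ i, (X - C (y i)) →
        Q.map φ = Ψ.map (MvPolynomial.aeval y : MvPolynomial (Fin n) ℤ →ₐ[ℤ] B).toRingHom := by
  choose Q hQ using fun i => exists_symm_coeff f (Ψ.coeff i) (hΨ i)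
  refine ⟨∑ i ∈ Ψ.support, C (Q i) * X ^ i, ?_, ?_⟩
  · refine (degree_sum_le _ _).trans (Finset.sup_le fun i hi => ?_)
    exact (degree_C_mul_X_pow_le _ _).trans (le_degree_of_ne_zero (mem_support_iff.mp hi))
  · intro B _ φ y hφ
    conv_rhs => rw [as_sum_support_C_mul_X_pow Ψ]
    rw [Polynomial.map_sum, Polynomial.map_sum]
    refine Finset.sum_congr rfl fun i _ => ?_
    rw [Polynomial.map_mul, Polynomial.map_mul, map_C, map_C, Polynomial.map_pow,
      Polynomial.map_pow, map_X, map_X, hQ i B φ y hφ]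
    rfl

/-- The linear form `∑ c ^ i * y (g i)` in the roots `y`. -/
def lf {B : Type*} [CommRing B] {n : ℕ} (c : ℤ) (y : Fin n → B) (g : Equiv.Perm (Fin n)) : B :=
  ∑ i : Fin n, (c : B) ^ (i : ℕ) * y (g i)

lemma map_lf {B B' : Type*} [CommRing B] [CommRing B'] {n : ℕ} (c : ℤ) (y : Fin n → B)
    (g : Equiv.Perm (Fin n)) (φ : B →+* B') : φ (lf c y g) = lf c (fun i => φ (y i)) g := by
  simp [lf]

/-- The resolvent `Φ`, whose roots are the `n!` linear forms `∑ c ^ i y_{g i}`, and for each `σ` the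
polynomial `G` with `G / Φ'` interpolating the permutation `z_g ↦ z_{g σ}` of these roots. -/
lemma exists_resolvent {R : Type} [CommRing R] [Nontrivial R] {n : ℕ} (f : R[X]) (c : ℤ) :
    ∃ Φ : R[X], Φ.Monic ∧ Φ.natDegree = n.factorial ∧ (∀ (B : Type) [CommRing B] (φ : R →+* B)
      (y : Fin n → B), f.map φ = ∏ i, (X - C (y i)) →
        Φ.map φ = ∏ g, (X - C (lf c y g))) ∧
      ∀ σ : Equiv.Perm (Fin n), ∃ G : R[X], G.natDegree < n.factorial ∧
        ∀ (B : Type) [CommRing B] (φ : R →+* B)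
        (y : Fin n → B), f.map φ = ∏ i, (X - C (y i)) →
        G.map φ = ∑ g, C (lf c y (g * σ)) * ∏ h ∈ Finset.univ.erase g, (X - C (lf c y h)) := by
  classical
  let Y : Fin n → MvPolynomial (Fin n) ℤ := MvPolynomial.X
  have hren : ∀ (e g : Equiv.Perm (Fin n)),
      MvPolynomial.rename e (lf c Y g) = lf c Y (e * g) := by
    intro e g
    have := map_lf c Y g (MvPolynomial.rename (R := ℤ) e).toRingHom
    simp only [AlgHom.toRingHom_eq_coe, RingHom.coe_coe] at this
    rw [this]
    simp [lf, Y]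
  have hae : ∀ (B : Type) [CommRing B] (y : Fin n → B) (g : Equiv.Perm (Fin n)),
      (MvPolynomial.aeval y : MvPolynomial (Fin n) ℤ →ₐ[ℤ] B).toRingHom (lf c Y g) = lf c y g := by
    intro B _ y g
    rw [map_lf]
    congr 1
    ext i
    simp [Y]
  have hcard : (Finset.univ : Finset (Equiv.Perm (Fin n))).card = n.factorial := by
    rw [Finset.card_univ, Fintype.card_perm, Fintype.card_fin]
  have hsymm : ∀ Ψ : (MvPolynomial (Fin n) ℤ)[X],
      (∀ e : Equiv.Perm (Fin n), Ψ.map (MvPolynomial.rename (R := ℤ) e).toRingHom = Ψ) →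
      ∀ i, (Ψ.coeff i).IsSymmetric := by
    intro Ψ h i e
    have := congrArg (fun q => q.coeff i) (h e)
    simp only [coeff_map] at this
    exact this
  let Ψ : (MvPolynomial (Fin n) ℤ)[X] := ∏ g, (X - C (lf c Y g))
  have hΨm : Ψ.Monic := monic_prod_of_monic _ _ fun g _ => monic_X_sub_C _
  have hΨdeg : Ψ.natDegree = n.factorial := by
    rw [natDegree_prod_of_monic _ _ fun g _ => monic_X_sub_C _]
    simp only [natDegree_X_sub_C, Finset.sum_const, hcard, smul_eq_mul, mul_one]
  have hΨs : ∀ e : Equiv.Perm (Fin n), Ψ.map (MvPolynomial.rename (R := ℤ) e).toRingHom = Ψ := by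
    intro e
    simp only [Ψ, Polynomial.map_prod, Polynomial.map_sub, map_X, map_C, AlgHom.toRingHom_eq_coe,
      RingHom.coe_coe, hren]
    exact Equiv.prod_comp (Equiv.mulLeft e) (fun g => X - C (lf c Y g))
  have hdlt : (Ψ - X ^ n.factorial).degree < ((n.factorial : ℕ) : WithBot ℕ) := by
    have h1 : Ψ.degree = ((n.factorial : ℕ) : WithBot ℕ) := by rw [degree_eq_natDegree hΨm.ne_zero, hΨdeg]
    have h2 := degree_sub_lt_left (p := Ψ) (q := X ^ n.factorial) (by rw [h1, degree_X_pow])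
      hΨm.ne_zero (by rw [hΨm.leadingCoeff, (monic_X_pow _).leadingCoeff])
    rwa [h1] at h2
  obtain ⟨Q, hQd, hQ⟩ := exists_symm_poly f (Ψ - X ^ n.factorial) (hsymm _ (by
    intro e
    rw [Polynomial.map_sub, hΨs, Polynomial.map_pow, map_X]))
  have hQlt := hQd.trans_lt hdlt
  refine ⟨X ^ n.factorial + Q, monic_X_pow_add hQlt, ?_, ?_, ?_⟩
  · rw [natDegree_add_eq_left_of_degree_lt, natDegree_X_pow]
    rwa [degree_X_pow]
  · intro B _ φ y hφ
    rw [Polynomial.map_add, hQ B φ y hφ, Polynomial.map_sub, Polynomial.map_pow, map_X,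
      Polynomial.map_pow, map_X, add_sub_cancel]
    simp only [Ψ, Polynomial.map_prod, Polynomial.map_sub, map_X, map_C, hae]
  · intro σ
    let Γ : (MvPolynomial (Fin n) ℤ)[X] :=
      ∑ g, C (lf c Y (g * σ)) * ∏ h ∈ Finset.univ.erase g, (X - C (lf c Y h))
    have hprod : ∀ e g : Equiv.Perm (Fin n), ∏ h ∈ Finset.univ.erase g, (X - C (lf c Y (e * h))) =
        ∏ h ∈ Finset.univ.erase (e * g), (X - C (lf c Y h)) := by
      intro e g
      refine Finset.prod_equiv (Equiv.mulLeft e) ?_ ?_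
      · intro h
        simp only [Finset.mem_erase, Finset.mem_univ, and_true, ne_eq, Equiv.coe_mulLeft,
          mul_right_inj]
      · intro h _
        rw [Equiv.coe_mulLeft]
    have hΓs : ∀ e : Equiv.Perm (Fin n), Γ.map (MvPolynomial.rename (R := ℤ) e).toRingHom = Γ := by
      intro e
      simp only [Γ, Polynomial.map_sum, Polynomial.map_mul, Polynomial.map_prod,
        Polynomial.map_sub, map_X, map_C, AlgHom.toRingHom_eq_coe, RingHom.coe_coe, hren, hprod]
      have := Equiv.sum_comp (Equiv.mulLeft e)
        (fun g => C (lf c Y (g * σ)) * ∏ h ∈ Finset.univ.erase g, (X - C (lf c Y h)))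
      simp only [Equiv.coe_mulLeft, mul_assoc] at this
      exact this
    obtain ⟨G, hGd, hG⟩ := exists_symm_poly f Γ (hsymm _ hΓs)
    refine ⟨G, ?_, ?_⟩
    · have hΓ : Γ.degree < ((n.factorial : ℕ) : WithBot ℕ) := by
        refine (degree_sum_le _ _).trans_lt ((Finset.sup_lt_iff (WithBot.bot_lt_coe _)).mpr ?_)
        intro g _
        rw [← smul_eq_C_mul]
        refine (degree_smul_le _ _).trans_lt ?_
        rw [degree_prod_of_monic _ _ fun g _ => monic_X_sub_C _]
        simp only [degree_X_sub_C, Finset.sum_const, Finset.card_erase_of_mem (Finset.mem_univ g),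
          hcard, nsmul_eq_mul, mul_one]
        exact Nat.cast_lt.mpr (Nat.sub_lt n.factorial_pos one_pos)
      by_cases h0 : G = 0
      · rw [h0, natDegree_zero]; exact n.factorial_pos
      · exact (natDegree_lt_iff_degree_lt h0).mpr (hGd.trans_lt hΓ)
    · intro B _ φ y hφ
      rw [hG B φ y hφ]
      simp only [Γ, Polynomial.map_sum, Polynomial.map_mul, Polynomial.map_prod,
        Polynomial.map_sub, map_X, map_C, hae]

end resolvent
end HG

/-! ### Irreducibility of the resolvent for the full symmetric group -/

namespace HG

section galois

/-- If the Galois group has order `n!`, the `n` roots are distinct and all their permutations are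
realized. -/
lemma exists_root_labelling {K : Type*} [Field K] (q : K[X]) {n : ℕ} (hn : 2 ≤ n)
    (hdeg : q.natDegree = n) (hcard : Nat.card q.Gal = n.factorial) :
    ∃ y : Fin n → q.SplittingField, Function.Injective y ∧
      q.map (algebraMap K q.SplittingField) =
        C (algebraMap K q.SplittingField q.leadingCoeff) * ∏ i, (X - C (y i)) ∧
      ∀ e : Equiv.Perm (Fin n), ∃ τ : q.SplittingField ≃ₐ[K] q.SplittingField,
        ∀ i, τ (y i) = y (e i) := by
  classical
  let E := q.SplittingField
  have hq0 : q ≠ 0 := by rintro rfl; simp at hdeg; omega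
  have hsp := SplittingField.splits q
  let Rt := rootSet q E
  have hinj : Function.Injective (MulAction.toPermHom q.Gal Rt) := by
    rw [injective_iff_map_eq_one]
    intro τ hτ
    apply Gal.ext
    intro x hx
    have := congrArg (fun f => f ⟨x, hx⟩) hτ
    exact congrArg Subtype.val this
  have h1 : Nat.card q.Gal ≤ (Fintype.card Rt).factorial := by
    have := Nat.card_le_card_of_injective _ hinj
    rwa [Nat.card_eq_fintype_card (α := Equiv.Perm Rt), Fintype.card_perm] at this
  have hroots : (q.map (algebraMap K E)).roots.card = n := by
    rw [← hdeg, ← natDegree_map (algebraMap K E)]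
    exact hsp.natDegree_eq_card_roots.symm
  have hRt : Fintype.card Rt = (q.map (algebraMap K E)).roots.toFinset.card := by
    rw [← Fintype.card_coe]
    exact Fintype.card_congr (Equiv.refl _)
  have h2 : Fintype.card Rt ≤ n := by
    rw [hRt, ← hroots]; exact Multiset.toFinset_card_le _
  -- With fewer than `n` distinct roots the Galois group would embed in a smaller symmetric group.
  have h3 : Fintype.card Rt = n := by
    by_contra hne
    have h4 : Fintype.card Rt ≤ n - 1 := by omega
    have h5 := Nat.factorial_le h4
    obtain ⟨m, rfl⟩ : ∃ m, n = m + 1 := ⟨n - 1, by omega⟩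
    rw [hcard, Nat.factorial_succ] at h1
    rw [Nat.add_sub_cancel] at h5
    have := Nat.factorial_pos m
    nlinarith
  have hnodup : (q.map (algebraMap K E)).roots.Nodup := by
    rw [← Multiset.toFinset_card_eq_card_iff_nodup, ← hRt, h3, hroots]
  have hbij : Function.Bijective (MulAction.toPermHom q.Gal Rt) := by
    have : Finite q.Gal := Finite.of_injective _ hinj
    apply Function.Injective.bijective_of_nat_card_le hinj
    rw [Nat.card_eq_fintype_card (α := Equiv.Perm Rt), Fintype.card_perm, h3, hcard]
  let ε : Fin n ≃ Rt := (Fintype.equivFinOfCardEq h3).symm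
  refine ⟨fun i => (ε i : E), fun a b h => ε.injective (Subtype.ext h), ?_, ?_⟩
  · conv_lhs => rw [hsp.eq_prod_roots]
    rw [leadingCoeff_map]
    congr 1
    have e1 : (∏ i : Fin n, (X - C ((ε i : E)))) = ∏ x : Rt, (X - C (x : E)) :=
      Equiv.prod_comp ε (fun x : Rt => X - C (x : E))
    rw [e1]
    have e2 : (∏ x : Rt, (X - C (x : E))) =
        ∏ x ∈ (q.map (algebraMap K E)).roots.toFinset, (X - C x) := by
      have e3 := Finset.prod_coe_sort (q.map (algebraMap K E)).roots.toFinset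
        (fun x : E => X - C x)
      rw [← e3]
      refine Fintype.prod_equiv (ι := Rt) (κ := {x // x ∈ (q.map (algebraMap K E)).roots.toFinset})
        (Equiv.refl _) _ _ (fun _ => rfl)
    rw [e2, Finset.prod, Multiset.toFinset_val, hnodup.dedup]
  · intro e
    obtain ⟨τ, hτ⟩ := hbij.2 (ε.symm.trans (e.trans ε))
    refine ⟨τ, fun i => ?_⟩
    have := congrArg (fun f => f (ε i)) hτ
    simp only [Equiv.trans_apply, Equiv.symm_apply_apply] at this
    exact congrArg Subtype.val this

/-- For a suitable integer `c` the linear forms `∑ c ^ i y_{g i}` take `n!` distinct values. -/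
lemma exists_lf_injective {E : Type*} [Field E] [CharZero E] {n : ℕ} (y : Fin n → E)
    (hy : Function.Injective y) : ∃ c : ℤ, Function.Injective (lf c y) := by
  classical
  let q : Equiv.Perm (Fin n) × Equiv.Perm (Fin n) → E[X] := fun gh =>
    ∑ i : Fin n, C (y (gh.1 i) - y (gh.2 i)) * X ^ (i : ℕ)
  let s : Finset (Equiv.Perm (Fin n) × Equiv.Perm (Fin n)) := Finset.univ.filter (fun x => x.1 ≠ x.2)
  have hq : ∀ x ∈ s, q x ≠ 0 := by
    intro x hx h0
    apply (Finset.mem_filter.mp hx).2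
    ext i
    have h1 : (q x).coeff i = y (x.1 i) - y (x.2 i) := by
      simp only [q, finsetSum_coeff, coeff_C_mul, coeff_X_pow, Fin.val_inj]
      simp
    rw [h0, coeff_zero] at h1
    rw [hy (sub_eq_zero.mp h1.symm)]
  have hprod : ∏ x ∈ s, q x ≠ 0 := Finset.prod_ne_zero_iff.mpr hq
  obtain ⟨c, hc⟩ : ∃ c : ℤ, (∏ x ∈ s, q x).eval (c : E) ≠ 0 := by
    by_contra! h
    apply hprod
    apply eq_zero_of_infinite_isRoot
    refine Set.Infinite.mono ?_ (Set.infinite_range_of_injective (Int.cast_injective (α := E)))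
    rintro _ ⟨c, rfl⟩
    exact h c
  refine ⟨c, fun g h hgh => ?_⟩
  by_contra hne
  apply hc
  rw [eval_prod]
  refine Finset.prod_eq_zero (i := (g, h)) (by simp [s, hne]) ?_
  simp only [q, eval_finsetSum, eval_mul, eval_C, eval_pow, eval_X]
  rw [← sub_eq_zero, lf, lf, ← Finset.sum_sub_distrib] at hgh
  rw [← hgh]
  refine Finset.sum_congr rfl fun i _ => by ring

/-- If the automorphism group realizes every permutation of the roots `y`, the resolvent is
irreducible. -/
lemma resolvent_irreducible {K E : Type*} [Field K] [Field E] [Algebra K E] {n : ℕ} (c : ℤ)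
    (y : Fin n → E) (hinj : Function.Injective (lf c y))
    (haut : ∀ e : Equiv.Perm (Fin n), ∃ τ : E ≃ₐ[K] E, ∀ i, τ (y i) = y (e i))
    (Φ : K[X]) (hm : Φ.Monic) (hΦ : Φ.map (algebraMap K E) = ∏ g, (X - C (lf c y g))) :
    Irreducible Φ := by
  classical
  have hroot : aeval (lf c y 1) Φ = 0 := by
    rw [← eval_map_algebraMap, hΦ, eval_prod]
    exact Finset.prod_eq_zero (Finset.mem_univ 1) (by simp)
  have hyInt : IsIntegral K (lf c y 1) := ⟨Φ, hm, hroot⟩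
  have hmm := minpoly.monic hyInt
  have hroots : ∀ e, aeval (lf c y e) (minpoly K (lf c y 1)) = 0 := by
    intro e
    obtain ⟨τ, hτ⟩ := haut e
    have h1 : τ (lf c y 1) = lf c y e := by
      have := map_lf c y 1 (τ : E →+* E)
      simp only [RingHom.coe_coe] at this
      rw [this]
      simp [lf, hτ]
    rw [← h1, ← AlgEquiv.coe_toAlgHom, aeval_algHom_apply, minpoly.aeval, map_zero]
  have hdvd : Φ.map (algebraMap K E) ∣ (minpoly K (lf c y 1)).map (algebraMap K E) := by
    rw [hΦ]
    apply Finset.prod_dvd_of_coprime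
    · intro a _ b _ hab
      exact pairwise_coprime_X_sub_C hinj hab
    · intro g _
      rw [dvd_iff_isRoot, IsRoot, eval_map_algebraMap]
      exact hroots g
  have h2 : Φ ∣ minpoly K (lf c y 1) := (map_dvd_map' _).mp hdvd
  have h3 := minpoly.dvd K _ hroot
  have : Φ = minpoly K (lf c y 1) := eq_of_monic_of_associated hm hmm (associated_of_dvd_dvd h2 h3)
  rw [this]
  exact minpoly.irreducible hyInt

end galois
end HG

/-! ### Absolute irreducibility modulo large primes -/

namespace HG

section transfer

lemma coeff_swap {R : Type*} [CommRing R] (p : R[X][X]) (i j : ℕ) :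
    ((Bivariate.swap p).coeff i).coeff j = (p.coeff j).coeff i := by
  induction p using Polynomial.induction_on' with
  | add p q hp hq => simp [hp, hq]
  | monomial a f =>
    induction f using Polynomial.induction_on' with
    | add p q hp hq => simp only [map_add, coeff_add, hp, hq]
    | monomial b r =>
      rw [Bivariate.swap_monomial_monomial]
      simp only [coeff_monomial]
      split_ifs <;> simp_all [coeff_monomial]

/-- In a product of bivariate polynomials over a field the `T`-degrees of the factors are bounded
by the `T`-degree of the product. -/
lemma coeff_natDegree_le_of_mul {L : Type*} [Field L] (f g : L[X][X]) (hg : g ≠ 0) {M : ℕ}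
    (h : ∀ i, ((f * g).coeff i).natDegree ≤ M) (i : ℕ) : (f.coeff i).natDegree ≤ M := by
  by_cases hf : f = 0
  · simp [hf]
  have h1 : (Bivariate.swap (f * g)).natDegree ≤ M := by
    rw [natDegree_le_iff_coeff_eq_zero]
    intro m hm
    ext j
    rw [coeff_swap, coeff_zero]
    exact coeff_eq_zero_of_natDegree_lt (lt_of_le_of_lt (h j) hm)
  rw [map_mul, natDegree_mul (by simpa using hf) (by simpa using hg)] at h1
  rw [natDegree_le_iff_coeff_eq_zero]
  intro m hm
  rw [← coeff_swap, coeff_eq_zero_of_natDegree_lt (lt_of_le_of_lt _ hm), coeff_zero]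
  omega

section

attribute [local instance] MvPolynomial.algebraMvPolynomial

/-- An ideal of `ℤ[x]` without common zeros over the algebraic numbers contains a nonzero
integer. -/
lemma exists_int_mem {σ : Type} [Finite σ] (I : Ideal (MvPolynomial σ ℤ))
    (h : ∀ x : σ → AlgebraicClosure ℚ, ∃ q ∈ I, MvPolynomial.eval₂ (Int.castRingHom _) x q ≠ 0) :
    ∃ N : ℤ, N ≠ 0 ∧ MvPolynomial.C N ∈ I := by
  let J := I.map (algebraMap (MvPolynomial σ ℤ) (MvPolynomial σ ℚ))
  have hJ : J = ⊤ := by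
    rw [← Ideal.radical_eq_top,
      ← MvPolynomial.vanishingIdeal_zeroLocus_eq_radical (K := AlgebraicClosure ℚ)]
    have : MvPolynomial.zeroLocus (AlgebraicClosure ℚ) J = ∅ := by
      rw [Set.eq_empty_iff_forall_notMem]
      intro x hx
      obtain ⟨q, hq, hne⟩ := h x
      apply hne
      have := hx _ (Ideal.mem_map_of_mem _ hq)
      rw [← this, MvPolynomial.algebraMap_def, MvPolynomial.aeval_def, MvPolynomial.eval₂_map]
      congr 1
    rw [this, MvPolynomial.vanishingIdeal_empty]
  have h1 : algebraMap (MvPolynomial σ ℤ) (MvPolynomial σ ℚ) 1 ∈ J := by rw [hJ]; trivial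
  rw [IsLocalization.algebraMap_mem_map_algebraMap_iff
    ((nonZeroDivisors ℤ).map (MvPolynomial.C (σ := σ)))] at h1
  obtain ⟨_, ⟨N, hN, rfl⟩, hm⟩ := h1
  exact ⟨N, nonZeroDivisors.ne_zero hN, by simpa using hm⟩

end

/-- The generic polynomial that is monic of degree `d` in the outer variable, with coefficients of
degree at most `M`. -/
noncomputable def genMonic {R : Type*} [CommRing R] (d M : ℕ) (a : ℕ → ℕ → R) : R[X][X] :=
  X ^ d + ∑ i ∈ Finset.range d, C (∑ j ∈ Finset.range (M + 1), C (a i j) * X ^ j) * X ^ i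

lemma genMonic_map {R S : Type*} [CommRing R] [CommRing S] (φ : R →+* S) (d M : ℕ)
    (a : ℕ → ℕ → R) :
    (genMonic d M a).map (mapRingHom φ) = genMonic d M (fun i j => φ (a i j)) := by
  simp [genMonic, Polynomial.map_sum]

lemma genMonic_eq {R : Type*} [CommRing R] (d M : ℕ) (f : R[X][X]) (hf : f.Monic)
    (hd : f.natDegree = d) (hM : ∀ i, (f.coeff i).natDegree ≤ M) :
    genMonic d M (fun i j => (f.coeff i).coeff j) = f := by
  conv_rhs => rw [f.as_sum_range_C_mul_X_pow, hd, Finset.sum_range_succ, ← hd, hf.coeff_natDegree,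
    hd, C_1, one_mul, add_comm]
  rw [genMonic]
  congr 1
  refine Finset.sum_congr rfl fun i _ => ?_
  rw [← as_sum_range_C_mul_X_pow' _ (Nat.lt_succ_of_le (hM i))]

lemma genMonic_spec {R : Type*} [CommRing R] [Nontrivial R] (d M : ℕ) (a : ℕ → ℕ → R) :
    (genMonic d M a).Monic ∧ (genMonic d M a).natDegree = d := by
  have h : (∑ i ∈ Finset.range d, C (∑ j ∈ Finset.range (M + 1), C (a i j) * X ^ j) * X ^ i :
      R[X][X]).degree < d := by
    refine (degree_sum_le _ _).trans_lt ((Finset.sup_lt_iff (WithBot.bot_lt_coe d)).mpr ?_)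
    intro i hi
    refine (degree_C_mul_X_pow_le _ _).trans_lt ?_
    exact Nat.cast_lt.mpr (Finset.mem_range.mp hi)
  refine ⟨monic_X_pow_add h, ?_⟩
  rw [genMonic]
  apply natDegree_eq_of_degree_eq_some
  rw [degree_add_eq_left_of_degree_lt (by rwa [degree_X_pow]), degree_X_pow]

/-- Absolute irreducibility is inherited by almost all reductions. The monic factorizations with
factors of given degree are the points of an affine scheme over `ℤ`; it has no point over `ℚ̄`, so
by the Nullstellensatz its ideal contains a nonzero integer. -/
theorem irreducible_transfer (Φ : ℤ[X][X]) (hm : Φ.Monic)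
    (hirr : Irreducible (Φ.map (mapRingHom (Int.castRingHom (AlgebraicClosure ℚ))))) :
    ∃ N₀ : ℤ, N₀ ≠ 0 ∧ ∀ (L : Type) [Field L], (N₀ : L) ≠ 0 →
      Irreducible (Φ.map (mapRingHom (Int.castRingHom L))) := by
  classical
  let N := Φ.natDegree
  obtain ⟨M, hM⟩ : ∃ M, ∀ i, (Φ.coeff i).natDegree ≤ M := by
    refine ⟨Φ.support.sup fun i => (Φ.coeff i).natDegree, fun i => ?_⟩
    by_cases hi : i ∈ Φ.support
    · exact Finset.le_sup (f := fun i => (Φ.coeff i).natDegree) hi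
    · rw [notMem_support_iff.mp hi]; simp
  have hΦ1 : Φ ≠ 1 := by
    rintro rfl
    simp at hirr
  have hNpos : 0 < N := Nat.pos_of_ne_zero fun h => hΦ1 (hm.natDegree_eq_zero.mp h)
  have hdegL : ∀ (L : Type) [Field L],
      (Φ.map (mapRingHom (Int.castRingHom L))).natDegree = N := fun L _ => hm.natDegree_map _
  have key : ∀ d ∈ Finset.Ioc 0 (N / 2), ∃ N₀ : ℤ, N₀ ≠ 0 ∧ ∀ (L : Type) [Field L] (f g : L[X][X]),
      f.Monic → g.Monic → f * g = Φ.map (mapRingHom (Int.castRingHom L)) → g.natDegree = d →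
      (N₀ : L) = 0 := by
    intro d hd
    rw [Finset.mem_Ioc] at hd
    let σ := Bool × Fin (N + 1) × Fin (M + 1)
    let a : Bool → ℕ → ℕ → MvPolynomial σ ℤ := fun b i j =>
      MvPolynomial.X (b, Fin.ofNat (N + 1) i, Fin.ofNat (M + 1) j)
    let f₀ := genMonic (N - d) M (a false)
    let g₀ := genMonic d M (a true)
    let Δ := f₀ * g₀ - Φ.map (mapRingHom (Int.castRingHom (MvPolynomial σ ℤ)))
    let I : Ideal (MvPolynomial σ ℤ) :=
      Ideal.span (Set.range fun ij : ℕ × ℕ => (Δ.coeff ij.1).coeff ij.2)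
    have hΔ : ∀ {L : Type} [Field L] (φ : MvPolynomial σ ℤ →+* L),
        Δ.map (mapRingHom φ) = f₀.map (mapRingHom φ) * g₀.map (mapRingHom φ) -
          Φ.map (mapRingHom (Int.castRingHom L)) := by
      intro L _ φ
      simp only [Δ, Polynomial.map_sub, Polynomial.map_mul, Polynomial.map_map, mapRingHom_comp]
      congr 3
      exact RingHom.ext_int _ _
    obtain ⟨N₀, hN₀, hmem⟩ := exists_int_mem I (by
      intro x
      by_contra! hx
      let φ := MvPolynomial.eval₂Hom (Int.castRingHom (AlgebraicClosure ℚ)) x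
      have h0 : Δ.map (mapRingHom φ) = 0 := by
        ext i j
        simp only [coeff_map, coe_mapRingHom, coeff_zero]
        exact hx _ (Ideal.subset_span ⟨(i, j), rfl⟩)
      rw [hΔ, sub_eq_zero] at h0
      have hmap := hm.map (mapRingHom (Int.castRingHom (AlgebraicClosure ℚ)))
      rw [hmap.irreducible_iff_natDegree'] at hirr
      simp only [f₀, g₀, genMonic_map] at h0
      refine hirr.2 _ _ (genMonic_spec _ _ _).1 (genMonic_spec _ _ _).1 h0 ?_
      rw [(genMonic_spec _ _ _).2, hdegL, Finset.mem_Ioc]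
      exact hd)
    refine ⟨N₀, hN₀, fun L _ f g hf hg hfg hgd => ?_⟩
    have hfd : f.natDegree = N - d := by
      have := congrArg natDegree hfg
      rw [hf.natDegree_mul hg, hdegL, hgd] at this
      omega
    have hML : ∀ i, ((f * g).coeff i).natDegree ≤ M := by
      intro i
      rw [hfg, coeff_map]
      exact natDegree_map_le.trans (hM i)
    have hMf := coeff_natDegree_le_of_mul f g hg.ne_zero hML
    have hMg := coeff_natDegree_le_of_mul g f hf.ne_zero (by rwa [mul_comm])
    let x : σ → L := fun s => if s.1 then (g.coeff s.2.1).coeff s.2.2 else (f.coeff s.2.1).coeff s.2.2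
    let φ := MvPolynomial.eval₂Hom (Int.castRingHom L) x
    have hgen : ∀ (h : L[X][X]) (b : Bool) (e : ℕ), e ≤ N → h = (if b then g else f) → h.Monic →
        h.natDegree = e → (∀ i, (h.coeff i).natDegree ≤ M) →
        (genMonic e M (a b)).map (mapRingHom φ) = h := by
      intro h b e he hb hhm hhd hhM
      rw [genMonic_map]
      conv_rhs => rw [← genMonic_eq e M h hhm hhd hhM]
      rw [genMonic, genMonic]
      congr 1
      refine Finset.sum_congr rfl fun i hi => ?_
      congr 2
      refine Finset.sum_congr rfl fun j hj => ?_
      congr 2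
      rw [Finset.mem_range] at hi hj
      have hi' : i % (N + 1) = i := Nat.mod_eq_of_lt (by omega)
      have hj' : j % (M + 1) = j := Nat.mod_eq_of_lt (by omega)
      cases b <;> simp [a, φ, x, hb, Fin.ofNat, hi', hj']
    have hf₀ : f₀.map (mapRingHom φ) = f := hgen f false _ (Nat.sub_le _ _) rfl hf hfd hMf
    have hg₀ : g₀.map (mapRingHom φ) = g := hgen g true _ (by omega) rfl hg hgd hMg
    have h0 : Δ.map (mapRingHom φ) = 0 := by rw [hΔ, hf₀, hg₀, hfg, sub_self]
    have hI : I ≤ RingHom.ker φ := by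
      rw [Ideal.span_le]
      rintro _ ⟨⟨i, j⟩, rfl⟩
      have := congrArg (fun q => (q.coeff i).coeff j) h0
      simp only [coeff_map, coe_mapRingHom, coeff_zero] at this
      exact this
    have := hI hmem
    simpa [RingHom.mem_ker, φ] using this
  choose! N₁ hN₁ hN₁' using key
  refine ⟨∏ d ∈ Finset.Ioc 0 (N / 2), N₁ d, Finset.prod_ne_zero_iff.mpr hN₁, fun L _ hL => ?_⟩
  rw [(hm.map _).irreducible_iff_natDegree']
  refine ⟨fun h => ?_, fun f g hf hg hfg hgd => ?_⟩
  · have := hdegL L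
    rw [h, natDegree_one] at this
    omega
  · rw [hdegL] at hgd
    apply hL
    rw [Int.cast_prod]
    exact Finset.prod_eq_zero hgd (hN₁' _ hgd L f g hf hg hfg rfl)

end transfer
end HG

/-! ### Integral models and specialization -/

namespace HG

section prep

lemma exists_int_model (P : ℚ[X][X]) : ∃ (a : ℤ) (P₁ : ℤ[X][X]), a ≠ 0 ∧
    P₁.map (mapRingHom (Int.castRingHom ℚ)) = C (C (a : ℚ)) * P := by
  have h1 : ∀ q : ℚ[X], ∃ (a : ℤ) (q₁ : ℤ[X]), a ≠ 0 ∧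
      q₁.map (Int.castRingHom ℚ) = C (a : ℚ) * q := by
    intro q
    obtain ⟨b, hb, h⟩ := IsLocalization.integerNormalization_spec (nonZeroDivisors ℤ) q
    refine ⟨b, _, nonZeroDivisors.ne_zero hb, h.trans ?_⟩
    rw [← Polynomial.smul_eq_C_mul, Int.cast_smul_eq_zsmul]
  induction P using Polynomial.induction_on' with
  | add p q hp hq =>
    obtain ⟨a, p₁, ha, hp⟩ := hp
    obtain ⟨b, q₁, hb, hq⟩ := hq
    refine ⟨a * b, C (C b) * p₁ + C (C a) * q₁, mul_ne_zero ha hb, ?_⟩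
    rw [Polynomial.map_add, Polynomial.map_mul, Polynomial.map_mul, hp, hq]
    simp only [map_C, coe_mapRingHom, Int.cast_mul, C_mul, Int.coe_castRingHom]
    ring
  | monomial i q =>
    obtain ⟨a, q₁, ha, hq⟩ := h1 q
    refine ⟨a, monomial i q₁, ha, ?_⟩
    rw [map_monomial, coe_mapRingHom, hq, C_mul_monomial]

lemma scaleRoots_prod {B : Type*} [Field B] {ι : Type*} (s : Finset ι) (y : ι → B) (a : B) :
    (∏ i ∈ s, (X - C (y i))).scaleRoots a = ∏ i ∈ s, (X - C (a * y i)) := by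
  classical
  induction s using Finset.induction_on with
  | empty => simp
  | insert i s hi ih =>
    rw [Finset.prod_insert hi, Finset.prod_insert hi, mul_scaleRoots_of_noZeroDivisors, ih,
      X_sub_C_scaleRoots, mul_comm a]

/-- Specializations of the integral normalization: its roots are those of `p`, multiplied by the
leading coefficient. -/
lemma integralNormalization_map {R B : Type*} [CommRing R] [IsDomain R] [Field B] (p : R[X])
    (ψ : R →+* B)
    (hA : ψ p.leadingCoeff ≠ 0) {n : ℕ} (y : Fin n → B) (r : B)
    (hy : p.map ψ = C r * ∏ i, (X - C (y i))) :
    p.integralNormalization.map ψ = ∏ i, (X - C (ψ p.leadingCoeff * y i)) := by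
  have hr : r = ψ p.leadingCoeff := by
    rw [← leadingCoeff_map_of_leadingCoeff_ne_zero ψ hA, hy, leadingCoeff_mul, leadingCoeff_C,
      leadingCoeff_prod]
    simp
  have h1 := congrArg (Polynomial.map ψ) (integralNormalization_mul_C_leadingCoeff p)
  rw [Polynomial.map_mul, map_C, map_scaleRoots _ _ _ hA, hy, mul_scaleRoots_of_noZeroDivisors,
    scaleRoots_C, scaleRoots_prod, ← hr, mul_comm] at h1
  rw [← hr] at hA ⊢
  exact mul_left_cancel₀ (C_ne_zero.mpr hA) h1

/-- The Bézout identity for a separable polynomial, with cleared denominators: `δ` plays the role of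
the discriminant. -/
lemma exists_bezout {R : Type*} [CommRing R] [IsDomain R] (Φ : R[X]) {E : Type*} [Field E]
    (ψ : R →+* E) (hψ : Function.Injective ψ) (hsep : (Φ.map ψ).Separable) :
    ∃ (δ : R) (U V : R[X]), δ ≠ 0 ∧ U * Φ + V * derivative Φ = C δ := by
  let K := FractionRing R
  let j : K →+* E := IsFractionRing.lift hψ
  have hj : j.comp (algebraMap R K) = ψ := by
    ext x; exact IsFractionRing.lift_algebraMap hψ x
  have h1 : (Φ.map (algebraMap R K)).Separable := by
    rw [← hj, ← Polynomial.map_map] at hsep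
    exact (separable_map j).mp hsep
  obtain ⟨U, V, hUV⟩ := h1
  obtain ⟨a, ha, hU⟩ := IsLocalization.integerNormalization_spec (nonZeroDivisors R) U
  obtain ⟨b, hb, hV⟩ := IsLocalization.integerNormalization_spec (nonZeroDivisors R) V
  refine ⟨a * b, C b * IsLocalization.integerNormalization (nonZeroDivisors R) U,
    C a * IsLocalization.integerNormalization (nonZeroDivisors R) V, mul_ne_zero (nonZeroDivisors.ne_zero ha)
    (nonZeroDivisors.ne_zero hb), map_injective _ (IsFractionRing.injective R K) ?_⟩
  rw [Polynomial.map_add, Polynomial.map_mul, Polynomial.map_mul, Polynomial.map_mul,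
    Polynomial.map_mul, hU, hV, ← derivative_map]
  simp only [map_C, Algebra.smul_def, map_mul, Polynomial.map_mul]
  have e : ∀ r : R, algebraMap R K[X] r = C (algebraMap R K r) := fun r => rfl
  rw [e, e]
  linear_combination (C (algebraMap R K a) * C (algebraMap R K b)) * hUV

/-- Evaluation of the inner variable at `t`. -/
noncomputable def ev {k : Type*} [CommRing k] (t : k) : ℤ[X] →+* k :=
  eval₂RingHom (Int.castRingHom k) t

lemma ev_natCast_comp {k k' : Type*} [CommRing k] [CommRing k'] (φ : k →+* k') (t : k) :
    φ.comp (ev t) = ev (φ t) := by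
  ext <;> simp [ev]

lemma qev_map {p : ℕ} [Fact p.Prime] {k : Type*} [Field k] [Algebra (ZMod p) k] (t z : k)
    (H : ℤ[X][X]) :
    qev t z (H.map (mapRingHom (Int.castRingHom (ZMod p)))) = (H.map (ev t)).eval z := by
  rw [eval_map, qev, coe_eval₂RingHom, eval₂_map]
  congr 1
  ext <;> simp [ev]

lemma card_nonroots (δ : ℤ[X]) (p : ℕ) [Fact p.Prime] (hp : δ.leadingCoeff.natAbs < p)
    (hδ : δ ≠ 0) :
    p ≤ (Finset.univ.filter fun t : ZMod p => ev t δ ≠ 0).card + δ.natDegree := by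
  classical
  have h0 : δ.map (Int.castRingHom (ZMod p)) ≠ 0 := by
    intro h
    have h1 := congrArg (fun q => q.coeff δ.natDegree) h
    simp only [coeff_map, coeff_natDegree, coeff_zero, eq_intCast] at h1
    rw [ZMod.intCast_zmod_eq_zero_iff_dvd] at h1
    rw [← Int.dvd_natAbs, Int.natCast_dvd_natCast] at h1
    have := Nat.le_of_dvd (Int.natAbs_pos.mpr (leadingCoeff_ne_zero.mpr hδ)) h1
    omega
  have h1 := Finset.card_filter_add_card_filter_not (s := (Finset.univ : Finset (ZMod p)))
    (fun t => ev t δ ≠ 0)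
  rw [Finset.card_univ, ZMod.card] at h1
  have h2 : (Finset.univ.filter fun t : ZMod p => ¬ ev t δ ≠ 0).card ≤ δ.natDegree := by
    calc _ ≤ (δ.map (Int.castRingHom (ZMod p))).roots.toFinset.card := by
          apply Finset.card_le_card
          intro t ht
          rw [Finset.mem_filter, not_not] at ht
          rw [Multiset.mem_toFinset, mem_roots h0, IsRoot, eval_map]
          exact ht.2
      _ ≤ _ := (Multiset.toFinset_card_le _).trans ((card_roots' _).trans natDegree_map_le)
  omega

lemma wt_map {F : Type*} [Field F] (D N : ℕ) (H : ℤ[X][X]) (hH : (H.Monic ∧ H.natDegree = N) ∨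
      H.natDegree < N)
    (hD : ∀ i, (H.coeff i).natDegree ≤ D) :
    Wt D (D * N) (H.map (mapRingHom (Int.castRingHom F))) := by
  intro i j hij
  rw [coeff_map, coe_mapRingHom, coeff_map] at hij
  have hne : (H.coeff i).coeff j ≠ 0 := by intro h; simp [h] at hij
  have hj : j ≤ D := (le_natDegree_of_ne_zero hne).trans (hD i)
  have hi : i ≤ H.natDegree := le_natDegree_of_ne_zero (by intro h; simp [h] at hne)
  by_cases hiN : i < N
  · nlinarith
  · rcases hH with ⟨hm, hd⟩ | hd
    · have : i = N := by omega
      subst this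
      have h1 : H.coeff i = 1 := by rw [← hd]; exact hm
      rw [h1, coeff_one] at hne
      have : j = 0 := by by_contra h; simp [h] at hne
      omega
    · omega

lemma exists_coeff_bound (H : ℤ[X][X]) : ∃ D, ∀ i, (H.coeff i).natDegree ≤ D := by
  refine ⟨H.support.sup fun i => (H.coeff i).natDegree, fun i => ?_⟩
  by_cases hi : i ∈ H.support
  · exact Finset.le_sup (f := fun i => (H.coeff i).natDegree) hi
  · rw [notMem_support_iff.mp hi]; simp

lemma exists_roots_fin {k : Type*} [Field k] [IsAlgClosed k] (q : k[X]) :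
    ∃ y : Fin q.natDegree → k, q = C q.leadingCoeff * ∏ i, (X - C (y i)) := by
  have hs := IsAlgClosed.splits q
  have hc := hs.natDegree_eq_card_roots
  have hl : q.roots.toList.length = q.natDegree := by rw [Multiset.length_toList, hc]
  refine ⟨fun i => q.roots.toList.get (i.cast hl.symm), ?_⟩
  conv_lhs => rw [hs.eq_prod_roots]
  congr 1
  have e1 : ∀ l : List k, ∏ i : Fin l.length, (X - C (l.get i)) =
      (l.map fun a => X - C a).prod := by
    intro l
    rw [← List.prod_ofFn]
    congr 1
    apply List.ext_get <;> simp
  have e2 : (q.roots.map fun a => X - C a).prod = (q.roots.toList.map fun a => X - C a).prod := by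
    rw [← Multiset.prod_coe, ← Multiset.map_coe, Multiset.coe_toList]
  rw [e2, ← e1]
  exact (Equiv.prod_comp (finCongr hl.symm) (fun i => X - C (q.roots.toList.get i))).symm

end prep
end HG

/-! ### Prescribed Frobenius for specializations over `𝔽_p` -/

namespace HG

section chebotarev

/-- The structure map from `ℤ[T]` to the rational function field over the algebraic numbers. -/
noncomputable def psi : ℤ[X] →+* RatFunc (AlgebraicClosure ℚ) :=
  (algebraMap (AlgebraicClosure ℚ)[X] (RatFunc (AlgebraicClosure ℚ))).comp
    (mapRingHom (Int.castRingHom (AlgebraicClosure ℚ)))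

lemma psi_injective : Function.Injective psi :=
  (IsFractionRing.injective (AlgebraicClosure ℚ)[X] (RatFunc (AlgebraicClosure ℚ))).comp
    (map_injective _ (RingHom.injective_int _))

/-- The resolvent of (the integral normalization of) `P₁`: it is monic with coefficients in `ℤ[T]`,
absolutely irreducible away from the prime divisors of `N₀`, and separable where `δ` does not
vanish. -/
lemma exists_resolvent_data {n : ℕ} (hn : 2 ≤ n) (P₁ : ℤ[X][X])
    (q : (RatFunc (AlgebraicClosure ℚ))[X]) (u : RatFunc (AlgebraicClosure ℚ))
    (hq : P₁.map psi = C u * q)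
    (hdeg : q.natDegree = n) (hP : P₁ ≠ 0) (hcard : Nat.card q.Gal = n.factorial) :
    ∃ (c : ℤ) (N₀ : ℤ) (δ : ℤ[X]) (Φ U V : ℤ[X][X]), N₀ ≠ 0 ∧ δ ≠ 0 ∧
      U * Φ + V * derivative Φ = C δ ∧ Φ.Monic ∧ Φ.natDegree = n.factorial ∧
      (∀ (L : Type) [Field L], (N₀ : L) ≠ 0 →
        Irreducible (Φ.map (mapRingHom (Int.castRingHom L)))) ∧
      (∀ (B : Type) [CommRing B] (φ : ℤ[X] →+* B) (y : Fin n → B),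
        P₁.integralNormalization.map φ = ∏ i, (X - C (y i)) →
          Φ.map φ = ∏ g, (X - C (lf c y g))) ∧
      ∀ σ : Equiv.Perm (Fin n), ∃ G : ℤ[X][X], G.natDegree < n.factorial ∧
        ∀ (B : Type) [CommRing B] (φ : ℤ[X] →+* B) (y : Fin n → B),
          P₁.integralNormalization.map φ = ∏ i, (X - C (y i)) →
          G.map φ = ∑ g, C (lf c y (g * σ)) * ∏ h ∈ Finset.univ.erase g, (X - C (lf c y h)) := by
  classical
  obtain ⟨y, hy, hqy, haut⟩ := exists_root_labelling q hn hdeg hcard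
  let ψE : ℤ[X] →+* q.SplittingField := (algebraMap _ q.SplittingField).comp psi
  have hψE : Function.Injective ψE :=
    (RingHom.injective (algebraMap (RatFunc (AlgebraicClosure ℚ)) q.SplittingField)).comp psi_injective
  have hA : ψE P₁.leadingCoeff ≠ 0 := by
    rw [Ne, map_eq_zero_iff ψE hψE]; exact leadingCoeff_ne_zero.mpr hP
  let y' : Fin n → q.SplittingField := fun i => ψE P₁.leadingCoeff * y i
  have hy' : Function.Injective y' := fun a b h => hy (mul_left_cancel₀ hA h)
  have haut' : ∀ e : Equiv.Perm (Fin n), ∃ τ : q.SplittingField ≃ₐ[RatFunc (AlgebraicClosure ℚ)]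
      q.SplittingField, ∀ i, τ (y' i) = y' (e i) := by
    intro e
    obtain ⟨τ, hτ⟩ := haut e
    refine ⟨τ, fun i => ?_⟩
    change τ (algebraMap _ _ (psi P₁.leadingCoeff) * y i) = _
    rw [map_mul, hτ, AlgEquiv.commutes]
    rfl
  have hf : P₁.integralNormalization.map ψE = ∏ i, (X - C (y' i)) := by
    refine integralNormalization_map P₁ ψE hA y
      (algebraMap _ _ u * algebraMap _ _ q.leadingCoeff) ?_
    rw [← Polynomial.map_map, hq, Polynomial.map_mul, hqy, map_C, C_mul, mul_assoc]
  obtain ⟨c, hc⟩ := exists_lf_injective y' hy'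
  obtain ⟨Φ, hm, hN, h1, h2⟩ := exists_resolvent (n := n) P₁.integralNormalization c
  have hΦE := h1 _ ψE y' hf
  have hirr0 : Irreducible (Φ.map psi) := by
    refine resolvent_irreducible c y' hc haut' _ (hm.map _) ?_
    rw [Polynomial.map_map]; exact hΦE
  have hirr : Irreducible (Φ.map (mapRingHom (Int.castRingHom (AlgebraicClosure ℚ)))) := by
    rw [(hm.map _).irreducible_iff_irreducible_map_fraction_map
      (K := RatFunc (AlgebraicClosure ℚ)), Polynomial.map_map]
    exact hirr0
  obtain ⟨N₀, hN₀, htr⟩ := irreducible_transfer Φ hm hirr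
  obtain ⟨δ, U, V, hδ, hUV⟩ := exists_bezout Φ ψE hψE (by
    rw [hΦE, separable_prod_X_sub_C_iff]; exact hc)
  exact ⟨c, N₀, δ, Φ, U, V, hN₀, hδ, hUV, hm, hN, htr, h1, h2⟩

lemma lf_mul_perm {B : Type*} [CommRing B] {n : ℕ} (c : ℤ) (y : Fin n → B)
    (π g : Equiv.Perm (Fin n)) : lf c (fun i => y (π i)) g = lf c y (π * g) := rfl

lemma injective_of_lf {B : Type*} [CommRing B] {n : ℕ} (c : ℤ) (y : Fin n → B)
    (h : Function.Injective (lf c y)) : Function.Injective y := by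
  classical
  intro i j hij
  by_contra hne
  have h1 : lf c y (Equiv.swap i j) = lf c y 1 := by
    refine Finset.sum_congr rfl fun k _ => ?_
    congr 1
    rcases eq_or_ne k i with rfl | hki
    · simp [hij]
    · rcases eq_or_ne k j with rfl | hkj
      · simp [hij]
      · rw [Equiv.swap_apply_of_ne_of_ne hki hkj]; rfl
  exact hne (Equiv.swap_eq_one_iff.mp (h h1))

/-- Frobenius permutes the roots of a polynomial with coefficients in the prime field. -/
lemma exists_frob_perm {p : ℕ} [Fact p.Prime] {k : Type*} [Field k] [Algebra (ZMod p) k] {n : ℕ}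
    (q : (ZMod p)[X]) (y : Fin n → k) (hy : Function.Injective y) (r : k) (hr : r ≠ 0)
    (hq : q.map (algebraMap (ZMod p) k) = C r * ∏ i, (X - C (y i))) :
    ∃ π : Equiv.Perm (Fin n), ∀ i, y i ^ p = y (π i) := by
  have : CharP k p := charP_of_injective_algebraMap (algebraMap (ZMod p) k).injective p
  have h1 : ∀ i, ∃ j, y i ^ p = y j := by
    intro i
    have h0 : (q.map (algebraMap (ZMod p) k)).eval (y i) = 0 := by
      rw [hq, eval_mul, eval_prod, Finset.prod_eq_zero (Finset.mem_univ i) (by simp), mul_zero]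
    have h2 : (q.map (algebraMap (ZMod p) k)).eval (y i ^ p) = 0 := by
      have h3 : frobenius k p ((q.map (algebraMap (ZMod p) k)).eval (y i)) = 0 := by
        rw [h0, map_zero]
      rw [eval_map, hom_eval₂] at h3
      rw [eval_map, ← h3, frobenius_def]
      congr 1
      exact Subsingleton.elim _ _
    rw [hq, eval_mul, eval_C, eval_prod, mul_eq_zero, or_iff_right hr,
      Finset.prod_eq_zero_iff] at h2
    obtain ⟨j, _, hj⟩ := h2
    exact ⟨j, by simpa [sub_eq_zero] using hj⟩
  choose π hπ using h1
  have hinj : Function.Injective π := by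
    intro i j hij
    apply hy
    apply frobenius_inj k p
    rw [frobenius_def, frobenius_def, hπ, hπ, hij]
  exact ⟨Equiv.ofBijective π (Finite.injective_iff_bijective.mp hinj), hπ⟩

lemma eval_sum_erase {k ι : Type*} [Field k] [Fintype ι] [DecidableEq ι] (z w : ι → k) (g₀ : ι) :
    (∑ g, C (w g) * ∏ h ∈ Finset.univ.erase g, (X - C (z h))).eval (z g₀) =
      w g₀ * ∏ h ∈ Finset.univ.erase g₀, (z g₀ - z h) := by
  rw [eval_finsetSum, Finset.sum_eq_single g₀]
  · simp [eval_prod]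
  · intro g _ hg
    rw [eval_mul, eval_prod, Finset.prod_eq_zero (i := g₀), mul_zero]
    · simp [hg.symm]
    · simp
  · simp

/-- For all large `p`, every permutation occurs as the Frobenius of a specialization of `P₁`
modulo `p`. Let `N = n!`. The `N` points of the resolvent curve above a good `t ∈ 𝔽_p` are
distributed among the `N` curve automorphisms `z_g ↦ z_{g σ}` according to the action of Frobenius.
By `stepanov`, each `σ` receives at most `(1 + 1 / N) p` points, while there are about `N p` points
altogether, so none of the `σ` can be missed. -/
theorem exists_frobenius {n : ℕ} (hn : 2 ≤ n) (P₁ : ℤ[X][X])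
    (q : (RatFunc (AlgebraicClosure ℚ))[X]) (u : RatFunc (AlgebraicClosure ℚ))
    (hq : P₁.map psi = C u * q) (hdeg₁ : P₁.natDegree = n)
    (hdeg : q.natDegree = n) (hcard : Nat.card q.Gal = n.factorial) :
    ∃ m : ℕ, ∀ (p : ℕ) [Fact p.Prime], m < p → ∀ σ : Equiv.Perm (Fin n),
      ∃ (t : ZMod p) (y : Fin n → AlgebraicClosure (ZMod p)), Function.Injective y ∧
        ev t P₁.leadingCoeff ≠ 0 ∧
        (P₁.map (ev t)).map (algebraMap (ZMod p) (AlgebraicClosure (ZMod p))) =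
          C (algebraMap _ _ (ev t P₁.leadingCoeff)) * ∏ i, (X - C (y i)) ∧
        ∀ i, y i ^ p = y (σ i) := by
  classical
  have hP : P₁ ≠ 0 := by rintro rfl; simp at hdeg₁; omega
  obtain ⟨c, N₀, δ, Φ, U, V, hN₀, hδ, hUV, hm, hN, htr, hΦ, hG⟩ :=
    exists_resolvent_data hn P₁ q u hq hdeg hP hcard
  choose G hGd hG using hG
  set N := n.factorial with hNdef
  have hNpos : 0 < N := n.factorial_pos
  obtain ⟨D₀, hD₀⟩ := exists_coeff_bound Φ
  choose D₁ hD₁ using fun σ => exists_coeff_bound (G σ)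
  let D := D₀ + ∑ σ, D₁ σ
  have hDΦ : ∀ i, (Φ.coeff i).natDegree ≤ D := fun i => (hD₀ i).trans (Nat.le_add_right _ _)
  have hDG : ∀ σ i, ((G σ).coeff i).natDegree ≤ D := fun σ i => (hD₁ σ i).trans
    ((Finset.single_le_sum (f := D₁) (fun _ _ => Nat.zero_le _) (Finset.mem_univ σ)).trans
      (Nat.le_add_left _ _))
  obtain ⟨m, hst⟩ := stepanov N D N hNpos
  let δ' := δ * P₁.leadingCoeff
  have hδ' : δ' ≠ 0 := mul_ne_zero hδ (leadingCoeff_ne_zero.mpr hP)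
  refine ⟨m + N₀.natAbs + δ'.leadingCoeff.natAbs + N ^ 2 * δ'.natDegree, fun p _ hp σ₀ => ?_⟩
  let k := AlgebraicClosure (ZMod p)
  have : CharP k p := charP_of_injective_algebraMap (algebraMap (ZMod p) k).injective p
  by_contra! hno
  -- The good `t`: the degree does not drop and the specialized resolvent is separable.
  let 𝒯 := Finset.univ.filter fun t : ZMod p => ev t δ' ≠ 0
  have h𝒯 : p ≤ 𝒯.card + δ'.natDegree := card_nonroots δ' p (by omega) hδ'
  have hdata : ∀ t ∈ 𝒯, ∃ (z : Equiv.Perm (Fin n) → k) (π : Equiv.Perm (Fin n)),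
      Function.Injective z ∧
      (∀ g, (Φ.map (ev (algebraMap (ZMod p) k t))).eval (z g) = 0) ∧
      (∀ g, ((derivative Φ).map (ev (algebraMap (ZMod p) k t))).eval (z g) ≠ 0) ∧
      (∀ σ g, ((G σ).map (ev (algebraMap (ZMod p) k t))).eval (z g) =
        z (g * σ) * ((derivative Φ).map (ev (algebraMap (ZMod p) k t))).eval (z g)) ∧
      (∀ g, z g ^ p = z (π * g)) ∧ ∀ g, π * g ≠ g * σ₀ := by
    intro t ht
    have ht' : ev t δ * ev t P₁.leadingCoeff ≠ 0 := by
      rw [← map_mul]; exact (Finset.mem_filter.mp ht).2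
    have hA := right_ne_zero_of_mul ht'
    have hδt := left_ne_zero_of_mul ht'
    have hev : ∀ a, ev (algebraMap (ZMod p) k t) a = algebraMap (ZMod p) k (ev t a) := by
      intro a
      rw [← ev_natCast_comp]; rfl
    set E := ev (algebraMap (ZMod p) k t) with hE
    have hAk : E P₁.leadingCoeff ≠ 0 := by
      rw [hev]; exact (_root_.map_ne_zero _).mpr hA
    have hlead := leadingCoeff_map_of_leadingCoeff_ne_zero E hAk
    have hdegk : (P₁.map E).natDegree = n := by
      rw [natDegree_map_of_leadingCoeff_ne_zero E hAk, hdeg₁]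
    obtain ⟨y, hy⟩ : ∃ y : Fin n → k, P₁.map E = C (E P₁.leadingCoeff) * ∏ i, (X - C (y i)) := by
      have := exists_roots_fin (P₁.map E)
      rwa [hdegk, hlead] at this
    have hf := integralNormalization_map P₁ E hAk y _ hy
    let y' : Fin n → k := fun i => E P₁.leadingCoeff * y i
    have hΦt : Φ.map E = ∏ g, (X - C (lf c y' g)) := hΦ k E y' hf
    have hbez : U.map E * Φ.map E + V.map E * (derivative Φ).map E = C (E δ) := by
      have := congrArg (Polynomial.map E) hUV
      simpa only [Polynomial.map_add, Polynomial.map_mul, map_C] using this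
    have hEδ : E δ ≠ 0 := by rw [hev]; exact (_root_.map_ne_zero _).mpr hδt
    have hzinj : Function.Injective (lf c y') := by
      rw [← separable_prod_X_sub_C_iff, ← hΦt]
      refine ⟨C (E δ)⁻¹ * U.map E, C (E δ)⁻¹ * V.map E, ?_⟩
      rw [derivative_map, mul_assoc, mul_assoc, ← mul_add, hbez, ← C_mul, inv_mul_cancel₀ hEδ, C_1]
    have hroot : ∀ g, (Φ.map E).eval (lf c y' g) = 0 := by
      intro g
      rw [hΦt, eval_prod]
      exact Finset.prod_eq_zero (Finset.mem_univ g) (by simp)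
    have hder : ∀ g, ((derivative Φ).map E).eval (lf c y' g) =
        ∏ h ∈ Finset.univ.erase g, (lf c y' g - lf c y' h) := by
      intro g
      have e1 : (derivative Φ).map E =
          ∑ g, C (1 : k) * ∏ h ∈ Finset.univ.erase g, (X - C (lf c y' h)) := by
        rw [← derivative_map, hΦt, derivative_prod_finset]
        refine Finset.sum_congr rfl fun i _ => ?_
        simp
      rw [e1, eval_sum_erase (lf c y') (fun _ => 1), one_mul]
    have hyinj := injective_of_lf c y' hzinj
    have hyinj0 : Function.Injective y := fun a b h => hyinj (congrArg (E P₁.leadingCoeff * ·) h)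
    have hy2 : (P₁.map (ev t)).map (algebraMap (ZMod p) k) =
        C (E P₁.leadingCoeff) * ∏ i, (X - C (y i)) := by
      rw [Polynomial.map_map, ev_natCast_comp, ← hy]
    obtain ⟨π, hπ⟩ := exists_frob_perm (P₁.map (ev t)) y hyinj0 _ hAk hy2
    refine ⟨lf c y', π, hzinj, hroot, ?_, ?_, ?_, ?_⟩
    · intro g h0
      have := congrArg (Polynomial.eval (lf c y' g)) hbez
      rw [eval_add, eval_mul, eval_mul, hroot, h0, mul_zero, mul_zero, add_zero, eval_C] at this
      exact hEδ this.symm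
    · intro σ g
      rw [hG σ k E y' hf, hder]
      exact eval_sum_erase (lf c y') (fun g => lf c y' (g * σ)) g
    · intro g
      rw [← frobenius_def, map_lf, ← lf_mul_perm]
      congr 1
      ext i
      simp only [y', map_mul, frobenius_def, hπ, hev]
      rw [← map_pow, ZMod.pow_card]
    · intro g hg
      obtain ⟨i, hi⟩ := hno t (fun i => y (g i)) (fun a b h => g.injective (hyinj0 h)) hA (by
        rw [hy2, hev, Equiv.prod_comp g (fun i => X - C (y i))])
      apply hi
      have := congrArg (fun e => e i) hg
      simp only [Equiv.Perm.mul_apply] at this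
      rw [hπ, this]
  choose! z π hz1 hz2 hz3 hz4 hz5 hz6 using hdata
  let ε : Fin N ≃ Equiv.Perm (Fin n) := (Fintype.equivFinOfCardEq (by
    rw [Fintype.card_perm, Fintype.card_fin])).symm
  let gs : Equiv.Perm (Fin n) → ZMod p → Finset (Fin N) := fun σ t =>
    Finset.univ.filter fun l => π t * ε l = ε l * σ
  have hbound : ∀ σ, N * ∑ t ∈ 𝒯, (gs σ t).card ≤ (N + 1) * p := by
    intro σ
    refine hst p (by omega) k (Φ.map (mapRingHom (Int.castRingHom (ZMod p))))
      ((G σ).map (mapRingHom (Int.castRingHom (ZMod p)))) (hm.map _)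
      ((hm.natDegree_map _).trans hN) (wt_map D N Φ (Or.inl ⟨hm, hN⟩) hDΦ)
      (wt_map D N (G σ) (Or.inr (hGd σ)) (hDG σ)) ?_ 𝒯 (fun t l => z t (ε l)) ?_ ?_ ?_ (gs σ) ?_
    · intro L _ _
      have h1 := htr L (by
        have : CharP L p := charP_of_injective_algebraMap (algebraMap (ZMod p) L).injective p
        rw [Ne, CharP.intCast_eq_zero_iff L p, ← Int.dvd_natAbs, Int.natCast_dvd_natCast]
        intro hd
        have := Nat.le_of_dvd (Int.natAbs_pos.mpr hN₀) hd
        omega)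
      rw [Polynomial.map_map, mapRingHom_comp]
      convert h1
      exact Subsingleton.elim _ _
    · intro t ht a b hab
      exact ε.injective (hz1 t ht hab)
    · intro t ht l
      rw [qev_map]; exact hz2 t ht _
    · intro t ht l
      rw [derivative_map, qev_map]; exact hz3 t ht _
    · intro t ht l hl
      rw [derivative_map, qev_map, qev_map, hz4 t ht, hz5 t ht, (Finset.mem_filter.mp hl).2]
  have hzero : ∑ t ∈ 𝒯, (gs σ₀ t).card = 0 := by
    refine Finset.sum_eq_zero fun t ht => ?_
    rw [Finset.card_eq_zero, Finset.filter_eq_empty_iff]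
    intro l _
    exact hz6 t ht _
  -- Each point `z_g` above `t` is counted for exactly one `σ`, namely `g⁻¹ * π t * g`.
  have htot : ∑ σ, ∑ t ∈ 𝒯, (gs σ t).card = 𝒯.card * N := by
    rw [Finset.sum_comm, Finset.sum_const_nat]
    intro t _
    have := Finset.card_eq_sum_card_fiberwise (s := (Finset.univ : Finset (Fin N)))
      (t := (Finset.univ : Finset (Equiv.Perm (Fin n)))) (f := fun l => (ε l)⁻¹ * (π t * ε l))
      (by simp)
    rw [Finset.card_univ, Fintype.card_fin] at this
    refine Eq.trans ?_ this.symm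
    refine Finset.sum_congr rfl fun σ _ => ?_
    congr 1
    ext l
    simp only [gs, Finset.mem_filter, Finset.mem_univ, true_and]
    rw [inv_mul_eq_iff_eq_mul]
  have hsum : N * (𝒯.card * N) ≤ (N - 1) * ((N + 1) * p) := by
    rw [← htot, ← Finset.add_sum_erase _ _ (Finset.mem_univ σ₀), hzero, zero_add, Finset.mul_sum]
    refine (Finset.sum_le_card_nsmul _ _ _ fun σ _ => hbound σ).trans ?_
    rw [Finset.card_erase_of_mem (Finset.mem_univ _), Finset.card_univ, Fintype.card_perm,
      Fintype.card_fin, smul_eq_mul]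
  obtain ⟨N', hN'⟩ : ∃ N', N = N' + 1 := ⟨N - 1, by omega⟩
  have hpbig : N ^ 2 * δ'.natDegree < p := by omega
  rw [hN'] at hsum hpbig
  rw [Nat.add_sub_cancel] at hsum
  have := Nat.mul_le_mul_left ((N' + 1) ^ 2) h𝒯
  nlinarith

end chebotarev
end HG

/-! ### Hensel's lemma in unramified extensions of `ℤ_p` -/

namespace HG

section complete

/-- A finite free `ℤ_p`-algebra is `p`-adically complete. -/
lemma isAdicComplete_of_basis {p : ℕ} [Fact p.Prime] {A : Type*} [CommRing A] [Algebra ℤ_[p] A]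
    {ι : Type*} [Fintype ι] (b : Module.Basis ι ℤ_[p] A) :
    IsAdicComplete (Ideal.span {(p : A)}) A := by
  have hmem : ∀ (n : ℕ) (x : A), x ∈ ((Ideal.span {(p : A)}) ^ n • ⊤ : Submodule A A) ↔
      ∀ i, (p : ℤ_[p]) ^ n ∣ b.repr x i := by
    intro n x
    rw [smul_eq_mul, Ideal.mul_top, Ideal.span_singleton_pow, Ideal.mem_span_singleton]
    constructor
    · rintro ⟨y, rfl⟩ i
      have : (p : A) ^ n * y = (p : ℤ_[p]) ^ n • y := by
        rw [Algebra.smul_def]; simp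
      rw [this, map_smul]
      exact ⟨_, rfl⟩
    · intro h
      choose c hc using h
      refine ⟨∑ i, c i • b i, ?_⟩
      conv_lhs => rw [← b.sum_repr x]
      rw [Finset.mul_sum]
      refine Finset.sum_congr rfl fun i _ => ?_
      rw [hc, mul_smul, Algebra.smul_def]
      simp
  have hmem0 : ∀ (n : ℕ) (x : ℤ_[p]),
      x ∈ ((IsLocalRing.maximalIdeal ℤ_[p]) ^ n • ⊤ : Submodule ℤ_[p] ℤ_[p]) ↔
        (p : ℤ_[p]) ^ n ∣ x := by
    intro n x
    rw [smul_eq_mul, Ideal.mul_top, PadicInt.maximalIdeal_eq_span_p, Ideal.span_singleton_pow,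
      Ideal.mem_span_singleton]
  refine { haus' := ?_, prec' := ?_ }
  · intro x hx
    apply b.repr.injective
    ext i
    rw [map_zero, Finsupp.zero_apply]
    refine IsHausdorff.haus (I := IsLocalRing.maximalIdeal ℤ_[p]) inferInstance _ fun n => ?_
    rw [SModEq.zero, hmem0]
    exact (hmem n x).mp (SModEq.zero.mp (hx n)) i
  · intro f hf
    have h1 : ∀ i, ∃ L : ℤ_[p], ∀ n, b.repr (f n) i ≡ L
        [SMOD ((IsLocalRing.maximalIdeal ℤ_[p]) ^ n • ⊤ : Submodule ℤ_[p] ℤ_[p])] := by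
      intro i
      apply IsPrecomplete.prec (I := IsLocalRing.maximalIdeal ℤ_[p]) inferInstance
      intro m n hmn
      have := hf hmn
      rw [SModEq.sub_mem, hmem] at this
      rw [SModEq.sub_mem, hmem0]
      simpa using this i
    choose L hL using h1
    refine ⟨∑ i, L i • b i, fun n => ?_⟩
    rw [SModEq.sub_mem, hmem]
    intro i
    have := hL i n
    rw [SModEq.sub_mem, hmem0] at this
    classical
    simpa [Finsupp.single_apply] using this

end complete

section unramified

variable {p : ℕ} [Fact p.Prime]

lemma toZMod_surjective : Function.Surjective (PadicInt.toZMod (p := p)) :=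
  ZMod.ringHom_surjective _

lemma toZMod_eq_zero_iff (x : ℤ_[p]) : PadicInt.toZMod x = 0 ↔ (p : ℤ_[p]) ∣ x := by
  rw [← RingHom.mem_ker, PadicInt.ker_toZMod, PadicInt.maximalIdeal_eq_span_p,
    Ideal.mem_span_singleton]

/-- Reduction from `ℤ_p` to the algebraic closure of `𝔽_p`. -/
noncomputable def red : ℤ_[p] →+* AlgebraicClosure (ZMod p) :=
  (algebraMap (ZMod p) (AlgebraicClosure (ZMod p))).comp PadicInt.toZMod

lemma exists_monic_lift (g : (ZMod p)[X]) (hg : g.Monic) :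
    ∃ g₀ : ℤ_[p][X], g₀.map PadicInt.toZMod = g ∧ g₀.natDegree = g.natDegree ∧ g₀.Monic :=
  lifts_and_natDegree_eq_and_monic (by
    rw [lifts_iff_coeff_lifts]
    intro n
    exact toZMod_surjective _) hg

/-- Kernel of the reduction of `ℤ_p[x]/(g₀)` at a root of the reduction of `g₀`. -/
lemma ker_lift (y : AlgebraicClosure (ZMod p)) (g₀ : ℤ_[p][X])
    (hg : g₀.map PadicInt.toZMod = minpoly (ZMod p) y) (h : g₀.eval₂ red y = 0)
    (a : AdjoinRoot g₀) (ha : AdjoinRoot.lift red y h a = 0) : a ∈ Ideal.span {(p : AdjoinRoot g₀)} := by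
  obtain ⟨f, rfl⟩ := AdjoinRoot.mk_surjective a
  rw [AdjoinRoot.lift_mk, red, ← eval₂_map, ← aeval_def] at ha
  obtain ⟨u, hu⟩ := minpoly.dvd _ _ ha
  obtain ⟨u₀, rfl⟩ := map_surjective _ toZMod_surjective u
  rw [← hg, ← Polynomial.map_mul, ← sub_eq_zero, ← Polynomial.map_sub] at hu
  have hdvd : C (p : ℤ_[p]) ∣ f - g₀ * u₀ := by
    rw [C_dvd_iff_dvd_coeff]
    intro i
    rw [← toZMod_eq_zero_iff, ← coeff_map, hu, coeff_zero]
  obtain ⟨v, hv⟩ := hdvd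
  rw [Ideal.mem_span_singleton]
  refine ⟨AdjoinRoot.mk g₀ v, ?_⟩
  have : f = g₀ * u₀ + C (p : ℤ_[p]) * v := by rw [← hv]; ring
  rw [this, map_add, map_mul, map_mul, AdjoinRoot.mk_self, zero_mul, zero_add]
  simp

/-- Hensel's lemma in `ℤ_p[x]/(g₀)`, where `g₀` lifts the minimal polynomial of `y`, so that the
residue field is `𝔽_p(y)`; the approximate root is given as `w(y)`. -/
lemma hensel_adjoinRoot (y : AlgebraicClosure (ZMod p)) (g₀ : ℤ_[p][X]) (hm : g₀.Monic)
    (hg : g₀.map PadicInt.toZMod = minpoly (ZMod p) y) (h : g₀.eval₂ red y = 0)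
    (f : ℤ_[p][X]) (hf : f.Monic) (w : (ZMod p)[X])
    (hw : (f.map PadicInt.toZMod).aeval (aeval y w) = 0)
    (hw' : (derivative (f.map PadicInt.toZMod)).aeval (aeval y w) ≠ 0) :
    ∃ a : AdjoinRoot g₀, aeval a f = 0 ∧ AdjoinRoot.lift red y h a = aeval y w := by
  set ρ := AdjoinRoot.lift red y h with hρ
  have hρmk : ∀ u : ℤ_[p][X], ρ (AdjoinRoot.mk g₀ u) = aeval y (u.map PadicInt.toZMod) := by
    intro u
    rw [hρ, AdjoinRoot.lift_mk, red, ← eval₂_map, ← aeval_def]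
  have hρev : ∀ (u : ℤ_[p][X]) (a : AdjoinRoot g₀),
      ρ (aeval a u) = aeval (ρ a) (u.map PadicInt.toZMod) := by
    intro u a
    rw [aeval_def, hom_eval₂, aeval_def, eval₂_map]
    congr 1
    ext x
    have := hρmk (C x)
    rw [map_C, aeval_C] at this
    simpa using this
  have : IsAdicComplete (Ideal.span {(p : AdjoinRoot g₀)}) (AdjoinRoot g₀) :=
    isAdicComplete_of_basis (AdjoinRoot.powerBasis' hm).basis
  obtain ⟨w₀, rfl⟩ := map_surjective _ toZMod_surjective w
  have hρI : ∀ a ∈ Ideal.span {(p : AdjoinRoot g₀)}, ρ a = 0 := by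
    intro a ha
    obtain ⟨b, rfl⟩ := Ideal.mem_span_singleton.mp ha
    rw [map_mul, map_natCast, CharP.cast_eq_zero, zero_mul]
  obtain ⟨a, ha, haw⟩ := HenselianRing.is_henselian (I := Ideal.span {(p : AdjoinRoot g₀)})
    (f.map (algebraMap ℤ_[p] (AdjoinRoot g₀))) (hf.map _) (AdjoinRoot.mk g₀ w₀) (by
      apply ker_lift y g₀ hg h
      rw [eval_map_algebraMap]
      change ρ _ = 0
      rw [hρev, hρmk, hw]) (by
      set D := (derivative (f.map (algebraMap ℤ_[p] (AdjoinRoot g₀)))).eval (AdjoinRoot.mk g₀ w₀)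
      have hD : ρ D ≠ 0 := by
        simp only [D, derivative_map, eval_map_algebraMap]
        rw [hρev, hρmk, ← derivative_map]
        exact hw'
      have hyInt : IsIntegral (ZMod p) y := Algebra.IsIntegral.isIntegral y
      have hmem : (ρ D)⁻¹ ∈ Algebra.adjoin (ZMod p) {y} := by
        rw [← IntermediateField.adjoin_simple_toSubalgebra_of_isAlgebraic hyInt.isAlgebraic,
          IntermediateField.mem_toSubalgebra]
        apply inv_mem
        rw [← IntermediateField.mem_toSubalgebra,
          IntermediateField.adjoin_simple_toSubalgebra_of_isAlgebraic hyInt.isAlgebraic]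
        obtain ⟨D₀, hD₀⟩ := AdjoinRoot.mk_surjective D
        rw [← hD₀, hρmk]
        exact aeval_mem_adjoin_singleton _ _
      rw [Algebra.adjoin_singleton_eq_range_aeval] at hmem
      obtain ⟨v, hv⟩ := hmem
      obtain ⟨v₀, rfl⟩ := map_surjective _ toZMod_surjective v
      refine IsUnit.of_mul_eq_one (Ideal.Quotient.mk _ (AdjoinRoot.mk g₀ v₀)) ?_
      rw [← map_mul, ← map_one (Ideal.Quotient.mk _), Ideal.Quotient.eq]
      apply ker_lift y g₀ hg h
      change ρ _ = 0
      rw [map_sub, map_mul, hρmk, map_one, sub_eq_zero]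
      change aeval y _ = _ at hv
      rw [hv, mul_inv_cancel₀ hD])
  refine ⟨a, by rwa [IsRoot, eval_map_algebraMap] at ha, ?_⟩
  have := hρI _ haw
  rw [map_sub, sub_eq_zero, hρmk] at this
  exact this

end unramified
end HG

/-! ### Irreducible factors over `ℚ_p` from residual roots -/

namespace HG

section unramified

variable {p : ℕ} [Fact p.Prime]

/-- An element of an order in an extension of `ℚ_p` of degree `d` whose residue has degree `d`
over `𝔽_p`: its minimal polynomial over `ℤ_p` lifts the minimal polynomial of its residue. -/
lemma minpoly_lift {A K : Type*} [CommRing A] [Algebra ℤ_[p] A] [Field K] [Algebra ℚ_[p] K]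
    [Algebra ℤ_[p] K] [IsScalarTower ℤ_[p] ℚ_[p] K] [FiniteDimensional ℚ_[p] K]
    (ι : A →ₐ[ℤ_[p]] K) (hι : Function.Injective ι) (ρ : A →+* AlgebraicClosure (ZMod p))
    (hρ : ρ.comp (algebraMap ℤ_[p] A) = red) (a : A) (ha : IsIntegral ℤ_[p] (ι a))
    (hd : Module.finrank ℚ_[p] K = (minpoly (ZMod p) (ρ a)).natDegree) :
    (minpoly ℤ_[p] (ι a)).map PadicInt.toZMod = minpoly (ZMod p) (ρ a) := by
  have hm := minpoly.monic ha
  have h1 : aeval a (minpoly ℤ_[p] (ι a)) = 0 := by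
    apply hι
    rw [← aeval_algHom_apply, minpoly.aeval, map_zero]
  have h2 : aeval (ρ a) ((minpoly ℤ_[p] (ι a)).map PadicInt.toZMod) = 0 := by
    have := congrArg ρ h1
    rw [aeval_def, hom_eval₂, hρ, map_zero, red] at this
    rw [aeval_def, eval₂_map, this]
  refine eq_of_monic_of_dvd_of_natDegree_le (minpoly.monic (Algebra.IsIntegral.isIntegral _))
    (hm.map _) (minpoly.dvd _ _ h2) ?_
  rw [hm.natDegree_map, ← hd, ← hm.natDegree_map (algebraMap ℤ_[p] ℚ_[p]),
    ← minpoly.isIntegrallyClosed_eq_field_fractions' ℚ_[p] ha]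
  exact minpoly.natDegree_le _

/-- A simple root `y` of the reduction of a monic `h ∈ ℤ_p[X]` gives a factor of `h` that lifts
the minimal polynomial of `y` and is irreducible over `ℚ_p`, with a root in the unramified
extension of the same degree. -/
lemma exists_local_factor (h : ℤ_[p][X]) (hh : h.Monic) (y : AlgebraicClosure (ZMod p))
    (hy : aeval y (h.map PadicInt.toZMod) = 0)
    (hy' : aeval y (derivative (h.map PadicInt.toZMod)) ≠ 0) :
    ∃ q : ℤ_[p][X], q.Monic ∧ q.map PadicInt.toZMod = minpoly (ZMod p) y ∧ q ∣ h ∧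
      Irreducible (q.map (algebraMap ℤ_[p] ℚ_[p])) ∧
      ∃ x : ((X : ℚ_[p][X]) ^ (p ^ (minpoly (ZMod p) y).natDegree) - X).SplittingField,
        aeval x (q.map (algebraMap ℤ_[p] ℚ_[p])) = 0 := by
  have hyInt : IsIntegral (ZMod p) y := Algebra.IsIntegral.isIntegral y
  have hp1 : 1 < p := (Fact.out : p.Prime).one_lt
  set d := (minpoly (ZMod p) y).natDegree with hd
  have hd0 : d ≠ 0 := (minpoly.natDegree_pos hyInt).ne'
  obtain ⟨g₀, hg, hgd, hgm⟩ := exists_monic_lift _ (minpoly.monic hyInt)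
  have hroot : g₀.eval₂ red y = 0 := by
    rw [red, ← eval₂_map, ← aeval_def, hg, minpoly.aeval]
  have hirr : Irreducible (g₀.map (algebraMap ℤ_[p] ℚ_[p])) := by
    rw [← hgm.irreducible_iff_irreducible_map_fraction_map]
    apply hgm.irreducible_of_irreducible_map PadicInt.toZMod
    rw [hg]
    exact minpoly.irreducible hyInt
  have : Fact (Irreducible (g₀.map (algebraMap ℤ_[p] ℚ_[p]))) := ⟨hirr⟩
  have hgm' := hgm.map (algebraMap ℤ_[p] ℚ_[p])
  set K := AdjoinRoot (g₀.map (algebraMap ℤ_[p] ℚ_[p])) with hK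
  have : FiniteDimensional ℚ_[p] K := (AdjoinRoot.powerBasis hirr.ne_zero).finite
  have hfin : Module.finrank ℚ_[p] K = d := by
    rw [(AdjoinRoot.powerBasis hirr.ne_zero).finrank, AdjoinRoot.powerBasis_dim,
      hgm.natDegree_map, hgd]
  have hιr : g₀.eval₂ (algebraMap ℤ_[p] K) (AdjoinRoot.root (g₀.map (algebraMap ℤ_[p] ℚ_[p]))) = 0 := by
    rw [IsScalarTower.algebraMap_eq ℤ_[p] ℚ_[p] K, ← eval₂_map]
    exact AdjoinRoot.eval₂_root _
  let ι : AdjoinRoot g₀ →ₐ[ℤ_[p]] K := AdjoinRoot.liftAlgHom g₀ (Algebra.ofId _ _) _ hιr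
  have hι : Function.Injective ι := by
    rw [injective_iff_map_eq_zero]
    intro a ha
    obtain ⟨f, rfl⟩ := AdjoinRoot.mk_surjective a
    have h1 : ι (AdjoinRoot.mk g₀ f) = AdjoinRoot.mk _ (f.map (algebraMap ℤ_[p] ℚ_[p])) := by
      change AdjoinRoot.lift _ _ hιr (AdjoinRoot.mk g₀ f) = _
      rw [AdjoinRoot.lift_mk]
      change f.eval₂ (algebraMap ℤ_[p] K) _ = _
      rw [IsScalarTower.algebraMap_eq ℤ_[p] ℚ_[p] K, ← eval₂_map, ← aeval_def, AdjoinRoot.aeval_eq]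
    rw [h1, AdjoinRoot.mk_eq_zero, map_dvd_map _ (IsFractionRing.injective _ _) hgm] at ha
    exact AdjoinRoot.mk_eq_zero.mpr ha
  set ρ := AdjoinRoot.lift red y hroot with hρ
  have hρc : ρ.comp (algebraMap ℤ_[p] (AdjoinRoot g₀)) = red := by
    ext x
    rw [RingHom.comp_apply, AdjoinRoot.algebraMap_eq, hρ, AdjoinRoot.lift_of]
  -- Hensel lifting of `y` to a root `a` of `h`.
  obtain ⟨a, ha, haρ⟩ := hensel_adjoinRoot y g₀ hgm hg hroot h hh X (by simpa using hy)
    (by simpa using hy')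
  rw [aeval_X] at haρ
  have haι : aeval (ι a) h = 0 := by rw [aeval_algHom_apply, ha, map_zero]
  have hinta : IsIntegral ℤ_[p] (ι a) := ⟨h, hh, haι⟩
  -- The Teichmüller representatives `τ e` split `X ^ N - X` over `K`; the one lifting `y` generates
  -- `K`, so `K` is the splitting field of `X ^ N - X`.
  set N := p ^ d with hN
  have hN1 : 1 < N := Nat.one_lt_pow hd0 hp1
  let E := IntermediateField.adjoin (ZMod p) {y}
  have : FiniteDimensional (ZMod p) E := IntermediateField.adjoin.finiteDimensional hyInt
  have : Finite E := Module.finite_of_finite (ZMod p)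
  have : Fintype E := Fintype.ofFinite E
  have hE : Fintype.card E = N := by
    rw [Module.card_eq_pow_finrank (K := ZMod p), ZMod.card, IntermediateField.adjoin.finrank hyInt]
  have hEmem : ∀ e : E, ∃ w : (ZMod p)[X], aeval y w = (e : AlgebraicClosure (ZMod p)) := by
    intro e
    have he := e.2
    rw [← IntermediateField.mem_toSubalgebra,
      IntermediateField.adjoin_simple_toSubalgebra_of_isAlgebraic hyInt.isAlgebraic,
      Algebra.adjoin_singleton_eq_range_aeval] at he
    exact he
  have hteich : ∀ e : E, ∃ b : AdjoinRoot g₀, b ^ N = b ∧ ρ b = e := by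
    intro e
    obtain ⟨w, hw⟩ := hEmem e
    have hmon : ((X : ℤ_[p][X]) ^ N - X).Monic :=
      monic_X_pow_sub (by rw [degree_X]; exact_mod_cast hN1)
    have hpow : (e : AlgebraicClosure (ZMod p)) ^ N = e := by
      rw [← hE]
      exact_mod_cast congrArg Subtype.val (FiniteField.pow_card e)
    obtain ⟨b, hb, hbρ⟩ := hensel_adjoinRoot y g₀ hgm hg hroot _ hmon w
      (by simp [hw, hpow]) (by
        have : ((N : ℕ) : ZMod p) = 0 := by
          rw [hN, Nat.cast_pow, CharP.cast_eq_zero, zero_pow hd0]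
        rw [Polynomial.map_sub, Polynomial.map_pow, map_X, derivative_sub, derivative_X_pow, derivative_X,
          this]
        simp)
    refine ⟨b, by simpa [sub_eq_zero] using hb, by rw [← hw]; exact hbρ⟩
  choose τ hτ hτρ using hteich
  have hdegN : ((X : K[X]) ^ N - X).natDegree = N :=
    FiniteField.X_pow_card_pow_sub_X_natDegree_eq K hd0 hp1
  have hN0 : ((X : K[X]) ^ N - X) ≠ 0 := ne_zero_of_natDegree_gt (hdegN.symm ▸ hN1)
  have hsplit : (((X : ℚ_[p][X]) ^ N - X).map (algebraMap ℚ_[p] K)).Splits := by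
    rw [Polynomial.map_sub, Polynomial.map_pow, map_X, splits_iff_card_roots]
    refine le_antisymm (card_roots' _) ?_
    classical
    refine le_trans (le_of_eq_of_le (hdegN.trans (hE.symm.trans Finset.card_univ.symm))
      (Finset.card_le_card_of_injOn (t := ((X : K[X]) ^ N - X).roots.toFinset)
      (fun e => ι (τ e)) ?_ ?_)) (Multiset.toFinset_card_le _)
    · intro e _
      simp only [Finset.mem_coe, Multiset.mem_toFinset]
      rw [mem_roots hN0, IsRoot, eval_sub, eval_pow, eval_X, ← map_pow, hτ, sub_self]
    · intro e _ e' _ hee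
      apply Subtype.ext
      rw [← hτρ, ← hτρ, hι hee]
  let θ := SplittingField.lift _ hsplit
  have hyE : y ∈ E := IntermediateField.mem_adjoin_simple_self _ _
  have hζmem : ι (τ ⟨y, hyE⟩) ∈ θ.fieldRange := by
    have h1 := (SplittingField.splits ((X : ℚ_[p][X]) ^ N - X)).image_rootSet θ
    have h2 : ι (τ ⟨y, hyE⟩) ∈ ((X : ℚ_[p][X]) ^ N - X).rootSet K := by
      rw [mem_rootSet']
      refine ⟨by simpa using hN0, ?_⟩
      simp only [map_sub, map_pow, aeval_X]
      rw [← map_pow, hτ, sub_self]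
    rw [← h1] at h2
    obtain ⟨r, -, hr⟩ := h2
    exact ⟨r, hr⟩
  have hζint : IsIntegral ℤ_[p] (ι (τ ⟨y, hyE⟩)) := by
    refine ⟨(X : ℤ_[p][X]) ^ N - X, monic_X_pow_sub (by rw [degree_X]; exact_mod_cast hN1), ?_⟩
    rw [← aeval_def]
    simp only [map_sub, map_pow, aeval_X]
    rw [← map_pow, hτ, sub_self]
  have hζtop : IntermediateField.adjoin ℚ_[p] {ι (τ ⟨y, hyE⟩)} = ⊤ := by
    rw [Field.primitive_element_iff_minpoly_natDegree_eq,
      minpoly.isIntegrallyClosed_eq_field_fractions' ℚ_[p] hζint,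
      (minpoly.monic hζint).natDegree_map,
      ← (minpoly.monic hζint).natDegree_map PadicInt.toZMod,
      minpoly_lift ι hι ρ hρc _ hζint (by rw [hτρ, hfin]), hτρ, hfin]
  have hθ : θ.fieldRange = ⊤ := by
    rw [eq_top_iff, ← hζtop, IntermediateField.adjoin_simple_le_iff]
    exact hζmem
  have hq := minpoly_lift ι hι ρ hρc a hinta (by rw [haρ, hfin])
  rw [haρ] at hq
  have hqf := minpoly.isIntegrallyClosed_eq_field_fractions' ℚ_[p] hinta
  refine ⟨minpoly ℤ_[p] (ι a), minpoly.monic hinta, hq, ?_, ?_, ?_⟩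
  · have : Module.IsTorsionFree ℤ_[p] K := by
      rw [Module.isTorsionFree_iff_algebraMap_injective, IsScalarTower.algebraMap_eq ℤ_[p] ℚ_[p] K]
      exact (algebraMap ℚ_[p] K).injective.comp (IsFractionRing.injective _ _)
    exact minpoly.isIntegrallyClosed_dvd hinta haι
  · rw [← hqf]
    exact minpoly.irreducible (Algebra.IsIntegral.isIntegral _)
  · have : ι a ∈ θ.fieldRange := by rw [hθ]; trivial
    obtain ⟨x, hx⟩ := this
    refine ⟨x, ?_⟩
    apply θ.toRingHom.injective
    change θ _ = θ _
    rw [← aeval_algHom_apply, map_zero]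
    rw [show θ x = ι a from hx, ← hqf, minpoly.aeval]

end unramified
end HG

/-! ### Factorization over `ℚ_p` from Frobenius cycles -/

namespace HG

section localtype

variable {p : ℕ} [Fact p.Prime]

/-- A full cycle of Frobenius on distinct elements is the set of conjugates of its first member. -/
lemma minpoly_cycle {k : Type*} [Field k] [Algebra (ZMod p) k] {d : ℕ} (hd : 0 < d)
    (y : Fin d → k) (hyInt : IsIntegral (ZMod p) (y ⟨0, hd⟩))
    (hy : Function.Injective y) (hσ : ∀ i, y i ^ p = y (finRotate d i)) :
    (minpoly (ZMod p) (y ⟨0, hd⟩)).map (algebraMap (ZMod p) k) =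
      ∏ i, (X - C (y i)) := by
  obtain ⟨e, rfl⟩ : ∃ e, d = e + 1 := ⟨d - 1, by omega⟩
  have : CharP k p := (Algebra.charP_iff (ZMod p) k p).mp inferInstance
  set μ := minpoly (ZMod p) (y ⟨0, hd⟩) with hμ
  set g : k[X] := ∏ i, (X - C (y i)) with hg
  have hgm : g.Monic := monic_prod_of_monic _ _ fun i _ => monic_X_sub_C _
  have hfix : g.map (frobenius k p) = g := by
    rw [hg, Polynomial.map_prod]
    simp only [Polynomial.map_sub, map_X, map_C, frobenius_def, hσ]
    exact Equiv.prod_comp (finRotate (e + 1)) fun i => X - C (y i)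
  have hlift : g ∈ lifts (algebraMap (ZMod p) k) := by
    rw [lifts_iff_coeff_lifts]
    intro i
    have h1 : g.coeff i ∈ (⊥ : Subfield k) := by
      rw [Subfield.mem_bot_iff_pow_eq_self k p]
      conv_rhs => rw [← hfix, coeff_map, frobenius_def]
    rw [← ZMod.fieldRange_castHom_eq_bot p] at h1
    obtain ⟨c, hc⟩ := h1
    refine ⟨c, ?_⟩
    rw [← hc]
    exact congrArg (fun φ : ZMod p →+* k => φ c) (Subsingleton.elim _ _)
  obtain ⟨g₀, hg₀, hg₀d, hg₀m⟩ := lifts_and_natDegree_eq_and_monic hlift hgm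
  have hroots : ∀ k (hk : k < e + 1), aeval (y ⟨k, hk⟩) μ = 0 := by
    intro k
    induction k with
    | zero => intro hk; exact minpoly.aeval _ _
    | succ k ih =>
      intro hk
      have h1 := ih (by omega)
      have h2 := hσ ⟨k, by omega⟩
      rw [finRotate_of_lt (by omega)] at h2
      rw [← h2, ← expand_aeval, ZMod.expand_card, map_pow, h1, zero_pow (NeZero.ne p)]
  have hdvd : g ∣ μ.map (algebraMap (ZMod p) k) := by
    refine Finset.prod_dvd_of_coprime ?_ ?_
    · intro i _ j _ hij
      exact pairwise_coprime_X_sub_C hy hij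
    · intro i _
      rw [dvd_iff_isRoot, IsRoot, eval_map_algebraMap]
      exact hroots i i.2
  refine eq_of_monic_of_dvd_of_natDegree_le hgm ((minpoly.monic hyInt).map _) hdvd ?_
  rw [(minpoly.monic hyInt).natDegree_map, ← hg₀d]
  refine natDegree_le_of_dvd (minpoly.dvd _ _ ?_) hg₀m.ne_zero
  rw [← eval_map_algebraMap, hg₀, hg, eval_prod]
  exact Finset.prod_eq_zero (Finset.mem_univ ⟨0, hd⟩) (by simp)

/-- If Frobenius permutes the distinct roots of the reduction of a monic `h ∈ ℤ_p[X]` in disjoint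
cycles of lengths `d j`, then `h` is a product of irreducible polynomials of degrees `d j` with
roots in the unramified extensions of degrees `d j`. -/
lemma local_factorization {J : Type*} [Fintype J] (d : J → ℕ) (hd : ∀ j, 0 < d j)
    (h : ℤ_[p][X]) (hh : h.Monic) (y : (Σ j, Fin (d j)) → AlgebraicClosure (ZMod p))
    (hy : Function.Injective y)
    (hσ : ∀ j i, y ⟨j, i⟩ ^ p = y ⟨j, finRotate (d j) i⟩)
    (hprod : (h.map PadicInt.toZMod).map (algebraMap (ZMod p) (AlgebraicClosure (ZMod p))) =
      ∏ i, (X - C (y i))) :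
    ∃ q : J → ℚ_[p][X], h.map (algebraMap ℤ_[p] ℚ_[p]) = ∏ j, q j ∧
      ∀ j, (q j).natDegree = d j ∧ (q j).Monic ∧ Irreducible (q j) ∧
        ∃ x : UnramifiedExt p (d j), aeval x (q j) = 0 := by
  have hmin : ∀ j, (minpoly (ZMod p) (y ⟨j, ⟨0, hd j⟩⟩)).map
      (algebraMap (ZMod p) (AlgebraicClosure (ZMod p))) = ∏ i, (X - C (y ⟨j, i⟩)) := fun j =>
    minpoly_cycle (hd j) (fun i => y ⟨j, i⟩) (Algebra.IsIntegral.isIntegral _) (fun i i' hii => by simpa using hy hii) (hσ j)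
  have hmdeg : ∀ j, (minpoly (ZMod p) (y ⟨j, ⟨0, hd j⟩⟩)).natDegree = d j := by
    intro j
    rw [← natDegree_map (algebraMap (ZMod p) (AlgebraicClosure (ZMod p))), hmin]
    simp
  have hsep : (h.map PadicInt.toZMod).Separable := by
    rw [← separable_map (algebraMap (ZMod p) (AlgebraicClosure (ZMod p))), hprod]
    exact separable_prod_X_sub_C_iff.mpr hy
  have hroot : ∀ i, aeval (y i) (h.map PadicInt.toZMod) = 0 := by
    intro i
    rw [← eval_map_algebraMap, hprod, eval_prod]
    exact Finset.prod_eq_zero (Finset.mem_univ i) (by simp)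
  choose q hqm hqmin hqh hqirr hqx using fun j => exists_local_factor h hh (y ⟨j, ⟨0, hd j⟩⟩)
    (hroot _) (hsep.aeval_derivative_ne_zero (hroot _))
  have hqdeg : ∀ j, (q j).natDegree = d j := by
    intro j
    rw [← (hqm j).natDegree_map PadicInt.toZMod, hqmin, hmdeg]
  refine ⟨fun j => (q j).map (algebraMap ℤ_[p] ℚ_[p]), ?_, fun j => ⟨?_, (hqm j).map _, hqirr j, ?_⟩⟩
  · refine eq_of_monic_of_dvd_of_natDegree_le
      (monic_prod_of_monic _ _ fun j _ => (hqm j).map _) (hh.map _) ?_ ?_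
    · refine Finset.prod_dvd_of_coprime ?_ fun j _ => Polynomial.map_dvd _ (hqh j)
      intro j _ j' _ hjj
      refine (hqirr j).coprime_iff_not_dvd.mpr fun hdvd => hjj ?_
      have h1 : (q j).map (algebraMap ℤ_[p] ℚ_[p]) = (q j').map (algebraMap ℤ_[p] ℚ_[p]) :=
        eq_of_monic_of_associated ((hqm j).map _) ((hqm j').map _)
          ((hqirr j).associated_of_dvd (hqirr j') hdvd)
      have h2 := map_injective _ (IsFractionRing.injective ℤ_[p] ℚ_[p]) h1
      have h3 : minpoly (ZMod p) (y ⟨j, ⟨0, hd j⟩⟩) = minpoly (ZMod p) (y ⟨j', ⟨0, hd j'⟩⟩) := by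
        rw [← hqmin, ← hqmin, h2]
      have h4 : (∏ i, (X - C (y ⟨j', i⟩))).eval (y ⟨j, ⟨0, hd j⟩⟩) = 0 := by
        rw [← hmin, ← h3, eval_map_algebraMap, minpoly.aeval]
      rw [eval_prod, Finset.prod_eq_zero_iff] at h4
      obtain ⟨i, -, hi⟩ := h4
      rw [eval_sub, eval_X, eval_C, sub_eq_zero] at hi
      exact congrArg Sigma.fst (hy hi)
    · rw [natDegree_prod_of_monic _ _ fun j _ => (hqm j).map _, hh.natDegree_map,
        ← hh.natDegree_map PadicInt.toZMod,
        ← natDegree_map (algebraMap (ZMod p) (AlgebraicClosure (ZMod p))), hprod]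
      simp [(hqm _).natDegree_map, hqdeg]
  · simp only [(hqm j).natDegree_map, hqdeg]
  · have := hqx j
    rw [hmdeg] at this
    exact this

end localtype
end HG

/-! ### Prescribed factorization type modulo one prime -/

namespace HG

/-- `R ∈ ℚ[Y]` factors over `ℚ_p` into irreducible factors of degrees `d`, each having a root in
the unramified extension of the same degree. -/
def HasType (p : ℕ) [Fact p.Prime] (R : ℚ[X]) (d : Multiset ℕ) : Prop :=
  ∃ Q : Multiset ℚ_[p][X],
    (R.map (algebraMap ℚ ℚ_[p]) = C (R.map (algebraMap ℚ ℚ_[p])).leadingCoeff * Q.prod) ∧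
    Q.map natDegree = d ∧
    ∀ q ∈ Q, q.Monic ∧ Irreducible q ∧ ∃ x : UnramifiedExt p q.natDegree, aeval x q = 0

/-- `geomPoly` is base change along an embedding of `k[T]` fixing `T`. -/
lemma geomPoly_eq {k : Type*} [Field k] (P : k[X][X]) :
    ∃ φ : k[X] →+* RatFunc (AlgebraicClosure k), Function.Injective φ ∧
      φ X = algebraMap (AlgebraicClosure k)[X] _ X ∧ geomPoly k P = P.map φ :=
  ⟨_, (RatFunc.algebraMap_injective _).comp (map_injective _ (algebraMap k _).injective),
    by simp, rfl⟩

/-- For large `p`, specialization at `t₀` in a suitable class mod `p` realizes any prescribed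
factorization type `d`: apply `exists_frobenius` to a permutation with cycle lengths `d`. -/
theorem exists_residue {n : ℕ} (hn : 2 ≤ n) (P : ℚ[X][X]) (hdeg : P.natDegree = n)
    (hGal : Nat.card (geomPoly ℚ P).Gal = n.factorial) :
    ∃ m : ℕ, ∀ (p : ℕ) [Fact p.Prime], m < p → ∀ d : Multiset ℕ, (∀ x ∈ d, 0 < x) → d.sum = n →
      ∃ t : ℕ, ∀ t₀ : ℤ, (p : ℤ) ∣ t₀ - t →
        (P.map (evalRingHom (t₀ : ℚ))).natDegree = n ∧
        HasType p (P.map (evalRingHom (t₀ : ℚ))) d := by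
  obtain ⟨a, P₁, ha, hP₁⟩ := exists_int_model P
  have haQ : (a : ℚ) ≠ 0 := Int.cast_ne_zero.mpr ha
  have hdeg₁ : P₁.natDegree = n := by
    rw [← natDegree_map_eq_of_injective (f := mapRingHom (Int.castRingHom ℚ))
      (map_injective _ Int.cast_injective), hP₁, natDegree_C_mul (by simpa using haQ), hdeg]
  obtain ⟨φ, hφ, hφX, hgeom⟩ := geomPoly_eq P
  have hψ : psi = φ.comp (mapRingHom (Int.castRingHom ℚ)) := by
    ext <;> simp [psi, hφX]
  have hq : P₁.map psi = C (φ (C (a : ℚ))) * geomPoly ℚ P := by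
    rw [hψ, ← Polynomial.map_map, hP₁, Polynomial.map_mul, map_C, hgeom]
  have hgdeg : (geomPoly ℚ P).natDegree = n := by
    rw [hgeom, natDegree_map_eq_of_injective hφ, hdeg]
  obtain ⟨m, hm⟩ := exists_frobenius hn P₁ _ _ hq hdeg₁ hgdeg hGal
  refine ⟨m, ?_⟩
  intro p _ hp d hpos hsum
  induction d using Quotient.inductionOn with | _ l =>
  simp only [Multiset.quot_mk_to_coe, Multiset.mem_coe, Multiset.sum_coe] at hpos hsum ⊢
  have hcard : Fintype.card (Σ j : Fin l.length, Fin (l.get j)) = n := by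
    rw [Fintype.card_sigma]
    simp [← hsum]
  let e := Fintype.equivFinOfCardEq hcard
  obtain ⟨t, y, hy, hlc, hprod, hfrob⟩ := hm p hp
    ((e.symm.trans (Equiv.sigmaCongrRight fun j => finRotate (l.get j))).trans e)
  refine ⟨t.val, fun t₀ ht₀ => ?_⟩
  have ht : (t₀ : ZMod p) = t := by
    have := (ZMod.intCast_zmod_eq_zero_iff_dvd _ p).mpr ht₀
    push_cast at this
    rwa [ZMod.natCast_zmod_val, sub_eq_zero] at this
  -- The specialization over `ℤ_p` has unit leading coefficient `u`; `h` is its monic multiple.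
  set f : ℤ_[p][X] := P₁.map (ev (t₀ : ℤ_[p])) with hf
  set u : ℤ_[p] := ev (t₀ : ℤ_[p]) P₁.leadingCoeff with hu
  have hev : (PadicInt.toZMod (p := p)).comp (ev (t₀ : ℤ_[p])) = ev t := by
    rw [ev_natCast_comp, map_intCast, ht]
  have hut : PadicInt.toZMod u = ev t P₁.leadingCoeff := by
    rw [hu, ← hev, RingHom.comp_apply]
  have hu0 : PadicInt.toZMod u ≠ 0 := by rwa [hut]
  have huu : IsUnit u := by
    by_contra hcon
    apply hu0
    rw [← RingHom.mem_ker, PadicInt.ker_toZMod]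
    exact hcon
  obtain ⟨v, hv⟩ := huu
  have hfm : f.map PadicInt.toZMod = P₁.map (ev t) := by
    rw [hf, Polynomial.map_map, hev]
  have hfdeg : f.natDegree = n := by
    rw [hf, natDegree_map_of_leadingCoeff_ne_zero, hdeg₁]
    intro h0
    apply hu0
    rw [hu, h0, map_zero]
  have hflc : f.leadingCoeff = u := by
    rw [leadingCoeff, hfdeg, hf, coeff_map, ← hdeg₁]
    rfl
  set h : ℤ_[p][X] := C ((v⁻¹ : ℤ_[p]ˣ) : ℤ_[p]) * f with hh
  have hhm : h.Monic := by
    rw [Monic, hh, leadingCoeff_mul, leadingCoeff_C, hflc, ← hv, Units.inv_mul]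
  have hfh : f = C u * h := by
    rw [hh, ← mul_assoc, ← C_mul, ← hv, Units.mul_inv, C_1, one_mul]
  have hhdeg : h.natDegree = n := by
    rw [hh, natDegree_C_mul (Units.ne_zero _), hfdeg]
  clear_value h
  have hhprod : (h.map PadicInt.toZMod).map (algebraMap (ZMod p) (AlgebraicClosure (ZMod p))) =
      ∏ i, (X - C (y (e i))) := by
    rw [Equiv.prod_comp e fun i => X - C (y i)]
    have h0 : algebraMap (ZMod p) (AlgebraicClosure (ZMod p)) (ev t P₁.leadingCoeff) ≠ 0 := by
      simpa using hlc
    apply mul_left_cancel₀ (C_ne_zero.mpr h0)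
    have h1 := congrArg (Polynomial.map PadicInt.toZMod) hfh
    rw [Polynomial.map_mul, map_C, hut] at h1
    rw [← hprod, ← hfm, h1, Polynomial.map_mul, map_C]
  obtain ⟨q, hqprod, hq⟩ := local_factorization (J := Fin l.length) l.get
    (fun j => hpos _ (l.get_mem j)) h hhm (fun i => y (e i)) (hy.comp e.injective)
    (fun j i => by
      rw [hfrob]
      simp) hhprod
  have hR : C (a : ℚ) * P.map (evalRingHom (t₀ : ℚ)) = P₁.map (ev (t₀ : ℚ)) := by
    have h1 : ev (t₀ : ℚ) = (evalRingHom (t₀ : ℚ)).comp (mapRingHom (Int.castRingHom ℚ)) := by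
      ext <;> simp [ev]
    rw [h1, ← Polynomial.map_map, hP₁, Polynomial.map_mul, map_C]
    simp
  generalize P.map (evalRingHom (t₀ : ℚ)) = R at hR ⊢
  have hRp : C (a : ℚ_[p]) * R.map (algebraMap ℚ ℚ_[p]) = C (algebraMap ℤ_[p] ℚ_[p] u) * ∏ j, q j := by
    have h1 := congrArg (Polynomial.map (algebraMap ℚ ℚ_[p])) hR
    rw [Polynomial.map_mul, map_C, Polynomial.map_map, ev_natCast_comp,
      map_intCast (algebraMap ℚ ℚ_[p]) a, map_intCast (algebraMap ℚ ℚ_[p]) t₀] at h1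
    rw [h1, ← hqprod]
    have h2 := congrArg (Polynomial.map (algebraMap ℤ_[p] ℚ_[p])) hfh
    rw [hf, Polynomial.map_map, ev_natCast_comp, map_intCast, Polynomial.map_mul, map_C] at h2
    exact h2
  have haP : (a : ℚ_[p]) ≠ 0 := Int.cast_ne_zero.mpr ha
  have huP : algebraMap ℤ_[p] ℚ_[p] u ≠ 0 := by
    intro h0
    apply hu0
    rw [(map_eq_zero_iff _ (IsFractionRing.injective ℤ_[p] ℚ_[p])).mp h0, map_zero]
  have hqm : (∏ j, q j).Monic := monic_prod_of_monic _ _ fun j _ => (hq j).2.1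
  have hRp' : R.map (algebraMap ℚ ℚ_[p]) = C (algebraMap ℤ_[p] ℚ_[p] u / a) * ∏ j, q j := by
    apply mul_left_cancel₀ (C_ne_zero.mpr haP)
    rw [hRp, ← mul_assoc, ← C_mul, mul_div_cancel₀ _ haP]
  have hqdeg : (∏ j, q j).natDegree = n := by
    rw [← hqprod, hhm.natDegree_map, hhdeg]
  refine ⟨?_, Finset.univ.val.map q, ?_, ?_, ?_⟩
  · rw [← natDegree_map (algebraMap ℚ ℚ_[p]), hRp', natDegree_C_mul (div_ne_zero huP haP), hqdeg]
  · conv_rhs => rw [hRp', leadingCoeff_mul, leadingCoeff_C, hqm.leadingCoeff, mul_one]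
    exact hRp'
  · rw [Multiset.map_map, Fin.univ_val_map]
    have hfun : natDegree ∘ q = l.get := funext fun j => (hq j).1
    rw [hfun, List.ofFn_get]
  · intro q' hq'
    obtain ⟨j, -, rfl⟩ := Multiset.mem_map.mp hq'
    refine ⟨(hq j).2.1, (hq j).2.2.1, ?_⟩
    rw [(hq j).1]
    exact (hq j).2.2.2

end HG

/-! ### Recognizing the symmetric group from local factorizations -/

namespace HG

/-- A permutation group that is transitive, has a point stabilizer transitive on the other points,
and contains a transposition is the full symmetric group. -/
lemma perm_eq_top {α : Type*} [Finite α] [DecidableEq α] (H : Subgroup (Equiv.Perm α))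
    (htrans : ∀ x y, ∃ σ ∈ H, σ x = y) (x₀ : α)
    (h2 : ∀ x y, x ≠ x₀ → y ≠ x₀ → ∃ σ ∈ H, σ x₀ = x₀ ∧ σ x = y)
    (a b : α) (hab : a ≠ b) (hswap : Equiv.swap a b ∈ H) : H = ⊤ := by
  rw [eq_top_iff, ← Equiv.Perm.closure_isSwap, Subgroup.closure_le]
  rintro _ ⟨c, d, hcd, rfl⟩
  obtain ⟨s, hs, hsa⟩ := htrans a x₀
  obtain ⟨t, ht, htc⟩ := htrans c x₀
  have hsb : s b ≠ x₀ := fun h => hab (s.injective (hsa.trans h.symm))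
  have htd : t d ≠ x₀ := fun h => hcd (t.injective (htc.trans h.symm))
  obtain ⟨u, hu, hu0, hub⟩ := h2 _ _ hsb htd
  have hg : t⁻¹ * u * s ∈ H := H.mul_mem (H.mul_mem (H.inv_mem ht) hu) hs
  have hc : (t⁻¹ * u * s) a = c := by
    simp only [Equiv.Perm.mul_apply, hsa, hu0]
    rw [Equiv.Perm.inv_eq_iff_eq, htc]
  have hd : (t⁻¹ * u * s) b = d := by
    simp only [Equiv.Perm.mul_apply, hub]
    rw [Equiv.Perm.inv_eq_iff_eq]
  have := H.mul_mem (H.mul_mem hg hswap) (H.inv_mem hg)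
  rwa [← Equiv.swap_apply_apply, hc, hd] at this

section galois

variable {F k : Type*} [Field F] [Field k] [Algebra F k]

lemma exists_restrict {N L : Type*} [Field N] [Field L] [Algebra F N] [Algebra F L] [Normal F N]
    (φ : N →ₐ[F] L) (τ : L ≃ₐ[F] L) : ∃ σ : N ≃ₐ[F] N, ∀ x, φ (σ x) = τ (φ x) := by
  let _ := φ.toRingHom.toAlgebra
  have : IsScalarTower F N L := IsScalarTower.of_algebraMap_eq fun x => (φ.commutes x).symm
  exact ⟨τ.restrictNormal N, fun x => τ.restrictNormal_commutes N x⟩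

/-- Conjugate roots over the larger field `k` are moved to each other by the Galois group of `R`
over `F`, through the restriction of an automorphism over `k`. -/
lemma exists_gal_of_factor (R : F[X]) (φ : R.SplittingField →ₐ[F] AlgebraicClosure k)
    (f : k[X]) (hfm : f.Monic) (hf : Irreducible f) (x y : R.SplittingField)
    (hx : aeval (φ x) f = 0) (hy : aeval (φ y) f = 0) :
    ∃ (σ : R.Gal) (τ : AlgebraicClosure k ≃ₐ[k] AlgebraicClosure k),
      (∀ z, φ (σ z) = τ (φ z)) ∧ σ x = y := by
  have hmin : f = minpoly k (φ x) := minpoly.eq_of_irreducible_of_monic hf hx hfm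
  obtain ⟨τ, hτ⟩ := minpoly.exists_algEquiv_of_root' (K := k) (x := φ y) (y := φ x)
    (Algebra.IsAlgebraic.isAlgebraic _) (by rw [← hmin, hy])
  obtain ⟨σ, hσ⟩ := exists_restrict φ (τ.restrictScalars F)
  refine ⟨σ, τ, hσ, φ.toRingHom.injective ?_⟩
  exact (hσ x).trans hτ

lemma root_of_mem {R : F[X]} (hR : R ≠ 0) (φ : R.SplittingField →ₐ[F] AlgebraicClosure k)
    (z : AlgebraicClosure k) (hz : aeval z (R.map (algebraMap F k)) = 0) :
    ∃ x ∈ R.rootSet R.SplittingField, φ x = z := by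
  have h1 := (SplittingField.splits R).image_rootSet φ
  have h2 : z ∈ R.rootSet (AlgebraicClosure k) := by
    rw [mem_rootSet]
    exact ⟨hR, by rwa [aeval_map_algebraMap] at hz⟩
  rw [← h1] at h2
  exact h2

lemma aeval_root {R : F[X]} (φ : R.SplittingField →ₐ[F] AlgebraicClosure k)
    {x : R.SplittingField} (hx : x ∈ R.rootSet R.SplittingField) :
    aeval (φ x) (R.map (algebraMap F k)) = 0 := by
  rw [aeval_map_algebraMap, aeval_algHom_apply, (mem_rootSet.mp hx).2, map_zero]

lemma eq_algebraMap_of_linear {L : Type*} [Field L] [Algebra k L] {g : k[X]} (hgm : g.Monic)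
    (hg : g.natDegree = 1) (z : L) : aeval z g = 0 ↔ z = algebraMap k L (-g.coeff 0) := by
  rw [hgm.eq_X_add_C hg]
  simp [eq_neg_iff_add_eq_zero]

/-- A factorization over `k` into an irreducible and a linear factor gives a point stabilizer which is
transitive on the other roots. -/
lemma exists_stabilizer (R : F[X]) (hR : R ≠ 0) (c : k) (f g : k[X]) (hfm : f.Monic)
    (hf : Irreducible f) (hgm : g.Monic) (hg : g.natDegree = 1)
    (h : R.map (algebraMap F k) = C c * (f * g)) :
    ∃ x₀ ∈ R.rootSet R.SplittingField, ∀ x ∈ R.rootSet R.SplittingField,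
      ∀ y ∈ R.rootSet R.SplittingField, x ≠ x₀ → y ≠ x₀ → ∃ σ : R.Gal, σ x₀ = x₀ ∧ σ x = y := by
  let φ : R.SplittingField →ₐ[F] AlgebraicClosure k := IsAlgClosed.lift
  have hc : c ≠ 0 := by
    rintro rfl
    rw [C_0, zero_mul, Polynomial.map_eq_zero] at h
    exact hR h
  obtain ⟨x₀, hx₀, hφ⟩ := root_of_mem hR φ (algebraMap k _ (-g.coeff 0)) (by
    rw [h, map_mul, map_mul, (eq_algebraMap_of_linear hgm hg _).mpr rfl, mul_zero, mul_zero])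
  have key : ∀ x ∈ R.rootSet R.SplittingField, x ≠ x₀ → aeval (φ x) f = 0 := by
    intro x hx hne
    have h1 := aeval_root φ hx
    rw [h, map_mul, map_mul, aeval_C, mul_eq_zero, mul_eq_zero] at h1
    rcases h1 with h1 | h1 | h1
    · exact absurd ((map_eq_zero _).mp h1) hc
    · exact h1
    · rw [eq_algebraMap_of_linear hgm hg, ← hφ] at h1
      exact absurd (φ.toRingHom.injective h1) hne
  refine ⟨x₀, hx₀, fun x hx y hy hxne hyne => ?_⟩
  obtain ⟨σ, τ, hσ, hxy⟩ := exists_gal_of_factor R φ f hfm hf x y (key x hx hxne) (key y hy hyne)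
  refine ⟨σ, φ.toRingHom.injective ?_, hxy⟩
  change φ _ = φ _
  rw [hσ, hφ, AlgEquiv.commutes]

/-- A quadratic factor over `k`, all other factors being linear, gives a transposition. -/
lemma exists_transposition [CharZero k] (R : F[X]) (hR : R ≠ 0) (c : k) (f : k[X])
    (Q : Multiset k[X]) (hfm : f.Monic) (hf : Irreducible f) (hf2 : f.natDegree = 2)
    (hQ : ∀ g ∈ Q, g.Monic ∧ g.natDegree = 1)
    (h : R.map (algebraMap F k) = C c * (f * Q.prod)) :
    ∃ a ∈ R.rootSet R.SplittingField, ∃ b ∈ R.rootSet R.SplittingField, a ≠ b ∧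
      ∃ σ : R.Gal, σ a = b ∧ σ b = a ∧
        ∀ x ∈ R.rootSet R.SplittingField, x ≠ a → x ≠ b → σ x = x := by
  let φ : R.SplittingField →ₐ[F] AlgebraicClosure k := IsAlgClosed.lift
  have hc : c ≠ 0 := by
    rintro rfl
    rw [C_0, zero_mul, Polynomial.map_eq_zero] at h
    exact hR h
  have hcard : (f.rootSet (AlgebraicClosure k)).ncard = 2 := by
    rw [← hf2, ← card_rootSet_eq_natDegree (K := AlgebraicClosure k) hf.separable
      (IsAlgClosed.splits _), Set.ncard_eq_toFinset_card', Set.toFinset_card]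
  obtain ⟨u, v, huv, hroots⟩ := Set.ncard_eq_two.mp hcard
  have hmem : ∀ z, aeval z f = 0 ↔ z = u ∨ z = v := by
    intro z
    have h1 : z ∈ f.rootSet (AlgebraicClosure k) ↔ z = u ∨ z = v := by
      rw [hroots]; simp
    rw [← h1, mem_rootSet]
    simp [hf.ne_zero]
  have hfR : ∀ z : AlgebraicClosure k, aeval z f = 0 → aeval z (R.map (algebraMap F k)) = 0 := by
    intro z hz
    rw [h, map_mul, map_mul, hz, zero_mul, mul_zero]
  have hu := (hmem u).mpr (Or.inl rfl)
  have hv := (hmem v).mpr (Or.inr rfl)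
  obtain ⟨a, ha, hau⟩ := root_of_mem hR φ u (hfR u hu)
  obtain ⟨b, hb, hbv⟩ := root_of_mem hR φ v (hfR v hv)
  obtain ⟨σ, τ, hσ, hab⟩ := exists_gal_of_factor R φ f hfm hf a b (by rwa [hau]) (by rwa [hbv])
  have hτu : τ u = v := by rw [← hau, ← hσ, hab, hbv]
  have hτv : τ v = u := by
    have h1 : aeval (τ v) f = 0 := by
      rw [aeval_algHom_apply, hv, map_zero]
    rcases (hmem _).mp h1 with h2 | h2
    · exact h2
    · exact absurd (τ.injective (hτu.trans h2.symm)) huv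
  refine ⟨a, ha, b, hb, fun hab' => huv (by rw [← hau, ← hbv, hab']), σ, hab,
    φ.toRingHom.injective ?_, fun x hx hxa hxb => φ.toRingHom.injective ?_⟩
  · change φ _ = φ _
    rw [hσ, hbv, hτv, hau]
  · change φ _ = φ _
    rw [hσ]
    have h1 := aeval_root φ hx
    rw [h, map_mul, map_mul, aeval_C, mul_eq_zero, mul_eq_zero] at h1
    rcases h1 with h1 | h1 | h1
    · exact absurd ((map_eq_zero _).mp h1) hc
    · rcases (hmem _).mp h1 with h2 | h2
      · exact absurd (φ.toRingHom.injective (h2.trans hau.symm)) hxa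
      · exact absurd (φ.toRingHom.injective (h2.trans hbv.symm)) hxb
    · rw [map_multiset_prod, Multiset.prod_eq_zero_iff, Multiset.mem_map] at h1
      obtain ⟨g, hg, hgx⟩ := h1
      rw [eq_algebraMap_of_linear (hQ g hg).1 (hQ g hg).2] at hgx
      rw [hgx, AlgEquiv.commutes]

/-- The Galois group of `R` has order `n!` if it satisfies the criterion of `perm_eq_top`. -/
lemma card_gal_of_transposition (R : F[X]) (hR : Irreducible R) (hsep : R.Separable)
    (x₀ : R.SplittingField) (hx₀ : x₀ ∈ R.rootSet R.SplittingField)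
    (h2 : ∀ x ∈ R.rootSet R.SplittingField,
      ∀ y ∈ R.rootSet R.SplittingField, x ≠ x₀ → y ≠ x₀ → ∃ σ : R.Gal, σ x₀ = x₀ ∧ σ x = y)
    (hswap : ∃ a ∈ R.rootSet R.SplittingField, ∃ b ∈ R.rootSet R.SplittingField, a ≠ b ∧
      ∃ σ : R.Gal, σ a = b ∧ σ b = a ∧
        ∀ x ∈ R.rootSet R.SplittingField, x ≠ a → x ≠ b → σ x = x) :
    Nat.card R.Gal = R.natDegree.factorial := by
  classical
  let α := R.rootSet R.SplittingField
  let Θ : R.Gal →* Equiv.Perm α := MulAction.toPermHom R.Gal α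
  have hΘ : ∀ (σ : R.Gal) (x : α), ((Θ σ x : α) : R.SplittingField) = σ x := fun _ _ => rfl
  have hinj : Function.Injective Θ := by
    intro σ σ' h
    refine Gal.ext R fun x hx => ?_
    rw [← hΘ σ ⟨x, hx⟩, ← hΘ σ' ⟨x, hx⟩, h]
  obtain ⟨a, ha, b, hb, hab, s, hsa, hsb, hs⟩ := hswap
  have htop : Θ.range = ⊤ := by
    refine perm_eq_top Θ.range ?_ ⟨x₀, hx₀⟩ ?_ ⟨a, ha⟩ ⟨b, hb⟩ (by simpa using hab) ?_
    · intro x y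
      have hx := (mem_rootSet.mp x.2).2
      have hy := (mem_rootSet.mp y.2).2
      have hmin := minpoly.eq_of_irreducible hR hx
      obtain ⟨σ, hσ⟩ := minpoly.exists_algEquiv_of_root' (K := F) (x := (y : R.SplittingField))
        (y := (x : R.SplittingField)) (Algebra.IsAlgebraic.isAlgebraic _) (by
          rw [← hmin, map_mul, hy, zero_mul])
      exact ⟨Θ σ, ⟨σ, rfl⟩, Subtype.ext hσ⟩
    · intro x y hx hy
      obtain ⟨σ, h0, hσ⟩ := h2 x x.2 y y.2 (fun h => hx (Subtype.ext h)) (fun h => hy (Subtype.ext h))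
      exact ⟨Θ σ, ⟨σ, rfl⟩, Subtype.ext h0, Subtype.ext hσ⟩
    · refine ⟨s, ?_⟩
      ext x
      rw [hΘ, Equiv.swap_apply_def]
      split_ifs with h h'
      · rw [h]; exact hsa
      · rw [h']; exact hsb
      · exact hs x x.2 (fun h1 => h (Subtype.ext h1)) (fun h1 => h' (Subtype.ext h1))
  have hbij : Function.Bijective Θ := ⟨hinj, MonoidHom.range_eq_top.mp htop⟩
  rw [Nat.card_eq_of_bijective Θ hbij, Nat.card_perm, Nat.card_eq_fintype_card,
    card_rootSet_eq_natDegree hsep (SplittingField.splits R)]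

end galois

end HG

/-! ### Global Galois group and combination of the local conditions -/

namespace HG

/-- Local factorization types `(n)`, `(n - 1, 1)` and `(2, 1, …, 1)` at three primes force the
Galois group to be the full symmetric group. -/
theorem gal_of_types {n : ℕ} (hn : 2 ≤ n) (R : ℚ[X]) (hdeg : R.natDegree = n)
    (q₁ q₂ q₃ : ℕ) [Fact q₁.Prime] [Fact q₂.Prime] [Fact q₃.Prime]
    (h₁ : HasType q₁ R {n}) (h₂ : HasType q₂ R ((n - 1) ::ₘ {1}))
    (h₃ : HasType q₃ R (2 ::ₘ Multiset.replicate (n - 2) 1)) :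
    Irreducible R ∧ Nat.card R.Gal = n.factorial := by
  classical
  have hR0 : R ≠ 0 := by
    rintro rfl
    rw [natDegree_zero] at hdeg
    omega
  have hlc : ∀ (q : ℕ) [Fact q.Prime], (R.map (algebraMap ℚ ℚ_[q])).leadingCoeff ≠ 0 := by
    intro q _
    rw [Ne, leadingCoeff_eq_zero, Polynomial.map_eq_zero]
    exact hR0
  have hirr : Irreducible R := by
    obtain ⟨Q, hQ, hQd, hQp⟩ := h₁
    obtain ⟨f, rfl, -⟩ := Multiset.map_eq_singleton.mp hQd
    refine IsPrimitive.irreducible_of_irreducible_map_of_injective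
      (algebraMap ℚ ℚ_[q₁]).injective ((isPrimitive_iff_ne_zero R).mpr hR0) ?_
    rw [hQ, Multiset.prod_singleton,
      irreducible_isUnit_mul (isUnit_C.mpr (isUnit_iff_ne_zero.mpr (hlc q₁)))]
    exact (hQp f (Multiset.mem_singleton_self f)).2.1
  refine ⟨hirr, ?_⟩
  obtain ⟨x₀, hx₀, hstab⟩ : ∃ x₀ ∈ R.rootSet R.SplittingField, ∀ x ∈ R.rootSet R.SplittingField,
      ∀ y ∈ R.rootSet R.SplittingField, x ≠ x₀ → y ≠ x₀ →
        ∃ σ : R.Gal, σ x₀ = x₀ ∧ σ x = y := by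
    obtain ⟨Q, hQ, hQd, hQp⟩ := h₂
    obtain ⟨f, hf, -, hQ'⟩ := (Multiset.map_eq_cons _ _ _ _).mpr hQd
    obtain ⟨g, hg, hg1⟩ := Multiset.map_eq_singleton.mp hQ'
    have hgQ : g ∈ Q := Multiset.mem_of_mem_erase (a := g) (b := f) (by rw [hg]; simp)
    rw [← Multiset.cons_erase hf, hg, Multiset.prod_cons, Multiset.prod_singleton] at hQ
    exact exists_stabilizer R hR0 _ f g (hQp f hf).1 (hQp f hf).2.1 (hQp g hgQ).1 hg1 hQ
  have hswap : ∃ a ∈ R.rootSet R.SplittingField, ∃ b ∈ R.rootSet R.SplittingField, a ≠ b ∧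
      ∃ σ : R.Gal, σ a = b ∧ σ b = a ∧
        ∀ x ∈ R.rootSet R.SplittingField, x ≠ a → x ≠ b → σ x = x := by
    obtain ⟨Q, hQ, hQd, hQp⟩ := h₃
    obtain ⟨f, hf, hf2, hQ'⟩ := (Multiset.map_eq_cons _ _ _ _).mpr hQd
    rw [← Multiset.cons_erase hf, Multiset.prod_cons] at hQ
    refine exists_transposition R hR0 _ f (Q.erase f) (hQp f hf).1 (hQp f hf).2.1 hf2 ?_ hQ
    intro g hg
    refine ⟨(hQp g (Multiset.mem_of_mem_erase hg)).1, ?_⟩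
    have := Multiset.mem_map_of_mem natDegree hg
    rw [hQ'] at this
    exact Multiset.eq_of_mem_replicate this
  rw [card_gal_of_transposition R hirr hirr.separable x₀ hx₀ hstab hswap, hdeg]

end HG

theorem stmt_13 (n : ℕ) (hn : 2 ≤ n)
    (P : Polynomial (Polynomial ℚ)) (hdeg : P.natDegree = n)
    (hGal : Nat.card (geomPoly ℚ P).Gal = n.factorial) :
    ∃ m₀ β : ℕ, 0 < m₀ ∧ 0 < β ∧
      ∀ S : Finset ℕ, (∀ p ∈ S, p.Prime ∧ m₀ < p) →
      ∀ d : ℕ → Multiset ℕ, (∀ p ∈ S, (∀ x ∈ d p, 0 < x) ∧ (d p).sum = n) →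
      ∃ b : ℕ, b ≤ β * ∏ p ∈ S, p ∧
        ∀ t₀ : ℤ, ((β * ∏ p ∈ S, p : ℕ) : ℤ) ∣ t₀ - (b : ℤ) →
          ((P.map (Polynomial.evalRingHom (t₀ : ℚ))).natDegree = n ∧
            Irreducible (P.map (Polynomial.evalRingHom (t₀ : ℚ))) ∧
            Nat.card (P.map (Polynomial.evalRingHom (t₀ : ℚ))).Gal = n.factorial) ∧
          ∀ (p : ℕ), p ∈ S → ∀ [Fact p.Prime],
            ∃ Q : Multiset (Polynomial ℚ_[p]),
              ((P.map (Polynomial.evalRingHom (t₀ : ℚ))).map (algebraMap ℚ ℚ_[p]) =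
                C ((P.map (Polynomial.evalRingHom (t₀ : ℚ))).map
                    (algebraMap ℚ ℚ_[p])).leadingCoeff * Q.prod) ∧
              Q.map Polynomial.natDegree = d p ∧
              ∀ q ∈ Q, q.Monic ∧ Irreducible q ∧
                ∃ x : UnramifiedExt p q.natDegree, Polynomial.aeval x q = 0 := by
  classical
  obtain ⟨m, hm⟩ := HG.exists_residue hn P hdeg hGal
  -- Three auxiliary primes carry the types `(n)`, `(n - 1, 1)` and `(2, 1, …, 1)`; taking `m₀ = q₃`
  -- keeps them out of `S`.
  obtain ⟨q₁, hq₁, hp₁⟩ := Nat.exists_infinite_primes (m + 1)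
  obtain ⟨q₂, hq₂, hp₂⟩ := Nat.exists_infinite_primes (q₁ + 1)
  obtain ⟨q₃, hq₃, hp₃⟩ := Nat.exists_infinite_primes (q₂ + 1)
  have hF₁ : Fact q₁.Prime := ⟨hp₁⟩
  have hF₂ : Fact q₂.Prime := ⟨hp₂⟩
  have hF₃ : Fact q₃.Prime := ⟨hp₃⟩
  refine ⟨q₃, q₁ * q₂ * q₃, hp₃.pos, Nat.mul_pos (Nat.mul_pos hp₁.pos hp₂.pos) hp₃.pos, ?_⟩
  intro S hS d hd
  let T : Finset ℕ := insert q₁ (insert q₂ (insert q₃ S))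
  let D : ℕ → Multiset ℕ := fun p => if p = q₁ then {n} else if p = q₂ then (n - 1) ::ₘ {1} else
    if p = q₃ then 2 ::ₘ Multiset.replicate (n - 2) 1 else d p
  have hD₁ : D q₁ = {n} := if_pos rfl
  have hD₂ : D q₂ = (n - 1) ::ₘ {1} := by
    simp only [D]
    rw [if_neg (by omega), if_pos trivial]
  have hD₃ : D q₃ = 2 ::ₘ Multiset.replicate (n - 2) 1 := by
    simp only [D]
    rw [if_neg (by omega), if_neg (by omega), if_pos trivial]
  have hDS : ∀ p ∈ S, D p = d p := by
    intro p hp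
    have := (hS p hp).2
    simp only [D]
    rw [if_neg (by omega), if_neg (by omega), if_neg (by omega)]
  have hT : ∀ p ∈ T, p.Prime ∧ m < p ∧ (∀ x ∈ D p, 0 < x) ∧ (D p).sum = n := by
    intro p hp
    simp only [T, Finset.mem_insert] at hp
    rcases hp with rfl | rfl | rfl | hp
    · rw [hD₁]
      exact ⟨hp₁, by omega, by simp; omega, by simp⟩
    · rw [hD₂]
      exact ⟨hp₂, by omega, by simp; omega, by simp; omega⟩
    · rw [hD₃]
      refine ⟨hp₃, by omega, fun x hx => ?_, by simp; omega⟩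
      rcases Multiset.mem_cons.mp hx with rfl | hx
      · omega
      · rw [Multiset.eq_of_mem_replicate hx]; omega
    · rw [hDS p hp]
      have := hS p hp
      exact ⟨this.1, by omega, hd p hp⟩
  have hr : ∀ p, ∃ t : ℕ, p ∈ T → ∀ t₀ : ℤ, (p : ℤ) ∣ t₀ - t →
      (P.map (evalRingHom (t₀ : ℚ))).natDegree = n ∧
        ∀ [Fact p.Prime], HG.HasType p (P.map (evalRingHom (t₀ : ℚ))) (D p) := by
    intro p
    by_cases hp : p ∈ T
    · obtain ⟨hpp, hmp, hpos, hsum⟩ := hT p hp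
      have : Fact p.Prime := ⟨hpp⟩
      obtain ⟨t, ht⟩ := hm p hmp (D p) hpos hsum
      exact ⟨t, fun _ t₀ h => ⟨(ht t₀ h).1, (ht t₀ h).2⟩⟩
    · exact ⟨0, fun h => absurd h hp⟩
  choose r hr using hr
  obtain ⟨k, hk⟩ := Nat.chineseRemainderOfFinset r id T (fun p hp => (hT p hp).1.ne_zero)
    (fun p hp p' hp' hne => (Nat.coprime_primes (hT p hp).1 (hT p' hp').1).mpr hne)
  set M := q₁ * q₂ * q₃ * ∏ p ∈ S, p with hM
  have hMpos : 0 < M := by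
    refine Nat.mul_pos (Nat.mul_pos (Nat.mul_pos hp₁.pos hp₂.pos) hp₃.pos) ?_
    exact Finset.prod_pos fun p hp => (hS p hp).1.pos
  have hTM : ∀ p ∈ T, p ∣ M := by
    intro p hp
    simp only [T, Finset.mem_insert] at hp
    rcases hp with rfl | rfl | rfl | hp
    · exact ⟨q₂ * q₃ * ∏ p ∈ S, p, by rw [hM]; ring⟩
    · exact ⟨q₁ * q₃ * ∏ p ∈ S, p, by rw [hM]; ring⟩
    · exact ⟨q₁ * q₂ * ∏ p ∈ S, p, by rw [hM]; ring⟩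
    · exact (Finset.dvd_prod_of_mem _ hp).mul_left _
  refine ⟨k % M, (Nat.mod_lt _ hMpos).le, fun t₀ ht₀ => ?_⟩
  have hloc : ∀ p ∈ T, (P.map (evalRingHom (t₀ : ℚ))).natDegree = n ∧
      ∀ [Fact p.Prime], HG.HasType p (P.map (evalRingHom (t₀ : ℚ))) (D p) := by
    intro p hp
    refine hr p hp t₀ ?_
    have h1 : (p : ℤ) ∣ t₀ - ((k % M : ℕ) : ℤ) :=
      (Int.natCast_dvd_natCast.mpr (hTM p hp)).trans ht₀
    have h2 : k % M ≡ r p [MOD p] := ((Nat.mod_modEq k M).of_dvd (hTM p hp)).trans (hk p hp)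
    have h3 : (p : ℤ) ∣ ((k % M : ℕ) : ℤ) - r p := (Nat.modEq_iff_dvd.mp h2.symm)
    have := h1.add h3
    rwa [sub_add_sub_cancel] at this
  have hT₁ : q₁ ∈ T := by simp [T]
  have hT₂ : q₂ ∈ T := by simp [T]
  have hT₃ : q₃ ∈ T := by simp [T]
  have hdegR := (hloc q₁ hT₁).1
  have hgal := HG.gal_of_types hn _ hdegR q₁ q₂ q₃ (hD₁ ▸ (hloc q₁ hT₁).2)
    (hD₂ ▸ (hloc q₂ hT₂).2) (hD₃ ▸ (hloc q₃ hT₃).2)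
  refine ⟨⟨hdegR, hgal⟩, fun p hp _ => ?_⟩
  have := (hloc p (by simp [T, hp])).2
  rw [hDS p hp] at this
  exact this
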